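/- arXiv:2310.09227 — 3 statements merged into one kernel-verified Lean document; each statement's English description precedes it below -/
import Mathlib

section
/- Let k ≥ 0 and n ≥ 3k − 1 be integers, and let b_0, b_1, …, b_k be integers. Let B = Σ_{ℓ=0}^{k} b_ℓ · A_{n,k,k,ℓ}, a square integer matrix indexed by the k-element subsets of {1,…,n}. For 0 ≤ s ≤ k let M_s(B) be the (k−s+1) × (k−s+1) integer matrix with rows and columns indexed by s ≤ i, j ≤ k and entries M_s(B)(i,j) = C(j−s, i−s) · Σ_{ℓ=0}^{k} b_ℓ · f_i(j; n, k, k, ℓ). Then there is an isomorphism of abelian groups S(B) ≅ ⊕_{s=0}^{k} S(M_s(B))^{m_s}, where m_s = C(n,s) − 2C(n,s−1) + C(n,s−2). -/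
open scoped Classical

/-- Integer binomial coefficient with the convention `C x y = 0` unless `0 ≤ y ≤ x`. -/
noncomputable def C (x y : ℤ) : ℤ :=
  if 0 ≤ y ∧ y ≤ x then (x.toNat).choose y.toNat else 0

/-- The `k`-element subsets of `{1,…,n}`. -/
def ksubsets (n k : ℕ) : Finset (Finset ℕ) :=
  (Finset.Icc 1 n).powerset.filter fun A => A.card = k

/-- The subset intersection matrix `A_{n,kr,kc,ℓ}`. -/
noncomputable def interMat (n kr kc ℓ : ℕ) :
    Matrix ↥(ksubsets n kr) ↥(ksubsets n kc) ℤ :=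
  Matrix.of fun A B => if ((A : Finset ℕ) ∩ (B : Finset ℕ)).card = ℓ then 1 else 0

/-- `f_i(j; n, kr, kc, ℓ)`. -/
noncomputable def f (n kr kc ℓ i j : ℕ) : ℤ :=
  ∑ v ∈ Finset.range (i + 1),
    (-1 : ℤ) ^ (i + v) * (i.choose v) *
      (C ((kr : ℤ) - v) ((ℓ : ℤ) - v) * C ((n : ℤ) - kr - j + v) ((kc : ℤ) - ℓ - j + v))

/-- The Smith group of an integer matrix. -/
abbrev SmithGroup {ρ γ : Type*} (M : Matrix ρ γ ℤ) : Type _ :=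
  (γ → ℤ) ⧸ Submodule.span ℤ (Set.range fun r : ρ => M r)

/-- The matrix `M_s(B)` with rows and columns indexed by `s ≤ i, j ≤ k`
(`i = s + t`, `j = s + u`): `M_s(B)(i,j) = C(j−s,i−s)·Σ_ℓ b_ℓ f_i(j;ℓ)`. -/
noncomputable def MsB (n k : ℕ) (b : ℕ → ℤ) (s : ℕ) :
    Matrix (Fin (k - s + 1)) (Fin (k - s + 1)) ℤ :=
  Matrix.of fun t u =>
    ((u : ℕ).choose (t : ℕ) : ℤ) *
      ∑ ℓ ∈ Finset.range (k + 1), b ℓ * f n k k ℓ (s + t) (s + u)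

/-- `m_s = C(n,s) − 2C(n,s−1) + C(n,s−2)`. -/
noncomputable def msMult (n s : ℕ) : ℤ :=
  C n s - 2 * C n ((s : ℤ) - 1) + C n ((s : ℤ) - 2)

/-! ### Ballot sets -/

/-- Ballot condition. -/
def Bal (J : Finset ℕ) : Prop := ∀ m, 2 * (J.filter (· ≤ m)).card ≤ m

/-- ballot `k`-subsets of `{1,…,n}`. -/
noncomputable def PB (n k : ℕ) : Finset (Finset ℕ) := (ksubsets n k).filter Bal

lemma mem_ksubsets {n k : ℕ} {A : Finset ℕ} :
    A ∈ ksubsets n k ↔ A ⊆ Finset.Icc 1 n ∧ A.card = k := by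
  simp [ksubsets]

lemma mem_PB {n k : ℕ} {A : Finset ℕ} :
    A ∈ PB n k ↔ A ⊆ Finset.Icc 1 n ∧ A.card = k ∧ Bal A := by
  simp [PB, mem_ksubsets, and_assoc]

lemma Bal.mono {I J : Finset ℕ} (h : Bal J) (hI : I ⊆ J) : Bal I := fun m =>
  le_trans (Nat.mul_le_mul_left _ (Finset.card_le_card (Finset.filter_subset_filter _ hI))) (h m)

lemma PB_sub {n j : ℕ} {I J : Finset ℕ} (h : J ∈ PB n j) (hI : I ⊆ J) : I ∈ PB n I.card := by
  rw [mem_PB] at *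
  exact ⟨hI.trans h.1, rfl, h.2.2.mono hI⟩

lemma PB_two_mul {n k : ℕ} {J : Finset ℕ} (h : J ∈ PB n k) : 2 * k ≤ n := by
  rw [mem_PB] at h
  have := h.2.2 n
  rwa [Finset.filter_true_of_mem, h.2.1] at this
  intro x hx
  exact (Finset.mem_Icc.1 (h.1 hx)).2

lemma Icc_top_not_mem {n : ℕ} {J : Finset ℕ} (h : J ⊆ Finset.Icc 1 n) : n + 1 ∉ J := fun hx => by
  have := (Finset.mem_Icc.1 (h hx)).2
  omega

lemma PB_not_mem {n k : ℕ} {J : Finset ℕ} (h : J ∈ PB n k) : n + 1 ∉ J :=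
  Icc_top_not_mem (mem_PB.1 h).1

lemma sub_succ_of_sub {n : ℕ} {J : Finset ℕ} (h : J ⊆ Finset.Icc 1 n) :
    J ⊆ Finset.Icc 1 (n + 1) := h.trans (Finset.Icc_subset_Icc le_rfl (by omega))

lemma sub_of_sub_succ {n : ℕ} {J : Finset ℕ} (h : J ⊆ Finset.Icc 1 (n + 1)) (hn : n + 1 ∉ J) :
    J ⊆ Finset.Icc 1 n := by
  intro x hx
  have h1 := Finset.mem_Icc.1 (h hx)
  have : x ≠ n + 1 := fun e => hn (e ▸ hx)
  rw [Finset.mem_Icc]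
  omega

lemma PB_mono {n k : ℕ} {J : Finset ℕ} (h : J ∈ PB n k) : J ∈ PB (n + 1) k := by
  rw [mem_PB] at *
  exact ⟨sub_succ_of_sub h.1, h.2⟩

lemma PB_of_succ {n k : ℕ} {J : Finset ℕ} (h : J ∈ PB (n + 1) k) (hn : n + 1 ∉ J) :
    J ∈ PB n k := by
  rw [mem_PB] at *
  exact ⟨sub_of_sub_succ h.1 hn, h.2⟩

lemma insert_sub {n : ℕ} {J : Finset ℕ} (h : J ⊆ Finset.Icc 1 n) :
    insert (n + 1) J ⊆ Finset.Icc 1 (n + 1) := by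
  intro x hx
  rw [Finset.mem_insert] at hx
  rcases hx with rfl | hx
  · simp
  · exact sub_succ_of_sub h hx

lemma PB_insert {n k : ℕ} {J : Finset ℕ} (h : J ∈ PB n k) (hk : 2 * (k + 1) ≤ n + 1) :
    insert (n + 1) J ∈ PB (n + 1) (k + 1) := by
  have hn := PB_not_mem h
  rw [mem_PB] at *
  refine ⟨insert_sub h.1, by rw [Finset.card_insert_of_notMem hn, h.2.1], fun m => ?_⟩
  rw [Finset.filter_insert]
  split_ifs with hm
  · have h1 := Finset.card_insert_le (n + 1) (J.filter (· ≤ m))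
    have h2 : (J.filter (· ≤ m)).card ≤ J.card := Finset.card_filter_le _ _
    rw [h.2.1] at h2
    omega
  · exact h.2.2 m

lemma PB_erase {n k : ℕ} {J : Finset ℕ} (h : J ∈ PB (n + 1) (k + 1)) (hn : n + 1 ∈ J) :
    J.erase (n + 1) ∈ PB n k := by
  have h1 := PB_sub h (Finset.erase_subset (n + 1) J)
  rw [Finset.card_erase_of_mem hn, (mem_PB.1 h).2.1] at h1
  exact PB_of_succ h1 (Finset.notMem_erase _ _)

lemma PB_zero (n : ℕ) : PB n 0 = {∅} := by
  ext J
  rw [mem_PB, Finset.mem_singleton, Finset.card_eq_zero]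
  constructor
  · exact fun h => h.2.1
  · rintro rfl
    exact ⟨by simp, rfl, fun m => by simp⟩

/-! ### The zeta transform -/

abbrev FF := Finset ℕ → ℤ

/-- zeta transform -/
def zet : FF →ₗ[ℤ] FF where
  toFun z J := ∑ I ∈ J.powerset, z I
  map_add' x y := by ext J; simp [Finset.sum_add_distrib]
  map_smul' c x := by ext J; simp [Finset.mul_sum]

lemma zet_apply (z : FF) (J : Finset ℕ) : zet z J = ∑ I ∈ J.powerset, z I := rfl

lemma zet_smul (c : ℤ) (z : FF) (J : Finset ℕ) : zet (c • z) J = c * zet z J := by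
  rw [map_smul, Pi.smul_apply, smul_eq_mul]

/-- multiplication by the variable `t_N`. -/
def tm (N : ℕ) : FF →ₗ[ℤ] FF where
  toFun z J := if N ∈ J then z (J.erase N) else 0
  map_add' x y := by ext J; by_cases h : N ∈ J <;> simp [h]
  map_smul' c x := by ext J; by_cases h : N ∈ J <;> simp [h]

lemma tm_apply (N : ℕ) (z : FF) (J : Finset ℕ) :
    tm N z J = if N ∈ J then z (J.erase N) else 0 := rfl

/-- functions supported on ballot sets -/
def RB (n k : ℕ) : Submodule ℤ FF where
  carrier := {z | ∀ J, J ∉ PB n k → z J = 0}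
  add_mem' ha hb J hJ := by simp [ha J hJ, hb J hJ]
  zero_mem' J _ := rfl
  smul_mem' c x hx J hJ := by simp [hx J hJ]

lemma mem_RB {n k : ℕ} {z : FF} : z ∈ RB n k ↔ ∀ J, J ∉ PB n k → z J = 0 := Iff.rfl

lemma RB_top {n k : ℕ} {z : FF} (hz : z ∈ RB n k) {J : Finset ℕ} (hJ : n + 1 ∈ J) : z J = 0 :=
  hz J fun h => PB_not_mem h hJ

lemma zet_insert {n k : ℕ} {z : FF} (hz : z ∈ RB n k) {J : Finset ℕ} (hJ : n + 1 ∉ J) :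
    zet z (insert (n + 1) J) = zet z J := by
  rw [zet_apply, zet_apply, Finset.sum_powerset_insert hJ, add_eq_left]
  exact Finset.sum_eq_zero fun I _ => RB_top hz (Finset.mem_insert_self _ _)

lemma zet_tm_not {N : ℕ} (z : FF) {J : Finset ℕ} (hJ : N ∉ J) : zet (tm N z) J = 0 := by
  rw [zet_apply]
  refine Finset.sum_eq_zero fun I hI => ?_
  rw [tm_apply, if_neg fun h => hJ (Finset.mem_powerset.1 hI h)]

lemma zet_tm_insert {N : ℕ} (z : FF) {J : Finset ℕ} (hJ : N ∉ J) :
    zet (tm N z) (insert N J) = zet z J := by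
  rw [zet_apply, Finset.sum_powerset_insert hJ]
  have h0 := zet_tm_not z hJ
  rw [zet_apply] at h0
  rw [h0, zero_add, zet_apply]
  refine Finset.sum_congr rfl fun I hI => ?_
  have : N ∉ I := fun h => hJ (Finset.mem_powerset.1 hI h)
  rw [tm_apply, if_pos (Finset.mem_insert_self _ _), Finset.erase_insert this]

lemma RB_mono {n k : ℕ} : RB n k ≤ RB (n + 1) k := fun _ hz J hJ => hz J fun h => hJ (PB_mono h)

lemma RB_tm {n k : ℕ} (hk : 2 * (k + 1) ≤ n + 1) {z : FF} (hz : z ∈ RB n k) :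
    tm (n + 1) z ∈ RB (n + 1) (k + 1) := by
  intro J hJ
  rw [tm_apply]
  split_ifs with h
  · refine hz _ fun h' => hJ ?_
    have := PB_insert h' hk
    rwa [Finset.insert_erase h] at this
  · rfl

/-! ### Free generation -/

/-- saturated injectivity -/
def SInj (G : ℕ → Submodule ℤ FF) (n k E : ℕ) : Prop :=
  ∀ (m : ℤ) (a : ℕ → FF), (∀ s < E, a s ∈ G s) →
    (∀ J ∈ PB n k, m ∣ ∑ s ∈ Finset.range E, zet (a s) J) → ∀ s < E, ∃ a' ∈ G s, a s = m • a'

/-- spanning -/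
def SSpan (G : ℕ → Submodule ℤ FF) (n j : ℕ) : Prop :=
  ∀ z : FF, ∃ a : ℕ → FF, (∀ s < j + 1, a s ∈ G s) ∧
    ∀ J ∈ PB n j, ∑ s ∈ Finset.range (j + 1), zet (a s) J = z J

structure Good (G : ℕ → Submodule ℤ FF) (n : ℕ) : Prop where
  le : ∀ s, 3 * s ≤ n + 1 → G s ≤ RB n s
  span : ∀ j, 3 * j ≤ n + 1 → SSpan G n j
  inj : ∀ k E, E ≤ k → 2 * k + E ≤ n + 1 → SInj G n k E
  inj' : ∀ k, 3 * k ≤ n + 1 → SInj G n k (k + 1)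

/-- The next generators. -/
def nextG (G : ℕ → Submodule ℤ FF) (n : ℕ) : ℕ → Submodule ℤ FF
  | 0 => G 0
  | s + 1 => G (s + 1) ⊔ (G s).map (tm (n + 1))

lemma nextG_split {G : ℕ → Submodule ℤ FF} {n s : ℕ} {z : FF} (h : z ∈ nextG G n s) :
    ∃ x ∈ G s, ∃ y : FF, (∀ t, s = t + 1 → y ∈ G t) ∧ (s = 0 → y = 0) ∧
      z = x + tm (n + 1) y := by
  cases s with
  | zero => exact ⟨z, h, 0, fun t ht => by omega, fun _ => rfl, by simp⟩
  | succ s =>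
    obtain ⟨x, hx, y', hy', rfl⟩ := Submodule.mem_sup.1 h
    obtain ⟨y, hy, rfl⟩ := hy'
    refine ⟨x, hx, y, fun t ht => ?_, fun h => by omega, rfl⟩
    obtain rfl : s = t := by omega
    exact hy

lemma nextG_mem {G : ℕ → Submodule ℤ FF} {n s : ℕ} {x y : FF} (hx : x ∈ G s)
    (hy : ∀ t, s = t + 1 → y ∈ G t) (hy0 : s = 0 → y = 0) : x + tm (n + 1) y ∈ nextG G n s := by
  cases s with
  | zero => rw [hy0 rfl, map_zero, add_zero]; exact hx
  | succ s => exact Submodule.add_mem_sup hx ⟨y, hy s rfl, rfl⟩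

lemma nextG_choose {G : ℕ → Submodule ℤ FF} {n E : ℕ} {a : ℕ → FF}
    (ha : ∀ s < E, a s ∈ nextG G n s) :
    ∃ α β : ℕ → FF, (∀ s < E, α s ∈ G s) ∧ (∀ s, s + 1 < E → β (s + 1) ∈ G s) ∧ β 0 = 0 ∧
      ∀ s < E, a s = α s + tm (n + 1) (β s) := by
  have : ∀ s, ∃ x y : FF, s < E → x ∈ G s ∧ (∀ t, s = t + 1 → y ∈ G t) ∧ (s = 0 → y = 0) ∧
      a s = x + tm (n + 1) y := by
    intro s
    by_cases hs : s < E
    · obtain ⟨x, hx, y, h1, h2, h3⟩ := nextG_split (ha s hs)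
      exact ⟨x, y, fun _ => ⟨hx, h1, h2, h3⟩⟩
    · exact ⟨0, 0, fun h => absurd h hs⟩
  choose α β h using this
  refine ⟨α, fun s => if s = 0 then 0 else β s, fun s hs => (h s hs).1, fun s hs => ?_, by simp,
    fun s hs => ?_⟩
  · simpa using (h (s + 1) hs).2.1 s rfl
  · by_cases h0 : s = 0
    · have := h s hs
      simp only [h0, if_true]
      subst h0
      rw [this.2.2.2, this.2.2.1 rfl]
    · simp only [h0, if_false]
      exact (h s hs).2.2.2

/-- evaluations -/
lemma eval_not {n E : ℕ} {a α β : ℕ → FF}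
    (h : ∀ s < E, a s = α s + tm (n + 1) (β s)) {J : Finset ℕ} (hJ : n + 1 ∉ J) :
    ∑ s ∈ Finset.range E, zet (a s) J = ∑ s ∈ Finset.range E, zet (α s) J := by
  refine Finset.sum_congr rfl fun s hs => ?_
  rw [h s (Finset.mem_range.1 hs), map_add, Pi.add_apply, zet_tm_not _ hJ, add_zero]

lemma eval_insert {n E : ℕ} {a α β : ℕ → FF} (hα : ∀ s < E, α s ∈ RB n s) (hβ : β 0 = 0)
    (h : ∀ s < E + 1, a s = α s + tm (n + 1) (β s)) {J : Finset ℕ} (hJ : n + 1 ∉ J)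
    (hE : zet (α E) (insert (n + 1) J) = zet (α E) J) :
    ∑ s ∈ Finset.range (E + 1), zet (a s) (insert (n + 1) J) =
      ∑ s ∈ Finset.range E, zet (α s + β (s + 1)) J + zet (α E) J := by
  have : ∀ s ∈ Finset.range (E + 1), zet (a s) (insert (n + 1) J) = zet (α s) J + zet (β s) J := by
    intro s hs
    have hs := Finset.mem_range.1 hs
    rw [h s hs, map_add, Pi.add_apply, zet_tm_insert _ hJ]
    rcases Nat.lt_succ_iff_lt_or_eq.1 hs with h1 | rfl
    · rw [zet_insert (hα s h1) hJ]
    · rw [hE]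
  rw [Finset.sum_congr rfl this, Finset.sum_add_distrib, Finset.sum_range_succ,
    Finset.sum_range_succ' (fun s => zet (β s) J), hβ]
  simp only [map_add, Pi.add_apply, Finset.sum_add_distrib, map_zero, Pi.zero_apply]
  ring

lemma step_inj {G : ℕ → Submodule ℤ FF} {n : ℕ} (h : Good G n) {k E : ℕ} (hE : E ≤ k)
    (hk : 2 * k + E ≤ n + 2) : SInj (nextG G n) (n + 1) k E := by
  intro m a ha hJ
  obtain ⟨α, β, hα, hβ, hβ0, hab⟩ := nextG_choose ha
  cases E with
  | zero => intro s hs; omega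
  | succ E =>
  obtain ⟨k, rfl⟩ : ∃ k', k = k' + 1 := ⟨k - 1, by omega⟩
  have hαR : ∀ s < E + 1, α s ∈ RB n s := fun s hs => h.le s (by omega) (hα s hs)
  have h0 : ∀ J ∈ PB n (k + 1), m ∣ ∑ s ∈ Finset.range (E + 1), zet (α s) J := by
    intro J hJ'
    have := hJ J (PB_mono hJ')
    rwa [eval_not hab (PB_not_mem hJ')] at this
  have h1 : SInj G n k (E + 1) := by
    by_cases hEk : E + 1 ≤ k
    · exact h.inj k (E + 1) hEk (by omega)
    · obtain rfl : E = k := by omega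
      exact h.inj' E (by omega)
  have h2 := h1 m (fun s => if s < E then α s + β (s + 1) else α s) (by
    intro s hs
    split_ifs with hsE
    · exact add_mem (hα s hs) (hβ s (by omega))
    · exact hα s hs) (by
    intro J hJ'
    have h3 := hJ _ (PB_insert hJ' (by omega))
    rw [eval_insert (fun s hs => hαR s (by omega)) hβ0 hab (PB_not_mem hJ')
      (zet_insert (hαR E (by omega)) (PB_not_mem hJ'))] at h3
    rw [Finset.sum_range_succ]
    convert h3 using 2
    · refine Finset.sum_congr rfl fun s hs => ?_
      rw [if_pos (Finset.mem_range.1 hs)]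
    · rw [if_neg (lt_irrefl _)])
  obtain ⟨x, hx, hxE⟩ := h2 E (by omega)
  simp only [lt_irrefl, if_false] at hxE
  have h4 := h.inj (k + 1) E (by omega) (by omega) m α (fun s hs => hα s (by omega)) (by
    intro J hJ'
    have := h0 J hJ'
    rw [Finset.sum_range_succ, hxE] at this
    refine (dvd_add_left ?_).1 this
    rw [map_smul, Pi.smul_apply, smul_eq_mul]
    exact dvd_mul_right _ _)
  have hα' : ∀ s < E + 1, ∃ a' ∈ G s, α s = m • a' := by
    intro s hs
    rcases Nat.lt_succ_iff_lt_or_eq.1 hs with h5 | rfl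
    · exact h4 s h5
    · exact ⟨x, hx, hxE⟩
  intro s hs
  obtain ⟨x1, hx1, hx1E⟩ := hα' s hs
  cases s with
  | zero =>
    refine ⟨x1, hx1, ?_⟩
    rw [hab 0 hs, hβ0, hx1E]; simp
  | succ s =>
    obtain ⟨x2, hx2, hx2E⟩ := hα' s (by omega)
    obtain ⟨x3, hx3, hx3E⟩ := h2 s (by omega)
    simp only [show s < E by omega, if_true] at hx3E
    refine ⟨x1 + tm (n + 1) (x3 - x2), Submodule.add_mem_sup hx1 ⟨_, sub_mem hx3 hx2, rfl⟩, ?_⟩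
    rw [hab _ hs, hx1E, smul_add, ← map_smul, smul_sub, ← hx3E, ← hx2E]
    congr 2
    abel

lemma SInj_zero_succ {G G' : ℕ → Submodule ℤ FF} {n : ℕ} (hG : G' 0 = G 0) (h : SInj G n 0 1) :
    SInj G' (n + 1) 0 1 := by
  intro m a ha hJ s hs
  obtain rfl : s = 0 := by omega
  rw [hG]
  refine h m a (fun s hs => ?_) (fun J hJ' => hJ J (by rwa [PB_zero] at *)) 0 hs
  obtain rfl : s = 0 := by omega
  exact hG ▸ ha 0 hs

lemma step_inj' {G : ℕ → Submodule ℤ FF} {n : ℕ} (h : Good G n) {k : ℕ}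
    (hk : 3 * k ≤ n + 1) : SInj (nextG G n) (n + 1) k (k + 1) := by
  cases k with
  | zero => exact SInj_zero_succ (G := G) rfl (h.inj' 0 (by omega))
  | succ k =>
  intro m a ha hJ
  obtain ⟨α, β, hα, hβ, hβ0, hab⟩ := nextG_choose ha
  have hαR : ∀ s < k + 1 + 1, α s ∈ RB n s := fun s hs => h.le s (by omega) (hα s hs)
  have h0 := h.inj' (k + 1) hk m α hα (by
    intro J hJ'
    have := hJ J (PB_mono hJ')
    rwa [eval_not hab (PB_not_mem hJ')] at this)
  have hd : ∀ s < k + 1 + 1, ∀ J, m ∣ zet (α s) J := by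
    intro s hs J
    obtain ⟨x, _, hx⟩ := h0 s hs
    rw [hx, map_smul, Pi.smul_apply, smul_eq_mul]
    exact dvd_mul_right _ _
  have h1 := h.inj' k (by omega) m (fun s => β (s + 1)) (fun s hs => hβ s (by omega)) (by
    intro J hJ'
    have h3 := hJ _ (PB_insert hJ' (by omega))
    rw [eval_insert (fun s hs => hαR s (by omega)) hβ0 hab (PB_not_mem hJ')
      (zet_insert (hαR _ (by omega)) (PB_not_mem hJ'))] at h3
    simp only [map_add, Pi.add_apply, Finset.sum_add_distrib] at h3
    rw [dvd_add_left (hd _ (by omega) _), dvd_add_right] at h3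
    · exact h3
    · exact Finset.dvd_sum fun s hs => hd s (by have := Finset.mem_range.1 hs; omega) J)
  intro s hs
  obtain ⟨x1, hx1, hx1E⟩ := h0 s hs
  cases s with
  | zero =>
    refine ⟨x1, hx1, ?_⟩
    rw [hab 0 hs, hβ0, hx1E]; simp
  | succ s =>
    obtain ⟨x2, hx2, hx2E⟩ := h1 s (by omega)
    refine ⟨x1 + tm (n + 1) x2, Submodule.add_mem_sup hx1 ⟨_, hx2, rfl⟩, ?_⟩
    rw [hab _ hs, hx1E, smul_add, ← map_smul, ← hx2E]

lemma step_span {G : ℕ → Submodule ℤ FF} {n : ℕ} (h : Good G n) {j : ℕ}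
    (hj : 3 * j ≤ n + 1) : SSpan (nextG G n) (n + 1) j := by
  intro z
  cases j with
  | zero =>
    obtain ⟨a, ha, haz⟩ := h.span 0 (by omega) z
    refine ⟨a, fun s hs => ?_, fun J hJ => haz J (by rwa [PB_zero] at *)⟩
    obtain rfl : s = 0 := by omega
    exact ha 0 hs
  | succ j =>
    obtain ⟨α, hα, hαz⟩ := h.span (j + 1) hj z
    have hαR : ∀ s < j + 1 + 1, α s ∈ RB n s := fun s hs => h.le s (by omega) (hα s hs)
    obtain ⟨β, hβ, hβz⟩ := h.span j (by omega) (fun J => z (insert (n + 1) J) -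
      ∑ s ∈ Finset.range (j + 1 + 1), zet (α s) J)
    let β' : ℕ → FF := fun s => match s with
      | 0 => 0
      | s + 1 => β s
    have hab : ∀ s < j + 1 + 1, (fun s => α s + tm (n + 1) (β' s)) s =
      α s + tm (n + 1) (β' s) := fun s hs => rfl
    refine ⟨fun s => α s + tm (n + 1) (β' s), fun s hs => ?_, fun J hJ => ?_⟩
    · refine nextG_mem (hα s hs) ?_ ?_
      · rintro t rfl
        exact hβ t (by omega)
      · rintro rfl
        rfl
    · by_cases hn : n + 1 ∈ J
      · have hJ' := PB_erase hJ hn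
        have := eval_insert (fun s hs => hαR s (by omega)) rfl hab (PB_not_mem hJ')
          (zet_insert (hαR _ (by omega)) (PB_not_mem hJ'))
        rw [Finset.insert_erase hn] at this
        rw [this]
        have h3 := hβz _ hJ'
        rw [Finset.insert_erase hn] at h3
        simp only [map_add, Pi.add_apply, Finset.sum_add_distrib]
        rw [Finset.sum_range_succ (fun s => zet (α s) _)] at h3
        simp only [β']
        linarith
      · rw [eval_not hab hn, hαz J (PB_of_succ hJ hn)]

lemma step_le {G : ℕ → Submodule ℤ FF} {n : ℕ} (h : Good G n) {s : ℕ}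
    (hs : 3 * s ≤ n + 1) : nextG G n s ≤ RB (n + 1) s := by
  cases s with
  | zero => exact (h.le 0 hs).trans RB_mono
  | succ s =>
    refine sup_le ((h.le _ hs).trans RB_mono) ?_
    rintro _ ⟨y, hy, rfl⟩
    exact RB_tm (by omega) (h.le s (by omega) hy)

lemma exists_compl {W : Type*} [AddCommGroup W] [Module.Finite ℤ W] (H : Submodule ℤ W)
    (hs : ∀ m : ℤ, m ≠ 0 → ∀ w : W, m • w ∈ H → w ∈ H) : ∃ D : Submodule ℤ W, IsCompl H D := by
  have htf : Module.IsTorsionFree ℤ (W ⧸ H) := by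
    rw [Module.isTorsionFree_iff_smul_eq_zero]
    intro m x hx
    obtain ⟨w, rfl⟩ := H.mkQ_surjective x
    by_cases hm : m = 0
    · exact Or.inl hm
    · right
      rw [← map_smul] at hx
      rw [Submodule.mkQ_apply, Submodule.Quotient.mk_eq_zero] at *
      exact hs m hm w hx
  have : Module.Free ℤ (W ⧸ H) := Module.free_of_finite_type_torsion_free'
  obtain ⟨σ, hσ⟩ := Module.projective_lifting_property H.mkQ LinearMap.id H.mkQ_surjective
  have hσ' : ∀ x, H.mkQ (σ x) = x := fun x => LinearMap.congr_fun hσ x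
  refine ⟨LinearMap.range σ, ?_, ?_⟩
  · rw [Submodule.disjoint_def]
    rintro _ hx ⟨y, rfl⟩
    have h1 := hσ' y
    rw [Submodule.mkQ_apply, (Submodule.Quotient.mk_eq_zero H).2 hx] at h1
    rw [← h1, map_zero]
  · rw [codisjoint_iff, eq_top_iff]
    intro x _
    rw [Submodule.mem_sup]
    refine ⟨x - σ (H.mkQ x), ?_, _, ⟨H.mkQ x, rfl⟩, by abel⟩
    have := hσ' (H.mkQ x)
    rwa [← sub_eq_zero, ← map_sub, ← neg_sub, map_neg, neg_eq_zero, Submodule.mkQ_apply,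
      Submodule.Quotient.mk_eq_zero] at this

/-- restriction to a finite set of coordinates -/
def resB (S : Finset (Finset ℕ)) : FF →ₗ[ℤ] (S → ℤ) where
  toFun z J := z J
  map_add' _ _ := rfl
  map_smul' _ _ := rfl

lemma step_new {G : ℕ → Submodule ℤ FF} {n : ℕ} (h : Good G n) {k : ℕ}
    (hk : 3 * k = n + 2) : ∃ D : Submodule ℤ FF, D ≤ RB (n + 1) k ∧
      SSpan (Function.update (nextG G n) k D) (n + 1) k ∧
      SInj (Function.update (nextG G n) k D) (n + 1) k (k + 1) := by
  have hI : SInj (nextG G n) (n + 1) k k := step_inj h le_rfl (by omega)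
  let H : Submodule ℤ (PB (n + 1) k → ℤ) :=
    { carrier := {g | ∃ a : ℕ → FF, (∀ s < k, a s ∈ nextG G n s) ∧
        ∀ J : PB (n + 1) k, ∑ s ∈ Finset.range k, zet (a s) J = g J}
      add_mem' := by
        rintro x y ⟨a, ha, hax⟩ ⟨b, hb, hby⟩
        refine ⟨fun s => a s + b s, fun s hs => add_mem (ha s hs) (hb s hs), fun J => ?_⟩
        simp [Finset.sum_add_distrib, hax, hby]
      zero_mem' := ⟨fun _ => 0, fun s _ => zero_mem _, fun J => by simp⟩
      smul_mem' := by
        rintro c x ⟨a, ha, hax⟩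
        refine ⟨fun s => c • a s, fun s hs => Submodule.smul_mem _ _ (ha s hs), fun J => ?_⟩
        simp only [zet_smul, ← Finset.mul_sum, hax]
        rfl }
  have hH : ∀ m : ℤ, m ≠ 0 → ∀ w, m • w ∈ H → w ∈ H := by
    rintro m hm w ⟨a, ha, haw⟩
    have h1 := hI m a ha (fun J hJ => ⟨w ⟨J, hJ⟩, haw ⟨J, hJ⟩⟩)
    have : ∀ s, ∃ a' : FF, s < k → a' ∈ nextG G n s ∧ a s = m • a' := by
      intro s
      by_cases hs : s < k
      · obtain ⟨a', h2, h3⟩ := h1 s hs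
        exact ⟨a', fun _ => ⟨h2, h3⟩⟩
      · exact ⟨0, fun h => absurd h hs⟩
    choose a' ha' using this
    refine ⟨a', fun s hs => (ha' s hs).1, fun J => ?_⟩
    apply mul_left_cancel₀ hm
    have h2 := haw J
    rw [Pi.smul_apply, smul_eq_mul] at h2
    rw [← h2, Finset.mul_sum]
    refine Finset.sum_congr rfl fun s hs => ?_
    rw [(ha' s (Finset.mem_range.1 hs)).2, zet_smul]
  obtain ⟨D', hD'⟩ := exists_compl H hH
  have hup : ∀ D : Submodule ℤ FF, ∀ s < k, Function.update (nextG G n) k D s = nextG G n s :=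
    fun D s hs => Function.update_of_ne hs.ne _ _
  have hzk : ∀ x ∈ RB (n + 1) k, ∀ J ∈ PB (n + 1) k, zet x J = x J := by
    intro x hx J hJ
    rw [zet_apply, Finset.sum_eq_single_of_mem J (Finset.mem_powerset_self J)]
    intro I hI hne
    refine hx I fun hI' => hne (Finset.eq_of_subset_of_card_le (Finset.mem_powerset.1 hI) ?_)
    rw [(mem_PB.1 hI').2.1, (mem_PB.1 hJ).2.1]
  refine ⟨D'.comap (resB _) ⊓ RB (n + 1) k, inf_le_right, ?_, ?_⟩
  · intro z
    have hz : resB (PB (n + 1) k) z ∈ H ⊔ D' := by rw [hD'.sup_eq_top]; trivial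
    obtain ⟨x, ⟨a, ha, hax⟩, y, hy, hxy⟩ := Submodule.mem_sup.1 hz
    let y' : FF := fun J => if hJ : J ∈ PB (n + 1) k then y ⟨J, hJ⟩ else 0
    have hy' : y' ∈ RB (n + 1) k := fun J hJ => dif_neg hJ
    have hry : resB _ y' = y := by
      ext J
      exact dif_pos J.2
    refine ⟨fun s => if s < k then a s else y', fun s hs => ?_, fun J hJ => ?_⟩
    · by_cases hsk : s < k
      · simp only [hsk, if_true]
        rw [hup _ s hsk]
        exact ha s hsk
      · obtain rfl : s = k := by omega
        simp only [lt_irrefl, if_false, Function.update_self]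
        refine ⟨?_, hy'⟩
        change resB _ y' ∈ D'
        rwa [hry]
    · have h1 := congrFun hxy ⟨J, hJ⟩
      rw [Pi.add_apply, ← hax] at h1
      simp only []
      rw [Finset.sum_range_succ, if_neg (lt_irrefl _), hzk y' hy' J hJ]
      rw [Finset.sum_congr rfl fun s hs => by rw [if_pos (Finset.mem_range.1 hs)]]
      have h2 := congrFun hry ⟨J, hJ⟩
      change y' J = _ at h2
      rw [h2]
      exact h1
  · intro m a ha hJ
    have hak := ha k (by omega)
    rw [Function.update_self] at hak
    have ha' : ∀ s < k, a s ∈ nextG G n s := fun s hs => by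
      have := ha s (by omega)
      rwa [hup _ s hs] at this
    have : ∀ J : PB (n + 1) k, ∃ c, ∑ s ∈ Finset.range (k + 1), zet (a s) J = m * c :=
      fun J => hJ J J.2
    choose w hw using this
    have hz : w ∈ H ⊔ D' := by rw [hD'.sup_eq_top]; trivial
    obtain ⟨x, hx, y, hy, hxy⟩ := Submodule.mem_sup.1 hz
    let u : PB (n + 1) k → ℤ := fun J => ∑ s ∈ Finset.range k, zet (a s) J
    have hu : u ∈ H := ⟨a, ha', fun J => rfl⟩
    have hsum : u + resB _ (a k) = m • x + m • y := by
      rw [← smul_add, hxy]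
      ext J
      have h1 := hw J
      rw [Finset.sum_range_succ, hzk _ hak.2 _ J.2] at h1
      exact h1
    have hdiff : u - m • x = m • y - resB _ (a k) := by
      rw [sub_eq_sub_iff_add_eq_add, hsum]
      exact add_comm _ _
    have h0 : u - m • x = 0 := by
      refine Submodule.disjoint_def.1 hD'.disjoint _ (sub_mem hu (H.smul_mem _ hx)) ?_
      rw [hdiff]
      exact sub_mem (D'.smul_mem _ hy) hak.1
    rw [h0] at hdiff
    have hux : u = m • x := sub_eq_zero.1 h0
    have hay : resB _ (a k) = m • y := (sub_eq_zero.1 hdiff.symm).symm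
    have h1 := hI m a ha' (fun J hJ' => ⟨x ⟨J, hJ'⟩, congrFun hux ⟨J, hJ'⟩⟩)
    intro s hs
    by_cases hsk : s < k
    · rw [hup _ s hsk]
      exact h1 s hsk
    · obtain rfl : s = k := by omega
      rw [Function.update_self]
      let y' : FF := fun J => if hJ : J ∈ PB (n + 1) s then y ⟨J, hJ⟩ else 0
      have hy' : y' ∈ RB (n + 1) s := fun J hJ => dif_neg hJ
      have hry : resB _ y' = y := by
        ext J
        exact dif_pos J.2
      refine ⟨y', ⟨?_, hy'⟩, ?_⟩
      · change resB _ y' ∈ D'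
        rwa [hry]
      · ext J
        by_cases hJ' : J ∈ PB (n + 1) s
        · have h2 := congrFun hay ⟨J, hJ'⟩
          rw [← hry] at h2
          exact h2
        · rw [hak.2 J hJ', Pi.smul_apply, hy' J hJ', smul_zero]

lemma SInj_congr {G G' : ℕ → Submodule ℤ FF} {n k E : ℕ} (hG : ∀ s < E, G s = G' s)
    (h : SInj G n k E) : SInj G' n k E := by
  intro m a ha hJ s hs
  rw [← hG s hs]
  exact h m a (fun s hs => by rw [hG s hs]; exact ha s hs) hJ s hs

lemma SSpan_congr {G G' : ℕ → Submodule ℤ FF} {n j : ℕ} (hG : ∀ s < j + 1, G s = G' s)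
    (h : SSpan G n j) : SSpan G' n j := by
  intro z
  obtain ⟨a, ha, haz⟩ := h z
  exact ⟨a, fun s hs => by rw [← hG s hs]; exact ha s hs, haz⟩

lemma good_step {G : ℕ → Submodule ℤ FF} {n : ℕ} (h : Good G n) : ∃ G', Good G' (n + 1) := by
  by_cases hex : ∃ k, 3 * k = n + 2
  · obtain ⟨k, hk⟩ := hex
    obtain ⟨D, hD, hspan, hinj⟩ := step_new h hk
    have hup : ∀ s, s < k → nextG G n s = Function.update (nextG G n) k D s :=
      fun s hs => (Function.update_of_ne hs.ne _ _).symm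
    refine ⟨Function.update (nextG G n) k D, ?_, ?_, ?_, ?_⟩
    · intro s hs
      by_cases hsk : s = k
      · subst hsk
        rwa [Function.update_self]
      · rw [← hup s (by omega)]
        exact step_le h (by omega)
    · intro s hs
      by_cases hsk : s = k
      · subst hsk
        exact hspan
      · exact SSpan_congr (fun t ht => hup t (by omega)) (step_span h (by omega))
    · intro l E hE hl
      exact SInj_congr (fun t ht => hup t (by omega)) (step_inj h hE (by omega))
    · intro s hs
      by_cases hsk : s = k
      · subst hsk
        exact hinj
      · exact SInj_congr (fun t ht => hup t (by omega)) (step_inj' h (by omega))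
  · have hne : ∀ s, 3 * s ≤ n + 1 + 1 → 3 * s ≤ n + 1 := by
      intro s hs
      by_contra hc
      exact hex ⟨s, by omega⟩
    exact ⟨nextG G n, fun s hs => step_le h (hne s hs), fun s hs => step_span h (hne s hs),
      fun k E hE hk => step_inj h hE (by omega), fun s hs => step_inj' h (hne s hs)⟩

lemma good_zero : Good (fun _ => RB 0 0) 0 := by
  have hz : ∀ z : FF, zet z ∅ = z ∅ := fun z => by simp [zet_apply]
  refine ⟨?_, ?_, ?_, ?_⟩
  · intro s hs
    obtain rfl : s = 0 := by omega
    exact le_rfl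
  · intro s hs z
    obtain rfl : s = 0 := by omega
    refine ⟨fun _ J => if J = ∅ then z ∅ else 0, fun s _ J hJ => ?_, fun J hJ => ?_⟩
    · rw [PB_zero, Finset.mem_singleton] at hJ
      exact if_neg hJ
    · rw [PB_zero, Finset.mem_singleton] at hJ
      subst hJ
      simp [hz]
  · intro k E hE hk m a ha hJ s hs
    omega
  · intro k hk m a ha hJ s hs
    obtain rfl : k = 0 := by omega
    obtain rfl : s = 0 := by omega
    obtain ⟨c, hc⟩ := hJ ∅ (by simp [PB_zero])
    simp only [zero_add, Finset.sum_range_one, hz] at hc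
    refine ⟨fun J => if J = ∅ then c else 0, fun J hJ => ?_, ?_⟩
    · rw [PB_zero, Finset.mem_singleton] at hJ
      exact if_neg hJ
    · ext J
      by_cases hJ : J = ∅
      · subst hJ
        simp [hc]
      · rw [ha 0 hs J (by simpa [PB_zero] using hJ)]
        simp [hJ]

lemma exists_good (n : ℕ) : ∃ G, Good G n := by
  induction n with
  | zero => exact ⟨_, good_zero⟩
  | succ n ih =>
    obtain ⟨G, hG⟩ := ih
    exact good_step hG

/-! ### Counting ballot sets, inclusion map -/

lemma PB_succ_card {n j : ℕ} (h : 2 * (j + 1) ≤ n + 1) :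
    (PB (n + 1) (j + 1)).card = (PB n (j + 1)).card + (PB n j).card := by
  have h1 : PB (n + 1) (j + 1) = PB n (j + 1) ∪ (PB n j).image (insert (n + 1)) := by
    ext J
    rw [Finset.mem_union, Finset.mem_image]
    constructor
    · intro hJ
      by_cases hn : n + 1 ∈ J
      · exact Or.inr ⟨_, PB_erase hJ hn, Finset.insert_erase hn⟩
      · exact Or.inl (PB_of_succ hJ hn)
    · rintro (hJ | ⟨I, hI, rfl⟩)
      · exact PB_mono hJ
      · exact PB_insert hI h
  rw [h1, Finset.card_union_of_disjoint, Finset.card_image_of_injOn]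
  · intro I hI I' hI' hII
    have := congrArg (fun s => s.erase (n + 1)) hII
    simpa [Finset.erase_insert (PB_not_mem hI), Finset.erase_insert (PB_not_mem hI')] using this
  · rw [Finset.disjoint_left]
    intro J hJ hJ'
    obtain ⟨I, _, rfl⟩ := Finset.mem_image.1 hJ'
    exact PB_not_mem hJ (Finset.mem_insert_self _ _)

lemma PB_card (n : ℕ) : ∀ j, 2 * (j + 1) ≤ n + 1 →
    (PB n (j + 1)).card + n.choose j = n.choose (j + 1) := by
  induction n with
  | zero => intro j hj; omega
  | succ n ih =>
    intro j hj
    by_cases h : 2 * (j + 1) = n + 2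
    · have : PB (n + 1) (j + 1) = ∅ := by
        rw [Finset.eq_empty_iff_forall_notMem]
        intro J hJ
        have := PB_two_mul hJ
        omega
      rw [this, Finset.card_empty, zero_add]
      obtain rfl : n = 2 * j := by omega
      exact (Nat.choose_symm_half j).symm
    · rw [PB_succ_card (by omega), Nat.choose_succ_succ n j, ← ih j (by omega)]
      cases j with
      | zero => simp [PB_zero]; omega
      | succ j =>
        rw [Nat.choose_succ_succ n j]
        have := ih j (by omega)
        simp only [Nat.succ_eq_add_one] at *
        omega

lemma PB_card_sum (n k : ℕ) (h : 2 * k ≤ n + 1) :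
    ∑ j ∈ Finset.range (k + 1), (PB n j).card = n.choose k := by
  induction k with
  | zero => simp [PB_zero]
  | succ k ih =>
    rw [Finset.sum_range_succ, ih (by omega), ← PB_card n k h, add_comm]

lemma sum_ksubsets_succ (n k : ℕ) (g : Finset ℕ → ℤ) :
    ∑ K ∈ ksubsets (n + 1) (k + 1), g K =
      ∑ K ∈ ksubsets n (k + 1), g K + ∑ K ∈ ksubsets n k, g (insert (n + 1) K) := by
  have hnot : ∀ {j K}, K ∈ ksubsets n j → n + 1 ∉ K := fun h =>
    Icc_top_not_mem (mem_ksubsets.1 h).1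
  have hinj : Set.InjOn (insert (n + 1)) (ksubsets n k : Set (Finset ℕ)) := by
    intro I hI I' hI' hII
    have := congrArg (fun s => s.erase (n + 1)) hII
    simpa [Finset.erase_insert (hnot hI), Finset.erase_insert (hnot hI')] using this
  have h1 : ksubsets (n + 1) (k + 1) =
      ksubsets n (k + 1) ∪ (ksubsets n k).image (insert (n + 1)) := by
    ext J
    rw [Finset.mem_union, Finset.mem_image]
    constructor
    · intro hJ
      rw [mem_ksubsets] at hJ
      by_cases hn : n + 1 ∈ J
      · refine Or.inr ⟨J.erase (n + 1), ?_, Finset.insert_erase hn⟩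
        rw [mem_ksubsets]
        exact ⟨sub_of_sub_succ ((Finset.erase_subset _ _).trans hJ.1) (Finset.notMem_erase _ _),
          by rw [Finset.card_erase_of_mem hn, hJ.2]; rfl⟩
      · exact Or.inl (mem_ksubsets.2 ⟨sub_of_sub_succ hJ.1 hn, hJ.2⟩)
    · rintro (hJ | ⟨I, hI, rfl⟩)
      · rw [mem_ksubsets] at *
        exact ⟨sub_succ_of_sub hJ.1, hJ.2⟩
      · have := hnot hI
        rw [mem_ksubsets] at *
        exact ⟨insert_sub hI.1, by rw [Finset.card_insert_of_notMem this, hI.2]⟩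
  rw [h1, Finset.sum_union, Finset.sum_image hinj]
  rw [Finset.disjoint_left]
  intro J hJ hJ'
  obtain ⟨I, _, rfl⟩ := Finset.mem_image.1 hJ'
  exact hnot hJ (Finset.mem_insert_self _ _)

/-- inclusion transform -/
noncomputable def inc (n k : ℕ) (x : FF) (J : Finset ℕ) : ℤ :=
  ∑ K ∈ ksubsets n k, if J ⊆ K then x K else 0

lemma inc_congr {n k : ℕ} {x y : FF} (h : ∀ K ∈ ksubsets n k, x K = y K) (J : Finset ℕ) :
    inc n k x J = inc n k y J :=
  Finset.sum_congr rfl fun K hK => by rw [h K hK]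

lemma inc_not {n k : ℕ} (x : FF) {J : Finset ℕ} (hJ : n + 1 ∉ J) :
    inc (n + 1) (k + 1) x J = inc n (k + 1) x J + inc n k (fun K => x (insert (n + 1) K)) J := by
  rw [inc, sum_ksubsets_succ, inc, inc]
  simp only [Finset.subset_insert_iff_of_notMem hJ]

lemma inc_insert {n k : ℕ} (x : FF) {J : Finset ℕ} (hJ : n + 1 ∉ J) :
    inc (n + 1) (k + 1) x (insert (n + 1) J) = inc n k (fun K => x (insert (n + 1) K)) J := by
  rw [inc, sum_ksubsets_succ, inc]
  rw [Finset.sum_eq_zero, zero_add]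
  · refine Finset.sum_congr rfl fun K hK => ?_
    have := Icc_top_not_mem (mem_ksubsets.1 hK).1
    simp only [Finset.insert_subset_insert_iff hJ]
  · intro K hK
    have := Icc_top_not_mem (mem_ksubsets.1 hK).1
    rw [if_neg]
    intro h
    exact this (h (Finset.mem_insert_self _ _))

def ISurj (n k : ℕ) : Prop := ∀ z : FF, ∃ x : FF, ∀ j ≤ k, ∀ J ∈ PB n j, inc n k x J = z J

lemma ISurj_zero (n : ℕ) : ISurj n 0 := by
  intro z
  refine ⟨fun _ => z ∅, fun j hj J hJ => ?_⟩
  obtain rfl : j = 0 := by omega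
  rw [PB_zero, Finset.mem_singleton] at hJ
  subst hJ
  have : ksubsets n 0 = {∅} := by
    ext K
    rw [mem_ksubsets, Finset.card_eq_zero, Finset.mem_singleton]
    constructor
    · exact fun h => h.2
    · rintro rfl
      simp
  simp [inc, this]

lemma ISurj_step {n k : ℕ} (h0 : ISurj n (k + 1)) (h1 : ISurj n k) : ISurj (n + 1) (k + 1) := by
  intro z
  obtain ⟨x1, hx1⟩ := h1 (fun J => z (insert (n + 1) J))
  obtain ⟨x0, hx0⟩ := h0 (fun J => z J - inc n k x1 J)
  let x : FF := fun K => if n + 1 ∈ K then x1 (K.erase (n + 1)) else x0 K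
  have e0 : ∀ J, inc n (k + 1) x J = inc n (k + 1) x0 J := inc_congr fun K hK =>
    if_neg (Icc_top_not_mem (mem_ksubsets.1 hK).1)
  have e1 : ∀ J, inc n k (fun K => x (insert (n + 1) K)) J = inc n k x1 J :=
    inc_congr fun K hK => by
      have := Icc_top_not_mem (mem_ksubsets.1 hK).1
      simp [x, Finset.erase_insert this]
  refine ⟨x, fun j hj J hJ => ?_⟩
  by_cases hn : n + 1 ∈ J
  · cases j with
    | zero =>
      rw [PB_zero, Finset.mem_singleton] at hJ
      simp [hJ] at hn
    | succ j =>
      have hJ' := PB_erase hJ hn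
      have h2 := hx1 j (by omega) _ hJ'
      rw [← e1, ← inc_insert x (PB_not_mem hJ'), Finset.insert_erase hn] at h2
      exact h2
  · rw [inc_not x hn, e0, e1, hx0 j hj J (PB_of_succ hJ hn)]
    ring

/-- signed zeta transform -/
def mob (z : FF) (J : Finset ℕ) : ℤ := ∑ I ∈ J.powerset, (-1) ^ I.card * z I

lemma mob_insert (z : FF) {a : ℕ} {J : Finset ℕ} (h : a ∉ J) :
    mob z (insert a J) = mob z J - mob (fun I => z (insert a I)) J := by
  rw [mob, Finset.sum_powerset_insert h, mob, mob, sub_eq_add_neg, ← Finset.sum_neg_distrib]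
  congr 1
  refine Finset.sum_congr rfl fun I hI => ?_
  rw [Finset.card_insert_of_notMem fun h' => h (Finset.mem_powerset.1 hI h'), pow_succ]
  ring

lemma mob_mob (J : Finset ℕ) : ∀ z : FF, mob (mob z) J = z J := by
  induction J using Finset.induction_on with
  | empty => intro z; simp [mob]
  | insert a J ha ih =>
    intro z
    rw [mob_insert _ ha]
    have : mob (fun I => mob z (insert a I)) J =
        mob (mob z) J - mob (mob (fun I => z (insert a I))) J := by
      rw [mob, mob, mob, ← Finset.sum_sub_distrib]
      refine Finset.sum_congr rfl fun I hI => ?_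
      rw [mob_insert z fun h' => ha (Finset.mem_powerset.1 hI h')]
      ring
    rw [this, ih, ih]
    ring

lemma mob_ind (J K : Finset ℕ) :
    ∑ I ∈ J.powerset, (-1 : ℤ) ^ I.card * (if I ⊆ K then 1 else 0) =
      if Disjoint J K then 1 else 0 := by
  have h := Finset.sum_powerset_neg_one_pow_card (x := J ∩ K)
  simp only [mul_ite, mul_one, mul_zero]
  rw [← Finset.sum_filter]
  have : (J.powerset.filter (· ⊆ K)) = (J ∩ K).powerset := by
    ext I
    simp only [Finset.mem_filter, Finset.mem_powerset, Finset.subset_inter_iff]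
  rw [this, h]
  simp only [Finset.disjoint_iff_inter_eq_empty]

lemma ISurj_compl {k : ℕ} (h : ISurj (2 * k + 1) k) : ISurj (2 * k + 1) (k + 1) := by
  intro z
  obtain ⟨x, hx⟩ := h (mob z)
  refine ⟨fun K => x (Finset.Icc 1 (2 * k + 1) \ K), fun j hj J hJ => ?_⟩
  have h2 := PB_two_mul hJ
  have hJs := (mem_PB.1 hJ).1
  have e1 : inc (2 * k + 1) (k + 1) (fun K => x (Finset.Icc 1 (2 * k + 1) \ K)) J =
      ∑ K ∈ ksubsets (2 * k + 1) k, if Disjoint J K then x K else 0 := by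
    rw [inc]
    refine Finset.sum_nbij' (fun K => Finset.Icc 1 (2 * k + 1) \ K)
      (fun K => Finset.Icc 1 (2 * k + 1) \ K) ?_ ?_ ?_ ?_ ?_
    · intro K hK
      rw [mem_ksubsets] at *
      refine ⟨Finset.sdiff_subset, ?_⟩
      rw [Finset.card_sdiff_of_subset hK.1, hK.2, Nat.card_Icc]
      omega
    · intro K hK
      rw [mem_ksubsets] at *
      refine ⟨Finset.sdiff_subset, ?_⟩
      rw [Finset.card_sdiff_of_subset hK.1, hK.2, Nat.card_Icc]
      omega
    · intro K hK
      exact Finset.sdiff_sdiff_eq_self (mem_ksubsets.1 hK).1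
    · intro K hK
      exact Finset.sdiff_sdiff_eq_self (mem_ksubsets.1 hK).1
    · intro K hK
      have : J ⊆ K ↔ Disjoint J (Finset.Icc 1 (2 * k + 1) \ K) := by
        rw [Finset.disjoint_left]
        constructor
        · intro h a ha ha'
          exact (Finset.mem_sdiff.1 ha').2 (h ha)
        · intro h a ha
          by_contra hc
          exact h ha (Finset.mem_sdiff.2 ⟨hJs ha, hc⟩)
      simp only [this]
  rw [e1, ← mob_mob J z, mob]
  have e2 : ∀ I ∈ J.powerset, (-1) ^ I.card * mob z I =
      ∑ K ∈ ksubsets (2 * k + 1) k, ((-1) ^ I.card * (if I ⊆ K then 1 else 0)) * x K := by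
    intro I hI
    have hI' := PB_sub hJ (Finset.mem_powerset.1 hI)
    have hc := Finset.card_le_card (Finset.mem_powerset.1 hI)
    rw [(mem_PB.1 hJ).2.1] at hc
    rw [← hx I.card (by omega) I hI', inc, Finset.mul_sum]
    refine Finset.sum_congr rfl fun K hK => ?_
    split_ifs <;> simp
  rw [Finset.sum_congr rfl e2, Finset.sum_comm]
  refine Finset.sum_congr rfl fun K hK => ?_
  rw [← Finset.sum_mul, mob_ind]
  split_ifs <;> simp

lemma isurj (n : ℕ) : ∀ k, 2 * k ≤ n + 1 → ISurj n k := by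
  induction n with
  | zero =>
    intro k hk
    obtain rfl : k = 0 := by omega
    exact ISurj_zero 0
  | succ n ih =>
    have h1 : ∀ k, 2 * k ≤ n + 1 → ISurj (n + 1) k := by
      intro k hk
      cases k with
      | zero => exact ISurj_zero _
      | succ k => exact ISurj_step (ih _ hk) (ih _ (by omega))
    intro k hk
    by_cases h : 2 * k ≤ n + 1
    · exact h1 k h
    · obtain ⟨l, rfl⟩ : ∃ l, k = l + 1 := ⟨k - 1, by omega⟩
      obtain rfl : n = 2 * l := by omega
      exact ISurj_compl (h1 l (by omega))

/-! ### Intertwining -/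

lemma C_nat (p q : ℕ) : C (p : ℤ) (q : ℤ) = (p.choose q : ℤ) := by
  unfold C
  by_cases h : q ≤ p
  · rw [if_pos ⟨by positivity, by exact_mod_cast h⟩]
    simp
  · rw [if_neg, Nat.choose_eq_zero_of_lt (by omega)]
    · rfl
    · intro h'
      exact h (by exact_mod_cast h'.2)

lemma C_neg (x y : ℤ) (h : y < 0) : C x y = 0 := by
  unfold C
  rw [if_neg]
  omega

lemma count_aux (n k ℓ : ℕ) {J K : Finset ℕ} (hJ : J ⊆ Finset.Icc 1 n) (hK : K ∈ ksubsets n k) :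
    ((((ksubsets n k).filter fun K' => J ⊆ K' ∧ (K ∩ K').card = ℓ).card : ℕ) : ℤ) =
      C ((k : ℤ) - (K ∩ J).card) ((ℓ : ℤ) - (K ∩ J).card) *
        C ((n : ℤ) - k - J.card + (K ∩ J).card) ((k : ℤ) - ℓ - J.card + (K ∩ J).card) := by
  obtain ⟨hKs, hKc⟩ := mem_ksubsets.1 hK
  have hvk : (K ∩ J).card ≤ k := hKc ▸ Finset.card_le_card Finset.inter_subset_left
  have hvj : (K ∩ J).card ≤ J.card := Finset.card_le_card Finset.inter_subset_right
  have hU : (K ∪ J).card + (K ∩ J).card = k + J.card := by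
    rw [Finset.card_union_add_card_inter, hKc]
  have hUn : (K ∪ J).card ≤ n := by
    have := Finset.card_le_card (Finset.union_subset hKs hJ)
    simpa using this
  have hKJ : (K \ J).card = k - (K ∩ J).card := by
    have := Finset.card_sdiff_add_card_inter K J
    omega
  have hcomp : (Finset.Icc 1 n \ (K ∪ J)).card = n - (K ∪ J).card := by
    rw [Finset.card_sdiff_of_subset (Finset.union_subset hKs hJ), Nat.card_Icc]
    omega
  -- decomposition of the relevant sets
  have hdec : ∀ K' : Finset ℕ, K' ⊆ Finset.Icc 1 n → J ⊆ K' →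
      K'.card = J.card + (K' ∩ (K \ J)).card + (K' ∩ (Finset.Icc 1 n \ (K ∪ J))).card ∧
      (K ∩ K').card = (K ∩ J).card + (K' ∩ (K \ J)).card := by
    intro K' hK' hJK'
    constructor
    · rw [← Finset.card_union_of_disjoint, ← Finset.card_union_of_disjoint]
      · congr 1
        ext a
        have h1 := @hK' a
        have h2 := @hJK' a
        simp only [Finset.mem_union, Finset.mem_inter, Finset.mem_sdiff] at *
        tauto
      · rw [Finset.disjoint_left]
        intro a
        simp only [Finset.mem_union, Finset.mem_inter, Finset.mem_sdiff]
        tauto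
      · rw [Finset.disjoint_left]
        intro a
        simp only [Finset.mem_inter, Finset.mem_sdiff]
        tauto
    · rw [← Finset.card_union_of_disjoint]
      · congr 1
        ext a
        have h2 := @hJK' a
        simp only [Finset.mem_union, Finset.mem_inter, Finset.mem_sdiff] at *
        tauto
      · rw [Finset.disjoint_left]
        intro a
        simp only [Finset.mem_inter, Finset.mem_sdiff]
        tauto
  have hempty : ℓ < (K ∩ J).card ∨ k + (K ∩ J).card < ℓ + J.card →
      ((ksubsets n k).filter fun K' => J ⊆ K' ∧ (K ∩ K').card = ℓ) = ∅ := by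
    intro h
    rw [Finset.filter_eq_empty_iff]
    rintro K' hK' ⟨h1, h2⟩
    obtain ⟨h3, h4⟩ := mem_ksubsets.1 hK'
    have := hdec K' h3 h1
    omega
  by_cases h1 : ℓ < (K ∩ J).card
  · rw [hempty (Or.inl h1), C_neg _ ((ℓ : ℤ) - (K ∩ J).card) (by omega)]
    simp
  by_cases h2 : k + (K ∩ J).card < ℓ + J.card
  · rw [hempty (Or.inr h2), C_neg _ ((k : ℤ) - ℓ - J.card + (K ∩ J).card) (by omega)]
    simp
  have e1 : (k : ℤ) - (K ∩ J).card = ((K \ J).card : ℕ) := by omega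
  have e2 : (ℓ : ℤ) - (K ∩ J).card = ((ℓ - (K ∩ J).card : ℕ) : ℤ) := by omega
  have e3 : (n : ℤ) - k - J.card + (K ∩ J).card = ((Finset.Icc 1 n \ (K ∪ J)).card : ℕ) := by omega
  have e4 : (k : ℤ) - ℓ - J.card + (K ∩ J).card = ((k + (K ∩ J).card - ℓ - J.card : ℕ) : ℤ) := by
    omega
  rw [e1, e2, e3, e4, C_nat, C_nat, ← Nat.cast_mul, ← Finset.card_powersetCard,
    ← Finset.card_powersetCard, ← Finset.card_product]
  congr 1
  have hXY : ∀ X Y : Finset ℕ, X ⊆ K \ J → Y ⊆ Finset.Icc 1 n \ (K ∪ J) →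
      (J ∪ X ∪ Y) ∩ (K \ J) = X ∧ (J ∪ X ∪ Y) ∩ (Finset.Icc 1 n \ (K ∪ J)) = Y := by
    clear hempty hdec e1 e2 e3 e4 h1 h2 hU hUn hKJ hcomp hvk hvj hK hKc hKs hJ
    intro X Y hX hY
    constructor
    · ext a
      have h1 := @hX a
      have h2 := @hY a
      simp only [Finset.mem_union, Finset.mem_inter, Finset.mem_sdiff] at *
      tauto
    · ext a
      have h1 := @hX a
      have h2 := @hY a
      simp only [Finset.mem_union, Finset.mem_inter, Finset.mem_sdiff] at *
      tauto
  refine Finset.card_nbij' (fun K' => (K' ∩ (K \ J), K' ∩ (Finset.Icc 1 n \ (K ∪ J))))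
    (fun p => J ∪ p.1 ∪ p.2) ?_ ?_ ?_ ?_
  · intro K' hK'
    obtain ⟨hK', h5, h6⟩ := Finset.mem_filter.1 hK'
    obtain ⟨h3, h4⟩ := mem_ksubsets.1 hK'
    have := hdec K' h3 h5
    simp only [Finset.coe_product, Set.mem_prod, Finset.mem_coe, Finset.mem_powersetCard]
    exact ⟨⟨Finset.inter_subset_right, by omega⟩, Finset.inter_subset_right, by omega⟩
  · rintro ⟨X, Y⟩ hp
    simp only [Finset.coe_product, Set.mem_prod, Finset.mem_coe, Finset.mem_powersetCard] at hp
    obtain ⟨⟨hX, hXc⟩, hY, hYc⟩ := hp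
    have h3 : J ∪ X ∪ Y ⊆ Finset.Icc 1 n :=
      Finset.union_subset (Finset.union_subset hJ (hX.trans (Finset.sdiff_subset.trans hKs)))
        (hY.trans Finset.sdiff_subset)
    have h5 : J ⊆ J ∪ X ∪ Y := by
      rw [Finset.union_assoc]; exact Finset.subset_union_left
    obtain ⟨h6, h7⟩ := hXY X Y hX hY
    have := hdec _ h3 h5
    rw [h6, h7] at this
    change J ∪ X ∪ Y ∈ _
    rw [Finset.mem_coe, Finset.mem_filter, mem_ksubsets]
    exact ⟨⟨h3, by omega⟩, h5, by omega⟩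
  · intro K' hK'
    obtain ⟨hK', h5, h6⟩ := Finset.mem_filter.1 hK'
    obtain ⟨h3, h4⟩ := mem_ksubsets.1 hK'
    ext a
    have h1 := @h3 a
    have h2 := @h5 a
    simp only [Finset.mem_union, Finset.mem_inter, Finset.mem_sdiff] at *
    tauto
  · rintro ⟨X, Y⟩ hp
    simp only [Finset.coe_product, Set.mem_prod, Finset.mem_coe, Finset.mem_powersetCard] at hp
    obtain ⟨⟨hX, hXc⟩, hY, hYc⟩ := hp
    exact Prod.ext (hXY X Y hX hY).1 (hXY X Y hX hY).2

lemma newton (F : ℕ → ℤ) (v j : ℕ) (hv : v ≤ j) :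
    F v = ∑ i ∈ Finset.range (j + 1), (v.choose i : ℤ) *
      ∑ w ∈ Finset.range (i + 1), (-1 : ℤ) ^ (i + w) * (i.choose w) * F w := by
  have h := shift_eq_sum_fwdDiff_iter 1 F v 0
  simp only [fwdDiff_iter_eq_sum_shift, smul_eq_mul, mul_one, zero_add, nsmul_eq_mul] at h
  rw [show F v = F ((v : ℕ)) from rfl]
  rw [h]
  symm
  rw [← Finset.sum_subset (Finset.range_mono (by omega : v + 1 ≤ j + 1))]
  · refine Finset.sum_congr rfl fun i hi => ?_
    congr 1
    refine Finset.sum_congr rfl fun w hw => ?_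
    have : w ≤ i := by have := Finset.mem_range.1 hw; omega
    congr 2
    rw [show i + w = (i - w) + 2 * w by omega, pow_add, pow_mul]
    simp
  · intro i hi hi'
    rw [Nat.choose_eq_zero_of_lt]
    · simp
    · simp at hi'; omega

/-- The action of the matrix on functions. -/
noncomputable def actB (n k : ℕ) (b : ℕ → ℤ) (x : FF) (K' : Finset ℕ) : ℤ :=
  ∑ K ∈ ksubsets n k, x K * ∑ ℓ ∈ Finset.range (k + 1), b ℓ * if (K ∩ K').card = ℓ then 1 else 0

lemma inc_actB (n k : ℕ) (b : ℕ → ℤ) (x : FF) {J : Finset ℕ} (hJ : J ⊆ Finset.Icc 1 n) :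
    inc n k (actB n k b x) J = ∑ i ∈ Finset.range (J.card + 1),
      (∑ ℓ ∈ Finset.range (k + 1), b ℓ * f n k k ℓ i J.card) *
        ∑ I ∈ J.powersetCard i, inc n k x I := by
  have hL : inc n k (actB n k b x) J = ∑ K ∈ ksubsets n k, x K *
      ∑ ℓ ∈ Finset.range (k + 1), b ℓ *
        ((((ksubsets n k).filter fun K' => J ⊆ K' ∧ (K ∩ K').card = ℓ).card : ℕ) : ℤ) := by
    unfold inc actB
    simp only [← Finset.sum_filter]
    rw [Finset.sum_comm]
    refine Finset.sum_congr rfl fun K hK => ?_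
    rw [← Finset.mul_sum, Finset.sum_comm]
    congr 1
    refine Finset.sum_congr rfl fun ℓ hℓ => ?_
    rw [← Finset.mul_sum, ← Finset.sum_filter, Finset.filter_filter, Finset.sum_const]
    simp
  have hR : ∀ i, ∑ I ∈ J.powersetCard i, inc n k x I =
      ∑ K ∈ ksubsets n k, x K * ((K ∩ J).card.choose i : ℤ) := by
    intro i
    unfold inc
    rw [Finset.sum_comm]
    refine Finset.sum_congr rfl fun K hK => ?_
    rw [← Finset.sum_filter, Finset.sum_const, ← Finset.card_powersetCard, nsmul_eq_mul, mul_comm]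
    congr 3
    ext I
    simp only [Finset.mem_filter, Finset.mem_powersetCard, Finset.subset_inter_iff]
    tauto
  rw [hL]
  simp only [hR, Finset.mul_sum]
  conv_rhs => rw [Finset.sum_comm]
  refine Finset.sum_congr rfl fun K hK => ?_
  simp only [← mul_assoc]
  have hv : (K ∩ J).card ≤ J.card := Finset.card_le_card Finset.inter_subset_right
  have hN : ∀ ℓ, ((((ksubsets n k).filter fun K' => J ⊆ K' ∧ (K ∩ K').card = ℓ).card : ℕ) : ℤ) =
      ∑ i ∈ Finset.range (J.card + 1), ((K ∩ J).card.choose i : ℤ) * f n k k ℓ i J.card := by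
    intro ℓ
    rw [count_aux n k ℓ hJ hK]
    exact newton (fun v => C ((k : ℤ) - v) ((ℓ : ℤ) - v) *
      C ((n : ℤ) - k - J.card + v) ((k : ℤ) - ℓ - J.card + v)) _ _ hv
  simp only [hN, Finset.mul_sum, Finset.sum_mul]
  conv_lhs => rw [Finset.sum_comm]
  refine Finset.sum_congr rfl fun i hi => Finset.sum_congr rfl fun ℓ hℓ => ?_
  ring

/-! ### Final assembly -/

lemma G_res_inj {G : ℕ → Submodule ℤ FF} {n s : ℕ} (h : G s ≤ RB n s) :
    Function.Injective ((resB (PB n s)).comp (G s).subtype) := by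
  rw [← LinearMap.ker_eq_bot, LinearMap.ker_eq_bot']
  rintro ⟨z, hz⟩ h0
  ext J
  change z J = 0
  by_cases hJ : J ∈ PB n s
  · exact congrFun h0 ⟨J, hJ⟩
  · exact h hz J hJ

lemma G_finite {G : ℕ → Submodule ℤ FF} {n s : ℕ} (h : G s ≤ RB n s) : Module.Finite ℤ (G s) :=
  Module.Finite.of_injective _ (G_res_inj h)

lemma G_free {G : ℕ → Submodule ℤ FF} {n s : ℕ} (h : G s ≤ RB n s) : Module.Free ℤ (G s) :=
  Module.Free.of_equiv (LinearEquiv.ofInjective _ (G_res_inj h)).symm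

/-- degree `j` evaluation map -/
noncomputable def evalG (G : ℕ → Submodule ℤ FF) (n j : ℕ) :
    ((s : Fin (j + 1)) → G s) →ₗ[ℤ] (PB n j → ℤ) :=
  (resB (PB n j)).comp (zet.comp
    (∑ s : Fin (j + 1), (G s).subtype.comp (LinearMap.proj s)))

lemma evalG_apply (G : ℕ → Submodule ℤ FF) (n j : ℕ) (a : (s : Fin (j + 1)) → G s) (J : PB n j) :
    evalG G n j a J = ∑ s : Fin (j + 1), zet (a s) J := by
  simp only [evalG, LinearMap.comp_apply, LinearMap.sum_apply, map_sum]
  simp [resB]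

lemma evalG_bij {G : ℕ → Submodule ℤ FF} {n j : ℕ} (hG : Good G n) (hj : 3 * j ≤ n + 1) :
    Function.Bijective (evalG G n j) := by
  constructor
  · rw [← LinearMap.ker_eq_bot, LinearMap.ker_eq_bot']
    intro a ha
    have := hG.inj' j hj 0 (fun s => if h : s < j + 1 then (a ⟨s, h⟩ : FF) else 0)
      (fun s hs => by simp [hs]) (fun J hJ => by
        have h := congrFun ha ⟨J, hJ⟩
        rw [evalG_apply] at h
        rw [Finset.sum_range]
        simp only [Fin.is_lt, dif_pos]
        rw [h]
        simp)
    ext s : 1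
    obtain ⟨a', _, h⟩ := this s s.2
    apply Subtype.ext
    simp only [Fin.is_lt, dif_pos, zero_smul] at h
    exact h
  · intro z
    obtain ⟨a, ha, haz⟩ := hG.span j hj (fun J => if h : J ∈ PB n j then z ⟨J, h⟩ else 0)
    refine ⟨fun s => ⟨a s, ha s s.2⟩, ?_⟩
    ext J
    rw [evalG_apply]
    have := haz J J.2
    rw [Finset.sum_range] at this
    simpa using this

lemma G_rank_sum {G : ℕ → Submodule ℤ FF} {n j : ℕ} (hG : Good G n) (hj : 3 * j ≤ n + 1) :
    ∑ s : Fin (j + 1), Module.finrank ℤ (G s) = (PB n j).card := by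
  have h1 : ∀ s : Fin (j + 1), Module.Finite ℤ (G s) := fun s =>
    G_finite (hG.le s (by have := s.2; omega))
  have h2 : ∀ s : Fin (j + 1), Module.Free ℤ (G s) := fun s =>
    G_free (hG.le s (by have := s.2; omega))
  have := (LinearEquiv.ofBijective _ (evalG_bij hG hj)).finrank_eq
  rw [Module.finrank_pi_fintype] at this
  rw [this]
  simp

lemma G_rank {G : ℕ → Submodule ℤ FF} {n s : ℕ} (hG : Good G n) (hs : 3 * s ≤ n + 1) :
    Module.finrank ℤ (G s) = (msMult n s).toNat := by
  have h := G_rank_sum hG hs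
  unfold msMult
  rw [C_nat]
  rcases s with _ | _ | s
  · rw [PB_zero] at h
    rw [C_neg _ _ (by norm_num), C_neg _ _ (by norm_num)]
    simpa using h
  · rw [Fin.sum_univ_castSucc] at h
    have h' := G_rank_sum hG (show 3 * 0 ≤ n + 1 by omega)
    have h2 := PB_card n 0 (by omega)
    rw [PB_zero] at h'
    rw [C_neg _ (_ - 2) (by norm_num), show (((0 + 1 : ℕ) : ℤ) - 1) = ((0 : ℕ) : ℤ) by norm_num, C_nat]
    simp at h h' h2 ⊢
    omega
  · rw [Fin.sum_univ_castSucc] at h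
    have h' := G_rank_sum hG (show 3 * (s + 1) ≤ n + 1 by omega)
    have h2 := PB_card n (s + 1) (by omega)
    have h3 := PB_card n s (by omega)
    rw [show (((s + 1 + 1 : ℕ) : ℤ) - 1) = ((s + 1 : ℕ) : ℤ) by push_cast; ring, C_nat,
      show (((s + 1 + 1 : ℕ) : ℤ) - 2) = ((s : ℕ) : ℤ) by push_cast; ring, C_nat]
    change (∑ i : Fin (s + 1 + 1), Module.finrank ℤ (G i)) + Module.finrank ℤ (G (s + 1 + 1)) = _ at h
    rw [h'] at h
    omega

lemma sum_zet {n s i : ℕ} {a : FF} (ha : a ∈ RB n s) (hsi : s ≤ i) (J : Finset ℕ) :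
    ∑ I ∈ J.powersetCard i, zet a I = ((J.card - s).choose (i - s) : ℤ) * zet a J := by
  simp only [zet_apply]
  rw [Finset.sum_comm' (t' := J.powerset) (s' := fun L => (J.powersetCard i).filter (L ⊆ ·)),
    Finset.mul_sum]
  · refine Finset.sum_congr rfl fun L hL => ?_
    rw [Finset.sum_const, nsmul_eq_mul]
    by_cases hLs : L ∈ PB n s
    · congr 2
      have hc := (mem_PB.1 hLs).2.1
      have hLJ := Finset.mem_powerset.1 hL
      rw [← hc, ← Finset.card_sdiff_of_subset hLJ, ← Finset.card_powersetCard]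
      refine Finset.card_nbij' (fun I => I \ L) (fun I => I ∪ L) ?_ ?_ ?_ ?_
      · intro I hI
        simp only [Finset.coe_filter, Finset.mem_powersetCard, Set.mem_ofPred_eq] at hI
        simp only [Finset.mem_coe, Finset.mem_powersetCard]
        refine ⟨Finset.sdiff_subset_sdiff hI.1.1 le_rfl, ?_⟩
        rw [Finset.card_sdiff_of_subset hI.2, hI.1.2]
      · intro I hI
        simp only [Finset.mem_coe, Finset.mem_powersetCard] at hI
        simp only [Finset.coe_filter, Finset.mem_powersetCard, Set.mem_ofPred_eq]
        refine ⟨⟨Finset.union_subset (hI.1.trans Finset.sdiff_subset) hLJ, ?_⟩,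
          Finset.subset_union_right⟩
        rw [Finset.card_union_of_disjoint (Finset.disjoint_of_subset_left hI.1
          Finset.sdiff_disjoint), hI.2]
        omega
      · intro I hI
        simp only [Finset.coe_filter, Finset.mem_powersetCard, Set.mem_ofPred_eq] at hI
        exact Finset.sdiff_union_of_subset hI.2
      · intro I hI
        simp only [Finset.mem_coe, Finset.mem_powersetCard] at hI
        exact Finset.union_sdiff_cancel_right (Finset.disjoint_of_subset_left hI.1
          Finset.sdiff_disjoint)
    · rw [ha L hLs]; simp
  · intro I L
    simp only [Finset.mem_powersetCard, Finset.mem_powerset, Finset.mem_filter]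
    constructor
    · rintro ⟨⟨h1, h2⟩, h3⟩
      exact ⟨⟨⟨h1, h2⟩, h3⟩, h3.trans h1⟩
    · rintro ⟨h, _⟩
      exact h

/-- degreewise functions on ballot sets -/
abbrev ZZ (n k : ℕ) : Type := (j : Fin (k + 1)) → PB n j → ℤ

/-- coefficient space -/
abbrev WW (k : ℕ) (m : Fin (k + 1) → ℕ) : Type :=
  (s : Fin (k + 1)) → Fin (m s) → Fin (k - s + 1) → ℤ

/-- extension by zero -/
noncomputable def extz (S : Finset (Finset ℕ)) : (S → ℤ) →ₗ[ℤ] FF where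
  toFun x K := if h : K ∈ S then x ⟨K, h⟩ else 0
  map_add' x y := by ext K; by_cases h : K ∈ S <;> simp [h]
  map_smul' c x := by ext K; by_cases h : K ∈ S <;> simp [h]

lemma extz_coe (S : Finset (Finset ℕ)) (x : S → ℤ) (K : S) : extz S x K = x K := by
  change (if h : _ then _ else _) = _
  rw [dif_pos K.2]

lemma extz_mem (S : Finset (Finset ℕ)) (x : S → ℤ) {K : Finset ℕ} (h : K ∈ S) :
    extz S x K = x ⟨K, h⟩ := by
  change (if h : _ then _ else _) = _
  rw [dif_pos h]

/-- the incidence map -/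
noncomputable def theta (n k : ℕ) : (ksubsets n k → ℤ) →ₗ[ℤ] ZZ n k where
  toFun x j J := inc n k (extz _ x) J
  map_add' x y := by
    ext j J
    simp only [inc, map_add, Pi.add_apply, ← Finset.sum_add_distrib]
    refine Finset.sum_congr rfl fun K hK => ?_
    split_ifs <;> simp
  map_smul' c x := by
    ext j J
    simp only [inc, map_smul, Pi.smul_apply, Finset.smul_sum, RingHom.id_apply]
    refine Finset.sum_congr rfl fun K hK => ?_
    split_ifs <;> simp

lemma theta_apply (n k : ℕ) (x : ksubsets n k → ℤ) (j : Fin (k + 1)) (J : PB n j) :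
    theta n k x j J = inc n k (extz _ x) J := rfl

lemma card_ksubsets (n k : ℕ) : (ksubsets n k).card = n.choose k := by
  have : ksubsets n k = (Finset.Icc 1 n).powersetCard k := by
    ext A
    rw [mem_ksubsets, Finset.mem_powersetCard]
  rw [this, Finset.card_powersetCard, Nat.card_Icc]
  simp

lemma theta_surj {n k : ℕ} (h : 2 * k ≤ n + 1) : Function.Surjective (theta n k) := by
  intro z
  obtain ⟨x, hx⟩ := isurj n k h (fun J => if h : J.card < k + 1 then
    extz (PB n J.card) (z ⟨J.card, h⟩) J else 0)
  refine ⟨resB _ x, ?_⟩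
  ext ⟨j, hj⟩ ⟨J, hJ⟩
  rw [theta_apply, inc_congr (y := x)]
  · rw [hx j (by omega) J hJ]
    obtain rfl : J.card = j := (mem_PB.1 hJ).2.1
    rw [dif_pos hj, extz_mem _ _ hJ]
  · intro K hK
    rw [extz_mem _ _ hK]
    rfl

lemma theta_bij {n k : ℕ} (h : 2 * k ≤ n + 1) : Function.Bijective (theta n k) := by
  have hf : Module.finrank ℤ (ZZ n k) = Module.finrank ℤ (ksubsets n k → ℤ) := by
    rw [Module.finrank_pi_fintype]
    simp only [Module.finrank_fintype_fun_eq_card, Fintype.card_coe]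
    rw [card_ksubsets, ← PB_card_sum n k h, Finset.sum_range]
  let e : ZZ n k ≃ₗ[ℤ] (ksubsets n k → ℤ) := LinearEquiv.ofFinrankEq _ _ hf
  refine ⟨?_, theta_surj h⟩
  have : Function.Injective (e.toLinearMap.comp (theta n k)) :=
    OrzechProperty.injective_of_surjective_endomorphism _
      (e.surjective.comp (theta_surj h))
  exact Function.Injective.of_comp this

section Omega

variable {G : ℕ → Submodule ℤ FF} {n k : ℕ} {m : Fin (k + 1) → ℕ}

/-- the `(s,j)` component -/
noncomputable def comp (y : (s : Fin (k + 1)) → Module.Basis (Fin (m s)) ℤ (G s)) (s j : ℕ) :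
    WW k m →ₗ[ℤ] FF where
  toFun c := if h : s ≤ j ∧ j < k + 1 then
    ∑ a, c ⟨s, by omega⟩ a ⟨j - s, by simp only; omega⟩ • (y ⟨s, by omega⟩ a : FF) else 0
  map_add' c d := by
    by_cases h : s ≤ j ∧ j < k + 1
    · simp only [dif_pos h, Pi.add_apply, add_smul, Finset.sum_add_distrib]
    · simp only [dif_neg h, add_zero]
  map_smul' r c := by
    by_cases h : s ≤ j ∧ j < k + 1
    · simp only [dif_pos h, Pi.smul_apply, smul_assoc, Finset.smul_sum, RingHom.id_apply]
    · simp only [dif_neg h, smul_zero]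

variable (y : (s : Fin (k + 1)) → Module.Basis (Fin (m s)) ℤ (G s))

lemma comp_apply (s : Fin (k + 1)) (t : Fin (k - s + 1)) (c : WW k m) :
    comp y s (s + t) c = ∑ a, c s a t • (y s a : FF) := by
  change (if h : _ then _ else _) = _
  rw [dif_pos ⟨by omega, by omega⟩]
  refine Finset.sum_congr rfl fun a _ => ?_
  congr 2
  ext
  simp

lemma comp_apply_eq (s : Fin (k + 1)) (t : Fin (k - s + 1)) (c : WW k m) :
    comp y s (s + t) c = ((y s).equivFun.symm (fun a => c s a t) : G s) := by
  rw [comp_apply, Module.Basis.equivFun_symm_apply]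
  simp

lemma exists_st {s j : ℕ} (h : s ≤ j) (hj : j < k + 1) :
    ∃ (s' : Fin (k + 1)) (t : Fin (k - s' + 1)), s = s' ∧ j = s' + t :=
  ⟨⟨s, by omega⟩, ⟨j - s, by simp only; omega⟩, rfl, by simp only; omega⟩

lemma comp_mem {s j : ℕ} (h : s ≤ j) (hj : j < k + 1) (c : WW k m) : comp y s j c ∈ G s := by
  obtain ⟨s, t, rfl, rfl⟩ := exists_st h hj
  rw [comp_apply_eq]
  exact SetLike.coe_mem _

lemma comp_surj (A : ℕ → ℕ → FF) (hA : ∀ s j, s ≤ j → j < k + 1 → A s j ∈ G s) :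
    ∃ c : WW k m, ∀ s j, s ≤ j → j < k + 1 → comp y s j c = A s j := by
  refine ⟨fun s a t => (y s).equivFun ⟨A s (s + t), hA _ _ (by omega) (by omega)⟩ a, ?_⟩
  intro s j h hj
  obtain ⟨s, t, rfl, rfl⟩ := exists_st h hj
  rw [comp_apply_eq]
  erw [LinearEquiv.symm_apply_apply]

lemma comp_inj (c : WW k m) (hc : ∀ s j, s ≤ j → j < k + 1 → comp y s j c = 0) : c = 0 := by
  ext s a t
  have := hc s (s + t) (by omega) (by omega)
  rw [comp_apply_eq] at this
  have h2 : (y s).equivFun.symm (fun a => c s a t) = 0 := Subtype.ext this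
  rw [LinearEquiv.map_eq_zero_iff] at h2
  exact congrFun h2 a

/-- The decomposition map. -/
noncomputable def Omega (n : ℕ) : WW k m →ₗ[ℤ] ZZ n k :=
  LinearMap.pi fun j => (resB (PB n j)).comp (zet.comp
    (∑ s ∈ Finset.range (j + 1), comp y s j))

lemma Omega_apply (c : WW k m) (j : Fin (k + 1)) (J : PB n j) :
    Omega y n c j J = ∑ s ∈ Finset.range (j + 1), zet (comp y s j c) J := by
  simp only [Omega, LinearMap.pi_apply, LinearMap.comp_apply, LinearMap.sum_apply, map_sum]
  simp [resB]

lemma Omega_bij (hG : Good G n) (hn : 3 * k ≤ n + 1) : Function.Bijective (Omega y n) := by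
  constructor
  · rw [← LinearMap.ker_eq_bot, LinearMap.ker_eq_bot']
    intro c hc
    refine comp_inj y c fun s j hs hj => ?_
    obtain ⟨a', _, h⟩ := hG.inj' j (by omega) 0 (fun s => comp y s j c)
      (fun s hs => comp_mem y (by omega) hj c) (fun J hJ => by
        have h := congrFun (congrFun hc ⟨j, hj⟩) ⟨J, hJ⟩
        rw [Omega_apply] at h
        simp only at h
        rw [h]
        simp) s (by omega)
    simpa using h
  · intro z
    have : ∀ j : Fin (k + 1), ∃ a : ℕ → FF, (∀ s < (j : ℕ) + 1, a s ∈ G s) ∧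
        ∀ J ∈ PB n j, ∑ s ∈ Finset.range (j + 1), zet (a s) J = extz _ (z j) J := fun j =>
      hG.span j (by omega) _
    choose a ha haz using this
    obtain ⟨c, hc⟩ := comp_surj y (fun s j => if h : j < k + 1 then a ⟨j, h⟩ s else 0)
      (fun s j h hj => by
        rw [dif_pos hj]
        exact ha ⟨j, hj⟩ s (by simp only; omega))
    refine ⟨c, ?_⟩
    ext j J
    rw [Omega_apply, ← extz_coe _ (z j) J, ← haz j J J.2]
    refine Finset.sum_congr rfl fun s hs => ?_
    rw [hc s j (by have := Finset.mem_range.1 hs; omega) j.2, dif_pos j.2]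

/-- The componentwise action of the matrices `M_s(B)`. -/
noncomputable def actW (n : ℕ) (b : ℕ → ℤ) (c : WW k m) : WW k m :=
  fun s a => Matrix.vecMul (c s a) (MsB n k b s)

lemma comp_actW (b : ℕ → ℤ) (c : WW k m) {s j : ℕ} (h : s ≤ j) (hj : j < k + 1) :
    comp y s j (actW n b c) = ∑ i ∈ Finset.Ico s (j + 1), (((j - s).choose (i - s) : ℤ) *
      ∑ ℓ ∈ Finset.range (k + 1), b ℓ * f n k k ℓ i j) • comp y s i c := by
  obtain ⟨s, u, rfl, rfl⟩ := exists_st h hj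
  rw [Finset.sum_Ico_eq_sum_range]
  rw [Finset.sum_subset (Finset.range_mono (by omega : (s : ℕ) + u + 1 - s ≤ k - s + 1))]
  · rw [Finset.sum_range, comp_apply]
    simp only [comp_apply, actW, Matrix.vecMul, dotProduct, MsB, Matrix.of_apply, Finset.sum_smul,
      Finset.smul_sum]
    rw [Finset.sum_comm]
    refine Finset.sum_congr rfl fun t _ => Finset.sum_congr rfl fun a _ => ?_
    rw [smul_smul, Nat.add_sub_cancel_left, Nat.add_sub_cancel_left, mul_comm]
  · intro t _ ht
    have : (u : ℕ) < t := by
      simp only [Finset.mem_range] at ht; omega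
    rw [Nat.add_sub_cancel_left, Nat.add_sub_cancel_left, Nat.choose_eq_zero_of_lt this]
    simp

lemma intertwine (hG : Good G n) (hn : 3 * k ≤ n + 1) (b : ℕ → ℤ) (x x' : ksubsets n k → ℤ)
    (hx' : ∀ K ∈ ksubsets n k, extz _ x' K = actB n k b (extz _ x) K)
    (c : WW k m) (h : theta n k x = Omega y n c) : theta n k x' = Omega y n (actW n b c) := by
  ext ⟨j, hj⟩ ⟨J, hJ⟩
  rw [theta_apply, Omega_apply, inc_congr hx', inc_actB _ _ _ _ (mem_PB.1 hJ).1]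
  simp only
  have hJc := (mem_PB.1 hJ).2.1
  rw [hJc]
  have h1 : ∀ i ∈ Finset.range (j + 1), ∑ I ∈ J.powersetCard i, inc n k (extz _ x) I =
      ∑ s ∈ Finset.range (i + 1), ((j - s).choose (i - s) : ℤ) * zet (comp y s i c) J := by
    intro i hi
    have hi' := Finset.mem_range.1 hi
    have h2 : ∀ I ∈ J.powersetCard i, inc n k (extz _ x) I =
        ∑ s ∈ Finset.range (i + 1), zet (comp y s i c) I := by
      intro I hI
      obtain ⟨hIJ, hIc⟩ := Finset.mem_powersetCard.1 hI
      have hIP : I ∈ PB n i := hIc ▸ PB_sub hJ hIJ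
      have := congrFun (congrFun h ⟨i, by omega⟩) ⟨I, hIP⟩
      rwa [theta_apply, Omega_apply] at this
    rw [Finset.sum_congr rfl h2, Finset.sum_comm]
    refine Finset.sum_congr rfl fun s hs => ?_
    have hs' := Finset.mem_range.1 hs
    rw [sum_zet (hG.le s (by omega) (comp_mem y (by omega) (by omega) c)) (by omega), hJc]
  rw [Finset.sum_congr rfl fun i hi => by rw [h1 i hi]]
  simp only [Finset.mul_sum (s := Finset.range (_ + 1)) (f := fun s => _ * zet _ _)]
  rw [Finset.sum_comm' (t' := Finset.range (j + 1)) (s' := fun s => Finset.Ico s (j + 1))]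
  · refine Finset.sum_congr rfl fun s hs => ?_
    rw [comp_actW y b c (by have := Finset.mem_range.1 hs; omega) hj, map_sum, Finset.sum_apply]
    refine Finset.sum_congr rfl fun i hi => ?_
    rw [zet_smul]
    ring
  · intro i s
    simp only [Finset.mem_range, Finset.mem_Ico]
    omega

end Omega

/-- For any integer linear combination `B = Σ_ℓ b_ℓ A_{n,k,k,ℓ}` of the association
matrices of the Johnson scheme, `S(B) ≅ ⊕_{s=0}^{k} S(M_s(B))^{m_s}`. -/
theorem statement12 (n k : ℕ) (hn : 3 * k ≤ n + 1) (b : ℕ → ℤ) :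
    Nonempty (SmithGroup (∑ ℓ ∈ Finset.range (k + 1), b ℓ • interMat n k k ℓ) ≃+
      ((s : Fin (k + 1)) → Fin (msMult n s).toNat → SmithGroup (MsB n k b s))) := by
  obtain ⟨G, hG⟩ := exists_good n
  have hfin : ∀ s : Fin (k + 1), Module.Finite ℤ (G s) := fun s => G_finite (hG.le s (by omega))
  have hfree : ∀ s : Fin (k + 1), Module.Free ℤ (G s) := fun s => G_free (hG.le s (by omega))
  let m : Fin (k + 1) → ℕ := fun s => (msMult n s).toNat
  let y : (s : Fin (k + 1)) → Module.Basis (Fin (m s)) ℤ (G s) := fun s =>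
    Module.finBasisOfFinrankEq ℤ (G s) (G_rank hG (by omega))
  let eθ := LinearEquiv.ofBijective _ (theta_bij (n := n) (k := k) (by omega))
  let eΩ := LinearEquiv.ofBijective _ (Omega_bij y hG hn)
  let e : (ksubsets n k → ℤ) ≃ₗ[ℤ] WW k m := eθ.trans eΩ.symm
  set B := ∑ ℓ ∈ Finset.range (k + 1), b ℓ • interMat n k k ℓ with hB
  have he : ∀ x, e (Matrix.vecMul x B) = actW n b (e x) := by
    intro x
    have h1 : theta n k x = Omega y n (e x) := by
      change eθ x = eΩ (eΩ.symm (eθ x))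
      rw [LinearEquiv.apply_symm_apply]
    have h2 := intertwine y hG hn b x (Matrix.vecMul x B) (fun K hK => by
      rw [extz_mem _ _ hK, actB, ← Finset.sum_coe_sort]
      simp only [Matrix.vecMul, dotProduct, extz_coe, hB, Matrix.sum_apply, Matrix.smul_apply,
        interMat, Matrix.of_apply, smul_eq_mul]) (e x) h1
    change eΩ.symm (eθ (Matrix.vecMul x B)) = _
    rw [LinearEquiv.symm_apply_eq]
    exact h2
  have hrow : ∀ {ρ γ : Type} [Fintype ρ] (M : Matrix ρ γ ℤ) (z : γ → ℤ),
      z ∈ Submodule.span ℤ (Set.range fun r : ρ => M r) ↔ ∃ x, Matrix.vecMul x M = z := by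
    intro ρ γ _ M z
    rw [Submodule.mem_span_range_iff_exists_fun]
    refine exists_congr fun x => ?_
    rw [Matrix.vecMul_eq_sum]
  let q : (s : Fin (k + 1)) → Submodule ℤ (Fin (m s) → Fin (k - s + 1) → ℤ) := fun s =>
    Submodule.pi Set.univ fun _ => Submodule.span ℤ (Set.range fun r => MsB n k b s r)
  have hmap : (Submodule.span ℤ (Set.range fun r => B r)).map e.toLinearMap =
      Submodule.pi Set.univ q := by
    ext w
    rw [Submodule.mem_map]
    constructor
    · rintro ⟨z, hz, rfl⟩
      obtain ⟨x, rfl⟩ := (hrow B z).1 hz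
      intro s _ a _
      refine (hrow (MsB n k b s) _).2 ⟨e x s a, ?_⟩
      change _ = e (Matrix.vecMul x B) s a
      rw [he]
      rfl
    · intro hw
      have : ∀ (s : Fin (k + 1)) (a : Fin (m s)), ∃ x, Matrix.vecMul x (MsB n k b s) = w s a := fun s a =>
        (hrow _ _).1 (hw s trivial a trivial)
      choose c hc using this
      refine ⟨Matrix.vecMul (e.symm c) B, (hrow B _).2 ⟨_, rfl⟩, ?_⟩
      change e _ = _
      rw [he, LinearEquiv.apply_symm_apply]
      ext s a : 2
      exact hc s a
  exact ⟨((Submodule.Quotient.equiv _ _ e hmap).trans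
    ((Submodule.quotientPi q).trans (LinearEquiv.piCongrRight fun s =>
      Submodule.quotientPi _))).toAddEquiv⟩
end

section
/- Let n ≥ 5 be an integer and let L be the Laplacian matrix of the Johnson graph J(n,2): the square integer matrix indexed by the 2-element subsets of {1,…,n} with L(A,A) = 2(n−2), L(A,B) = −1 when |A ∩ B| = 1, and L(A,B) = 0 when A ∩ B = ∅. Then there is an isomorphism of abelian groups S(L) ≅ ℤ ⊕ (ℤ/2(n−1)ℤ)^{C(n,2)−2n+1} ⊕ (ℤ/2n(n−1)ℤ)^{n−2} ⊕ T, where T = ℤ/4ℤ if n is odd and T = ℤ/2ℤ ⊕ ℤ/2ℤ if n is even. -/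
open scoped Classical

/-- The Laplacian of the Johnson graph `J(n,2)`: diagonal entry `2(n−2)`, entry `−1`
between distinct 2-subsets meeting in one point, `0` between disjoint 2-subsets. -/
noncomputable def johnsonLap (n : ℕ) : Matrix ↥(ksubsets n 2) ↥(ksubsets n 2) ℤ :=
  Matrix.of fun A B =>
    if A = B then 2 * ((n : ℤ) - 2)
    else if ((A : Finset ℕ) ∩ (B : Finset ℕ)).card = 1 then -1
    else 0

theorem jl_sum_star {X : Type*} [AddCommGroup X] (S : Finset ℕ) (i : ℕ) (hi : i ∈ S) (g : Finset ℕ → X) :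
    ∑ f ∈ S.powersetCard 2, (if i ∈ f then g f else 0) = ∑ j ∈ S.erase i, g {i, j} := by
  rw [← Finset.sum_filter]
  symm
  refine Finset.sum_bij (fun j _ => ({i, j} : Finset ℕ)) ?_ ?_ ?_ ?_
  · intro j hj
    rw [Finset.mem_erase] at hj
    simp only [Finset.mem_filter, Finset.mem_powersetCard]
    refine ⟨⟨?_, Finset.card_pair (Ne.symm hj.1)⟩, by simp⟩
    intro x hx
    simp only [Finset.mem_insert, Finset.mem_singleton] at hx
    rcases hx with rfl | rfl
    · exact hi
    · exact hj.2
  · intro a ha b hb hab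
    rw [Finset.mem_erase] at ha hb
    have : a ∈ ({i, b} : Finset ℕ) := by
      have h2 : a ∈ ({i, a} : Finset ℕ) := by simp
      exact hab ▸ h2
    simp only [Finset.mem_insert, Finset.mem_singleton] at this
    tauto
  · intro f hf
    simp only [Finset.mem_filter, Finset.mem_powersetCard] at hf
    obtain ⟨⟨hfS, hc⟩, hif⟩ := hf
    obtain ⟨x, y, hxy, rfl⟩ := Finset.card_eq_two.1 hc
    simp only [Finset.mem_insert, Finset.mem_singleton] at hif
    rcases hif with rfl | rfl
    · exact ⟨y, by simp only [Finset.mem_erase]; exact ⟨hxy.symm, hfS (by simp)⟩, rfl⟩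
    · exact ⟨x, by simp only [Finset.mem_erase]; exact ⟨hxy, hfS (by simp)⟩, Finset.pair_comm _ _⟩
  · intros; rfl

theorem jl_double {X : Type*} [AddCommGroup X] (S : Finset ℕ) (g : Finset ℕ → X)
    (hg : ∀ i, g {i} = 0) :
    ∑ i ∈ S, ∑ j ∈ S, g {i, j} = (2 : ℤ) • ∑ f ∈ S.powersetCard 2, g f := by
  have h1 : ∀ i ∈ S, ∑ j ∈ S, g {i, j} = ∑ f ∈ S.powersetCard 2, (if i ∈ f then g f else 0) := by
    intro i hi
    rw [jl_sum_star S i hi, Finset.sum_erase]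
    simpa using hg i
  rw [Finset.sum_congr rfl h1, Finset.sum_comm, Finset.smul_sum]
  refine Finset.sum_congr rfl fun f hf => ?_
  rw [Finset.mem_powersetCard] at hf
  rw [← Finset.sum_filter, Finset.sum_const]
  have : S.filter (fun i => i ∈ f) = f := by
    ext x; simp only [Finset.mem_filter]
    exact ⟨fun h => h.2, fun h => ⟨hf.1 h, h⟩⟩
  rw [this, hf.2]
  module

theorem jl_ksub (n : ℕ) : ksubsets n 2 = (Finset.Icc 1 n).powersetCard 2 := by
  ext A; simp [ksubsets, Finset.mem_powersetCard]

theorem jl_mem {n a b : ℕ} (ha : a ∈ Finset.Icc 1 n) (hb : b ∈ Finset.Icc 1 n) (hab : a ≠ b) :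
    ({a, b} : Finset ℕ) ∈ ksubsets n 2 := by
  rw [jl_ksub, Finset.mem_powersetCard]
  refine ⟨?_, Finset.card_pair hab⟩
  intro x hx
  simp only [Finset.mem_insert, Finset.mem_singleton] at hx
  rcases hx with rfl | rfl <;> assumption

theorem jl_ex {n : ℕ} {e : Finset ℕ} (he : e ∈ ksubsets n 2) :
    ∃ a b, a ∈ Finset.Icc 1 n ∧ b ∈ Finset.Icc 1 n ∧ a ≠ b ∧ e = {a, b} := by
  rw [jl_ksub, Finset.mem_powersetCard] at he
  obtain ⟨x, y, hxy, rfl⟩ := Finset.card_eq_two.1 he.2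
  exact ⟨x, y, he.1 (by simp), he.1 (by simp), hxy, rfl⟩

theorem jl_entry (n : ℕ) (a b : ℕ) (hab : a ≠ b) (h : ({a, b} : Finset ℕ) ∈ ksubsets n 2)
    (f : ↥(ksubsets n 2)) :
    johnsonLap n ⟨{a, b}, h⟩ f = (if (f : Finset ℕ) = {a, b} then 2 * ((n : ℤ) - 1) else 0)
      - (if a ∈ (f : Finset ℕ) then 1 else 0) - (if b ∈ (f : Finset ℕ) then 1 else 0) := by
  obtain ⟨f, hf⟩ := f
  have hc : f.card = 2 := by
    rw [jl_ksub, Finset.mem_powersetCard] at hf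
    exact hf.2
  have hI : ((({a, b} : Finset ℕ) ∩ f).card : ℤ) =
      (if a ∈ f then 1 else 0) + (if b ∈ f then 1 else 0) := by
    rw [← Finset.filter_mem_eq_inter, Finset.card_filter, Finset.sum_pair hab]
    push_cast
    rfl
  have hfe : f = {a, b} ↔ (a ∈ f ∧ b ∈ f) := by
    constructor
    · rintro rfl; simp
    · rintro ⟨h1, h2⟩
      symm
      apply Finset.eq_of_subset_of_card_le
      · intro x hx
        simp only [Finset.mem_insert, Finset.mem_singleton] at hx
        rcases hx with rfl | rfl <;> assumption
      · rw [hc, Finset.card_pair hab]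
  have hne : ((⟨{a, b}, h⟩ : ↥(ksubsets n 2)) = ⟨f, hf⟩) ↔ (a ∈ f ∧ b ∈ f) := by
    rw [← hfe, Subtype.mk.injEq]; exact eq_comm
  simp only [johnsonLap, Matrix.of_apply, hne, hfe]
  by_cases h1 : a ∈ f <;> by_cases h2 : b ∈ f <;> simp only [h1, h2, if_true, if_false] at hI ⊢
  · simp; ring
  · have : (({a, b} : Finset ℕ) ∩ f).card = 1 := by omega
    simp [this]
  · have : (({a, b} : Finset ℕ) ∩ f).card = 1 := by omega
    simp [this]
  · have : (({a, b} : Finset ℕ) ∩ f).card = 0 := by omega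
    simp [this]

theorem jl_row {X : Type*} [AddCommGroup X] (n : ℕ) (a b : ℕ) (ha : a ∈ Finset.Icc 1 n)
    (hb : b ∈ Finset.Icc 1 n) (hab : a ≠ b) (g : Finset ℕ → X) :
    ∑ f : ↥(ksubsets n 2), johnsonLap n ⟨{a, b}, jl_mem ha hb hab⟩ f • g f =
      (2 * ((n : ℤ) - 1)) • g {a, b} - ∑ j ∈ (Finset.Icc 1 n).erase a, g {a, j}
        - ∑ j ∈ (Finset.Icc 1 n).erase b, g {b, j} := by
  simp only [jl_entry n a b hab]
  rw [Finset.sum_coe_sort (ksubsets n 2) (fun f : Finset ℕ =>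
    ((if f = {a, b} then 2 * ((n : ℤ) - 1) else 0)
      - (if a ∈ f then 1 else 0) - (if b ∈ f then 1 else 0)) • g f)]
  simp only [sub_smul, ite_smul, zero_smul, one_smul, Finset.sum_sub_distrib]
  rw [jl_ksub, jl_sum_star _ a ha, jl_sum_star _ b hb, Finset.sum_ite_eq' , if_pos]
  rw [← jl_ksub]; exact jl_mem ha hb hab

structure JLSol (n : ℕ) {X : Type*} [AddCommGroup X] (c : ℕ → X) (k : Finset ℕ → X) : Prop where
  c1 : c 1 = 0
  k1 : ∀ j, k {1, j} = 0
  kd : ∀ j, k {j} = 0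
  k23 : k {2, 3} = 0
  tor : ∀ e, (2 * ((n : ℤ) - 1)) • k e = 0
  kap : ∀ i ∈ Finset.Icc 1 n, ∑ j ∈ Finset.Icc 1 n, k {i, j} = (n : ℤ) • c i
  csum : (2 : ℤ) • ∑ i ∈ Finset.Icc 1 n, c i = 0

/-- vertex sums -/
theorem jl_vsum {X : Type*} [AddCommGroup X] (n : ℕ) (t : X) (c : ℕ → X)
    (k : Finset ℕ → X) (hkd : ∀ j, k {j} = 0) (i : ℕ) (hi : i ∈ Finset.Icc 1 n) :
    ∑ j ∈ (Finset.Icc 1 n).erase i, (t + (c i + c j) + k {i, j}) =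
      ((n : ℤ) - 1) • t + ((n : ℤ) - 2) • c i + ∑ j ∈ Finset.Icc 1 n, c j
        + ∑ j ∈ Finset.Icc 1 n, k {i, j} := by
  have h1 := Finset.sum_erase_add (Finset.Icc 1 n) (fun j => t + (c i + c j) + k {i, j}) hi
  have h2 : ∑ j ∈ Finset.Icc 1 n, (t + (c i + c j) + k {i, j}) =
     (n : ℤ) • t + ((n : ℤ) • c i + ∑ j ∈ Finset.Icc 1 n, c j) + ∑ j ∈ Finset.Icc 1 n, k {i, j} := by
    simp [Finset.sum_add_distrib]
  have h3 : k {i, i} = 0 := by simpa using hkd i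
  simp only [h2, h3] at h1
  linear_combination (norm := module) h1

theorem jl_hom {X : Type*} [AddCommGroup X] (n : ℕ) (t : X) (c : ℕ → X)
    (k : Finset ℕ → X) (h : JLSol n c k) :
    ∃ φ : SmithGroup (johnsonLap n) →+ X, ∀ e : ↥(ksubsets n 2),
      φ (Submodule.Quotient.mk (Pi.single e 1)) = t + ∑ i ∈ (e : Finset ℕ), c i + k e := by
  let g : Finset ℕ → X := fun e => t + ∑ i ∈ e, c i + k e
  let F : (↥(ksubsets n 2) → ℤ) →ₗ[ℤ] X :=
    Fintype.linearCombination ℤ (fun e : ↥(ksubsets n 2) => g e)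
  have hF : Submodule.span ℤ (Set.range fun r : ↥(ksubsets n 2) => johnsonLap n r) ≤ F.ker := by
    rw [Submodule.span_le]
    rintro _ ⟨⟨e, he⟩, rfl⟩
    obtain ⟨a, b, ha, hb, hab, rfl⟩ := jl_ex he
    simp only [SetLike.mem_coe, LinearMap.mem_ker]
    change F (johnsonLap n ⟨{a, b}, jl_mem ha hb hab⟩) = 0
    simp only [F, Fintype.linearCombination_apply]
    rw [jl_row n a b ha hb hab g]
    have hg : ∀ i, ∀ j ∈ (Finset.Icc 1 n).erase i, g {i, j} = t + (c i + c j) + k {i, j} := by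
      intro i j hj
      rw [Finset.mem_erase] at hj
      simp only [g]
      rw [Finset.sum_pair (Ne.symm hj.1)]
    rw [Finset.sum_congr rfl (hg a), Finset.sum_congr rfl (hg b), jl_vsum n t c k h.kd a ha,
      jl_vsum n t c k h.kd b hb, h.kap a ha, h.kap b hb]
    simp only [g]
    rw [Finset.sum_pair hab]
    have h1 := h.tor {a, b}
    have h2 := h.csum
    linear_combination (norm := module) h1 - h2
  refine ⟨(Submodule.liftQ _ F hF).toAddMonoidHom, fun e => ?_⟩
  change Submodule.liftQ _ F hF (Submodule.Quotient.mk (Pi.single e 1)) = _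
  rw [Submodule.liftQ_apply]
  simp [F, g, Fintype.linearCombination_apply_single]

theorem jl_transfer {G X : Type*} [AddCommGroup G] [AddCommGroup X] (n : ℕ) (hn : 5 ≤ n)
    (x : ↥(ksubsets n 2) → G) (φ : G →+ X) (t : G) (c : ℕ → G) (k : Finset ℕ → G)
    (t' : X) (c' : ℕ → X) (k' : Finset ℕ → X) (h : JLSol n c k) (h' : JLSol n c' k')
    (hx : ∀ e, x e = t + ∑ i ∈ (e : Finset ℕ), c i + k e)
    (hφ : ∀ e, φ (x e) = t' + ∑ i ∈ (e : Finset ℕ), c' i + k' e) :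
    φ t = t' ∧ (∀ i ∈ Finset.Icc 1 n, φ (c i) = c' i) ∧ ∀ e ∈ ksubsets n 2, φ (k e) = k' e := by
  have hp : ∀ a b, a ∈ Finset.Icc 1 n → b ∈ Finset.Icc 1 n → a ≠ b →
      φ t + (φ (c a) + φ (c b)) + φ (k {a, b}) = t' + (c' a + c' b) + k' {a, b} := by
    intro a b ha hb hab
    have h1 := hφ ⟨{a, b}, jl_mem ha hb hab⟩
    rw [hx] at h1
    simp only [Finset.sum_pair hab, map_add] at h1
    exact h1
  have m1 : 1 ∈ Finset.Icc 1 n := by simp; omega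
  have m2 : 2 ∈ Finset.Icc 1 n := by simp; omega
  have m3 : 3 ∈ Finset.Icc 1 n := by simp; omega
  have e12 := hp 1 2 m1 m2 (by decide)
  have e13 := hp 1 3 m1 m3 (by decide)
  have e23 := hp 2 3 m2 m3 (by decide)
  simp only [h.k1, h'.k1, h.k23, h'.k23, h.c1, h'.c1, map_zero] at e12 e13 e23
  have ht : φ t = t' := by linear_combination (norm := module) e12 + e13 - e23
  have hc : ∀ i ∈ Finset.Icc 1 n, φ (c i) = c' i := by
    intro i hi
    by_cases h1 : i = 1
    · rw [h1, h.c1, h'.c1, map_zero]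
    · have := hp 1 i m1 hi (Ne.symm h1)
      simp only [h.k1, h'.k1, h.c1, h'.c1, map_zero, ht] at this
      linear_combination (norm := module) this
  refine ⟨ht, hc, fun e he => ?_⟩
  obtain ⟨a, b, ha, hb, hab, rfl⟩ := jl_ex he
  have := hp a b ha hb hab
  rw [ht, hc a ha, hc b hb] at this
  exact add_left_cancel this

theorem jl_G (n : ℕ) (hn : 5 ≤ n) :
    ∃ (t : SmithGroup (johnsonLap n)) (c : ℕ → SmithGroup (johnsonLap n))
      (k : Finset ℕ → SmithGroup (johnsonLap n)), JLSol n c k ∧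
      ∀ e : ↥(ksubsets n 2), (Submodule.Quotient.mk (Pi.single e 1) : SmithGroup (johnsonLap n))
        = t + ∑ i ∈ (e : Finset ℕ), c i + k e := by
  set x : Finset ℕ → SmithGroup (johnsonLap n) := fun e =>
    if h : e ∈ ksubsets n 2 then Submodule.Quotient.mk (Pi.single ⟨e, h⟩ 1) else 0 with hx
  have hxe : ∀ e : ↥(ksubsets n 2),
      (Submodule.Quotient.mk (Pi.single e 1) : SmithGroup (johnsonLap n)) = x e := by
    intro e; simp [hx]
  have hrel : ∀ a b, a ∈ Finset.Icc 1 n → b ∈ Finset.Icc 1 n → a ≠ b →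
      (2 * ((n : ℤ) - 1)) • x {a, b} - ∑ j ∈ (Finset.Icc 1 n).erase a, x {a, j}
        - ∑ j ∈ (Finset.Icc 1 n).erase b, x {b, j} = 0 := by
    intro a b ha hb hab
    rw [← jl_row n a b ha hb hab x]
    have h0 : (Submodule.Quotient.mk (johnsonLap n ⟨{a, b}, jl_mem ha hb hab⟩) :
        SmithGroup (johnsonLap n)) = 0 := by
      rw [Submodule.Quotient.mk_eq_zero]
      exact Submodule.subset_span ⟨_, rfl⟩
    rw [← h0]
    conv_rhs => rw [pi_eq_sum_univ' (johnsonLap n ⟨{a, b}, jl_mem ha hb hab⟩)]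
    rw [← Submodule.mkQ_apply, map_sum]
    refine Finset.sum_congr rfl fun f _ => ?_
    rw [map_smul, Submodule.mkQ_apply, ← hxe]
  have m1 : 1 ∈ Finset.Icc 1 n := by simp; omega
  have m2 : 2 ∈ Finset.Icc 1 n := by simp; omega
  have m3 : 3 ∈ Finset.Icc 1 n := by simp; omega
  set t : SmithGroup (johnsonLap n) := x {1, 2} + x {1, 3} - x {2, 3} with ht
  set c : ℕ → SmithGroup (johnsonLap n) := fun i => if i = 1 then 0 else x {1, i} - t with hc
  set k : Finset ℕ → SmithGroup (johnsonLap n) := fun e =>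
    if e ∈ ksubsets n 2 ∧ 1 ∉ e then x e - ∑ i ∈ e, c i - t else 0 with hk
  have c1 : c 1 = 0 := by simp [hc]
  have k1 : ∀ j, k {1, j} = 0 := by intro j; simp [hk]
  have kd : ∀ j, k {j} = 0 := by
    intro j
    have : ({j} : Finset ℕ) ∉ ksubsets n 2 := by
      intro h
      rw [jl_ksub, Finset.mem_powersetCard] at h
      simpa using h.2
    simp only [hk, this, false_and, if_false]
  have hxk : ∀ e ∈ ksubsets n 2, x e = t + ∑ i ∈ e, c i + k e := by
    intro e he
    by_cases h1 : 1 ∈ e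
    · obtain ⟨a, b, ha, hb, hab, rfl⟩ := jl_ex he
      have key : ∀ b, b ≠ 1 → x {1, b} = t + ∑ i ∈ {1, b}, c i + k {1, b} := by
        intro b hb
        rw [k1, Finset.sum_pair (Ne.symm hb), c1]
        simp only [hc, if_neg hb]
        abel
      simp only [Finset.mem_insert, Finset.mem_singleton] at h1
      rcases h1 with rfl | rfl
      · exact key b (Ne.symm hab)
      · rw [Finset.pair_comm]; exact key a hab
    · simp only [hk, he, h1, not_false_eq_true, and_self, if_true]
      abel
  have hs : ∀ i ∈ Finset.Icc 1 n, ∑ j ∈ (Finset.Icc 1 n).erase i, x {i, j} =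
      ((n : ℤ) - 1) • t + ((n : ℤ) - 2) • c i + ∑ j ∈ Finset.Icc 1 n, c j
        + ∑ j ∈ Finset.Icc 1 n, k {i, j} := by
    intro i hi
    rw [← jl_vsum n t c k kd i hi]
    refine Finset.sum_congr rfl fun j hj => ?_
    rw [Finset.mem_erase] at hj
    rw [hxk _ (jl_mem hi hj.2 (Ne.symm hj.1)), Finset.sum_pair (Ne.symm hj.1)]
  have hrel2 : ∀ a b, a ∈ Finset.Icc 1 n → b ∈ Finset.Icc 1 n → a ≠ b →
      (2 * ((n : ℤ) - 1)) • (t + (c a + c b) + k {a, b}) =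
       (((n : ℤ) - 1) • t + ((n : ℤ) - 2) • c a + ∑ j ∈ Finset.Icc 1 n, c j
        + ∑ j ∈ Finset.Icc 1 n, k {a, j}) + (((n : ℤ) - 1) • t + ((n : ℤ) - 2) • c b
        + ∑ j ∈ Finset.Icc 1 n, c j + ∑ j ∈ Finset.Icc 1 n, k {b, j}) := by
    intro a b ha hb hab
    have := hrel a b ha hb hab
    rw [hs a ha, hs b hb, hxk _ (jl_mem ha hb hab), Finset.sum_pair hab] at this
    linear_combination (norm := module) this
  have k23 : k {2, 3} = 0 := by
    have h1 := hxk _ (jl_mem m2 m3 (by decide))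
    rw [Finset.sum_pair (by decide)] at h1
    have e2 : c 2 = x {1, 2} - t := by simp [hc]
    have e3 : c 3 = x {1, 3} - t := by simp [hc]
    rw [e2, e3] at h1
    linear_combination (norm := module) ht - h1
  have ks1 : ∑ j ∈ Finset.Icc 1 n, k {1, j} = 0 := Finset.sum_eq_zero fun j _ => k1 j
  have csum : (2 : ℤ) • ∑ i ∈ Finset.Icc 1 n, c i = 0 := by
    have a1 := hrel2 1 2 m1 m2 (by decide)
    have a2 := hrel2 1 3 m1 m3 (by decide)
    have a3 := hrel2 2 3 m2 m3 (by decide)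
    rw [ks1, c1, k1] at a1 a2
    rw [k23] at a3
    linear_combination (norm := module) a3 - a1 - a2
  have kap : ∀ i ∈ Finset.Icc 1 n, ∑ j ∈ Finset.Icc 1 n, k {i, j} = (n : ℤ) • c i := by
    intro i hi
    by_cases h1 : i = 1
    · rw [h1, ks1, c1, smul_zero]
    · have a1 := hrel2 1 i m1 hi (Ne.symm h1)
      rw [ks1, c1, k1] at a1
      linear_combination (norm := module) -a1 - csum
  refine ⟨t, c, k, ⟨c1, k1, kd, k23, ?_, kap, csum⟩, fun e => by rw [hxe, hxk e e.2]⟩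
  intro e
  by_cases he : e ∈ ksubsets n 2
  · obtain ⟨a, b, ha, hb, hab, rfl⟩ := jl_ex he
    have a1 := hrel2 a b ha hb hab
    rw [kap a ha, kap b hb] at a1
    linear_combination (norm := module) a1 + csum
  · simp only [hk, he, false_and, if_false, smul_zero]

/-- the free edges -/
def jlI (n : ℕ) : Finset (Finset ℕ) :=
  (((Finset.Icc 3 n).powersetCard 2).erase {3, 4}).erase {4, 5}

theorem jl_complete {X : Type*} [AddCommGroup X] (n : ℕ) (hn : 5 ≤ n) (c0 : ℕ → X)
    (k0 : Finset ℕ → X) (C W : X) (hc0 : ∀ i, (2 * (n : ℤ) * ((n : ℤ) - 1)) • c0 i = 0)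
    (hk0 : ∀ e, (2 * ((n : ℤ) - 1)) • k0 e = 0) (hC : (2 : ℤ) • C = 0)
    (hW : (2 : ℤ) • W = (n : ℤ) • C) :
    ∃ (c : ℕ → X) (k : Finset ℕ → X), JLSol n c k ∧ (∀ i ∈ Finset.Icc 3 n, c i = c0 i) ∧
      (∀ e ∈ jlI n, k e = k0 e) ∧ ∑ i ∈ Finset.Icc 1 n, c i = C ∧
      ∑ f ∈ (Finset.Icc 4 n).powersetCard 2, k f = W + (n : ℤ) • ∑ i ∈ Finset.Icc 4 n, c i := by
  have sg : ∀ m ≤ n, ∀ g : ℕ → X,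
      ∑ i ∈ Finset.Icc m n, g i = g m + ∑ i ∈ Finset.Icc (m + 1) n, g i := by
    intro m hm g
    have : Finset.Icc m n = insert m (Finset.Icc (m + 1) n) := by
      ext y; simp only [Finset.mem_insert, Finset.mem_Icc]; omega
    rw [this, Finset.sum_insert (by simp)]
  have s12 : ∀ g : ℕ → X, ∑ i ∈ Finset.Icc 1 n, g i = g 1 + g 2 + ∑ i ∈ Finset.Icc 3 n, g i := by
    intro g
    rw [sg 1 (by omega), sg 2 (by omega), add_assoc]
  have s3 : ∀ g : ℕ → X, ∑ i ∈ Finset.Icc 3 n, g i = g 3 + ∑ i ∈ Finset.Icc 4 n, g i :=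
    sg 3 (by omega)
  have s4 : ∀ g : ℕ → X, ∑ i ∈ Finset.Icc 4 n, g i = g 4 + ∑ i ∈ Finset.Icc 5 n, g i :=
    sg 4 (by omega)
  set c : ℕ → X := fun i => if i = 1 then 0 else if i = 2 then C - ∑ j ∈ Finset.Icc 3 n, c0 j
    else c0 i with hc
  set A : Finset ℕ → X := fun e => if e ∈ jlI n then k0 e else
    if e = {4, 5} then W + (n : ℤ) • ∑ i ∈ Finset.Icc 4 n, c0 i
      - ∑ f ∈ ((Finset.Icc 4 n).powersetCard 2).erase {4, 5}, k0 f
    else if e = {3, 4} then (n : ℤ) • c0 3 - ∑ j ∈ Finset.Icc 5 n, k0 {3, j} else 0 with hA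
  set k : Finset ℕ → X := fun e => if e ∈ ksubsets n 2 ∧ 1 ∉ e ∧ 2 ∈ e ∧ 3 ∉ e then
    (n : ℤ) • ∑ i ∈ e.erase 2, c0 i - ∑ i ∈ e.erase 2, ∑ j ∈ Finset.Icc 3 n, A {i, j} else A e
    with hk
  have hAtor : ∀ e, (2 * ((n : ℤ) - 1)) • A e = 0 := by
    have hsum : ∀ s : Finset ℕ, (2 * ((n : ℤ) - 1)) • (n : ℤ) • ∑ i ∈ s, c0 i = 0 := by
      intro s
      rw [Finset.smul_sum, Finset.smul_sum]
      refine Finset.sum_eq_zero fun i _ => ?_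
      linear_combination (norm := module) hc0 i
    have hWt : (2 * ((n : ℤ) - 1)) • W = 0 := by
      obtain ⟨r, hr⟩ := Int.even_mul_pred_self (n : ℤ)
      have : (2 * ((n : ℤ) - 1)) • W = ((n : ℤ) * ((n : ℤ) - 1)) • C := by
        linear_combination (norm := module) ((n : ℤ) - 1) • hW
      rw [this, hr]
      linear_combination (norm := module) r • hC
    intro e
    simp only [hA]
    split_ifs
    · exact hk0 e
    · rw [smul_sub, smul_add, hWt, hsum, Finset.smul_sum]
      simp [hk0]
    · have := hsum {3}
      simp only [Finset.sum_singleton] at this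
      rw [smul_sub, this, Finset.smul_sum]
      simp [hk0]
    · simp
  have hktor : ∀ e, (2 * ((n : ℤ) - 1)) • k e = 0 := by
    intro e
    simp only [hk]
    split_ifs
    · rw [smul_sub, Finset.smul_sum, Finset.smul_sum, Finset.smul_sum]
      have h1 : ∀ i, (2 * ((n : ℤ) - 1)) • (n : ℤ) • c0 i = 0 := by
        intro i
        linear_combination (norm := module) hc0 i
      have h2 : ∀ i, (2 * ((n : ℤ) - 1)) • ∑ j ∈ Finset.Icc 3 n, A {i, j} = 0 := by
        intro i
        rw [Finset.smul_sum]
        exact Finset.sum_eq_zero fun j _ => hAtor _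
      rw [Finset.sum_eq_zero fun i _ => h1 i, Finset.sum_eq_zero fun i _ => h2 i, sub_zero]
    · exact hAtor e
  have hIsub : ∀ e, e ∈ jlI n ↔ e ≠ {4, 5} ∧ e ≠ {3, 4} ∧ e ⊆ Finset.Icc 3 n ∧ e.card = 2 := by
    intro e
    simp only [jlI, Finset.mem_erase, Finset.mem_powersetCard]
  have hA0 : ∀ e, ¬ (e ⊆ Finset.Icc 3 n ∧ e.card = 2) → A e = 0 := by
    intro e he
    have h1 : e ∉ jlI n := fun h => he ((hIsub e).1 h).2.2
    have h2 : e ≠ {4, 5} := by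
      rintro rfl
      apply he
      refine ⟨?_, by decide⟩
      intro y hy
      simp only [Finset.mem_insert, Finset.mem_singleton, Finset.mem_Icc] at hy ⊢
      omega
    have h3 : e ≠ {3, 4} := by
      rintro rfl
      apply he
      refine ⟨?_, by decide⟩
      intro y hy
      simp only [Finset.mem_insert, Finset.mem_singleton, Finset.mem_Icc] at hy ⊢
      omega
    simp only [hA, h1, h2, h3, if_false]
  have hAlow : ∀ e, ∀ i ∈ e, i < 3 → A e = 0 := by
    intro e i hi hlt
    refine hA0 e fun h => ?_
    have := Finset.mem_Icc.1 (h.1 hi)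
    omega
  have hAd : ∀ j, A {j} = 0 := fun j => hA0 _ fun h => by simp at h
  have h45I : ({4, 5} : Finset ℕ) ∉ jlI n := fun h => ((hIsub _).1 h).1 rfl
  have h34I : ({3, 4} : Finset ℕ) ∉ jlI n := fun h => ((hIsub _).1 h).2.1 rfl
  have hA45 : A {4, 5} = W + (n : ℤ) • ∑ i ∈ Finset.Icc 4 n, c0 i
      - ∑ f ∈ ((Finset.Icc 4 n).powersetCard 2).erase {4, 5}, k0 f := by
    simp only [hA, h45I, if_false, if_true]
  have hA34 : A {3, 4} = (n : ℤ) • c0 3 - ∑ j ∈ Finset.Icc 5 n, k0 {3, j} := by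
    have : ({3, 4} : Finset ℕ) ≠ {4, 5} := by decide
    simp only [hA, h34I, this, if_false, if_true]
  have hAI : ∀ e ∈ jlI n, A e = k0 e := by
    intro e he; simp only [hA, he, if_true]
  have hAW : ∑ f ∈ (Finset.Icc 4 n).powersetCard 2, A f
      = W + (n : ℤ) • ∑ i ∈ Finset.Icc 4 n, c0 i := by
    have hmem : ({4, 5} : Finset ℕ) ∈ (Finset.Icc 4 n).powersetCard 2 := by
      rw [Finset.mem_powersetCard]
      refine ⟨?_, by decide⟩
      intro y hy
      simp only [Finset.mem_insert, Finset.mem_singleton, Finset.mem_Icc] at hy ⊢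
      omega
    rw [← Finset.sum_erase_add _ _ hmem, hA45, Finset.sum_congr rfl (g := k0)]
    · abel
    · intro f hf
      rw [Finset.mem_erase, Finset.mem_powersetCard] at hf
      refine hAI f ((hIsub f).2 ⟨hf.1, ?_, ?_, hf.2.2⟩)
      · rintro rfl
        have := hf.2.1 (show 3 ∈ ({3, 4} : Finset ℕ) by simp)
        simp at this
      · exact hf.2.1.trans (Finset.Icc_subset_Icc_left (by omega))
  have hA3 : ∑ j ∈ Finset.Icc 3 n, A {3, j} = (n : ℤ) • c0 3 := by
    have h33 : A {3, 3} = 0 := by simpa using hAd 3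
    have h5 : ∑ j ∈ Finset.Icc 5 n, A {3, j} = ∑ j ∈ Finset.Icc 5 n, k0 {3, j} := by
      refine Finset.sum_congr rfl fun j hj => ?_
      rw [Finset.mem_Icc] at hj
      refine hAI _ ((hIsub _).2 ⟨?_, ?_, ?_, Finset.card_pair (by omega)⟩)
      · intro h
        have : 3 ∈ ({4, 5} : Finset ℕ) := h ▸ (by simp : 3 ∈ ({3, j} : Finset ℕ))
        simp at this
      · intro h
        have : j ∈ ({3, 4} : Finset ℕ) := h ▸ (by simp : j ∈ ({3, j} : Finset ℕ))
        simp at this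
        omega
      · intro y hy
        simp only [Finset.mem_insert, Finset.mem_singleton, Finset.mem_Icc] at hy ⊢
        omega
    rw [s3, s4, h33, hA34, h5]
    abel
  have hkA : ∀ e, 2 ∉ e → k e = A e := by
    intro e he; simp only [hk, he, false_and, and_false, if_false]
  have hk2 : ∀ i ∈ Finset.Icc 4 n, k {2, i} =
      (n : ℤ) • c0 i - ∑ j ∈ Finset.Icc 3 n, A {i, j} := by
    intro i hi
    rw [Finset.mem_Icc] at hi
    have h1 : ({2, i} : Finset ℕ) ∈ ksubsets n 2 :=
      jl_mem (by simp; omega) (by simp; omega) (by omega)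
    have h2 : 1 ∉ ({2, i} : Finset ℕ) := by simp; omega
    have h3 : 3 ∉ ({2, i} : Finset ℕ) := by simp; omega
    have h4 : 2 ∈ ({2, i} : Finset ℕ) := by simp
    have h5 : ({2, i} : Finset ℕ).erase 2 = {i} :=
      Finset.erase_insert (by simp; omega)
    simp only [hk, h1, h2, h3, h4, h5, not_false_eq_true, and_self, if_true, Finset.sum_singleton]
  have k1 : ∀ j, k {1, j} = 0 := by
    intro j
    have h1 : 1 ∈ ({1, j} : Finset ℕ) := by simp
    simp only [hk, h1, not_true_eq_false, false_and, and_false, if_false]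
    exact hAlow _ 1 h1 (by omega)
  have k23 : k {2, 3} = 0 := by
    have h1 : 3 ∈ ({2, 3} : Finset ℕ) := by simp
    simp only [hk, h1, not_true_eq_false, and_false, if_false]
    exact hAlow _ 2 (by simp) (by omega)
  have kd : ∀ j, k {j} = 0 := by
    intro j
    have : ({j} : Finset ℕ) ∉ ksubsets n 2 := by
      intro h
      rw [jl_ksub, Finset.mem_powersetCard] at h
      simpa using h.2
    simp only [hk, this, false_and, if_false]
    exact hAd j
  have c1 : c 1 = 0 := by simp [hc]
  have c2 : c 2 = C - ∑ j ∈ Finset.Icc 3 n, c0 j := by simp [hc]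
  have c3 : ∀ i ∈ Finset.Icc 3 n, c i = c0 i := by
    intro i hi
    rw [Finset.mem_Icc] at hi
    simp only [hc]
    rw [if_neg (by omega), if_neg (by omega)]
  have csum : ∑ i ∈ Finset.Icc 1 n, c i = C := by
    rw [s12, c1, c2, Finset.sum_congr rfl c3]; abel
  have hk3 : ∀ i ∈ Finset.Icc 3 n, ∑ j ∈ Finset.Icc 3 n, k {i, j} =
      ∑ j ∈ Finset.Icc 3 n, A {i, j} := by
    intro i hi
    refine Finset.sum_congr rfl fun j hj => hkA _ ?_
    rw [Finset.mem_Icc] at hi hj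
    simp; omega
  refine ⟨c, k, ⟨c1, k1, kd, k23, hktor, ?_, by rw [csum, hC]⟩, c3, ?_, csum, ?_⟩
  · intro i hi
    rw [Finset.mem_Icc] at hi
    obtain rfl | rfl | rfl | h4 : i = 1 ∨ i = 2 ∨ i = 3 ∨ 4 ≤ i := by omega
    · rw [c1, smul_zero]
      exact Finset.sum_eq_zero fun j _ => k1 j
    · have e21 : k {2, 1} = 0 := by rw [Finset.pair_comm]; exact k1 2
      have e22 : k {2, 2} = 0 := by simpa using kd 2
      have hS := jl_double (Finset.Icc 4 n) A hAd
      have hD : ∑ i ∈ Finset.Icc 4 n, ∑ j ∈ Finset.Icc 3 n, A {i, j} =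
          (n : ℤ) • c0 3 + (2 : ℤ) • (W + (n : ℤ) • ∑ i ∈ Finset.Icc 4 n, c0 i) := by
        rw [← hAW, ← hS]
        have : ∑ i ∈ Finset.Icc 4 n, A {i, 3} = (n : ℤ) • c0 3 := by
          rw [← hA3, s3]
          have h33 : A {3, 3} = 0 := by simpa using hAd 3
          rw [h33, zero_add]
          exact Finset.sum_congr rfl fun j _ => by rw [Finset.pair_comm]
        rw [← this, ← Finset.sum_add_distrib]
        exact Finset.sum_congr rfl fun j _ => s3 _
      rw [s12, e21, e22, s3, k23, Finset.sum_congr rfl hk2, Finset.sum_sub_distrib,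
        ← Finset.smul_sum, hD, c2, s3]
      linear_combination (norm := module) -hW - (n : ℤ) • hC
    · have e31 : k {3, 1} = 0 := by rw [Finset.pair_comm]; exact k1 3
      have e32 : k {3, 2} = 0 := by rw [Finset.pair_comm]; exact k23
      rw [s12, e31, e32, hk3 3 (by simp; omega), hA3, c3 3 (by simp; omega)]
      abel
    · have e1 : k {i, 1} = 0 := by rw [Finset.pair_comm]; exact k1 i
      have e2 : k {i, 2} = (n : ℤ) • c0 i - ∑ j ∈ Finset.Icc 3 n, A {i, j} := by
        rw [Finset.pair_comm]; exact hk2 i (by simp; omega)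
      rw [s12, e1, e2, hk3 i (by simp; omega), c3 i (by simp; omega)]
      abel
  · intro e he
    rw [hkA, hAI e he]
    intro h2
    have := Finset.mem_Icc.1 (((hIsub e).1 he).2.2.1 h2)
    omega
  · rw [Finset.sum_congr rfl (g := A), hAW]
    · congr 2
      refine Finset.sum_congr rfl fun i hi => (c3 i ?_).symm
      exact Finset.Icc_subset_Icc_left (by omega) hi
    · intro f hf
      refine hkA f fun h2 => ?_
      rw [Finset.mem_powersetCard] at hf
      have := Finset.mem_Icc.1 (hf.1 h2)
      omega

theorem jl_card (n : ℕ) (hn : 5 ≤ n) : (jlI n).card = n.choose 2 - 2 * n + 1 := by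
  obtain ⟨p, rfl⟩ : ∃ p, n = p + 5 := ⟨n - 5, by omega⟩
  have h1 : ({3, 4} : Finset ℕ) ∈ (Finset.Icc 3 (p + 5)).powersetCard 2 := by
    rw [Finset.mem_powersetCard]
    refine ⟨?_, by decide⟩
    intro y hy
    simp only [Finset.mem_insert, Finset.mem_singleton, Finset.mem_Icc] at hy ⊢
    omega
  have h2 : ({4, 5} : Finset ℕ) ∈ ((Finset.Icc 3 (p + 5)).powersetCard 2).erase {3, 4} := by
    rw [Finset.mem_erase, Finset.mem_powersetCard]
    refine ⟨by decide, ?_, by decide⟩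
    intro y hy
    simp only [Finset.mem_insert, Finset.mem_singleton, Finset.mem_Icc] at hy ⊢
    omega
  rw [jlI, Finset.card_erase_of_mem h2, Finset.card_erase_of_mem h1, Finset.card_powersetCard,
    Nat.card_Icc]
  have e1 : (p + 5).choose 2 = (p + 4) + ((p + 3) + (p + 3).choose 2) := by
    rw [Nat.choose_succ_succ' (p + 4) 1, Nat.choose_succ_succ' (p + 3) 1]
    simp
  have e2 : (p + 3).choose 2 = (p + 2) + ((p + 1) + (p + 1).choose 2) := by
    rw [Nat.choose_succ_succ' (p + 2) 1, Nat.choose_succ_succ' (p + 1) 1]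
    simp
  have e3 : p + 5 + 1 - 3 = p + 3 := by omega
  rw [e3]
  omega

theorem jl_pi {Y : Type*} [AddCommGroup Y] (a N : ℕ) (f : Fin a → Y) (hf : ∀ i, (N : ℤ) • f i = 0) :
    ∃ P : (Fin a → ZMod N) →+ Y, ∀ i, P (Pi.single i 1) = f i := by
  let l : Fin a → (ZMod N →+ Y) := fun i =>
    ZMod.lift N ⟨(zmultiplesHom Y (f i)), by simpa using hf i⟩
  have hl : ∀ i, l i 1 = f i := by
    intro i
    have := ZMod.lift_coe N (⟨(zmultiplesHom Y (f i)), by simpa using hf i⟩ :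
      {g : ℤ →+ Y // g N = 0}) 1
    simpa [l] using this
  refine ⟨∑ i, (l i).comp (Pi.evalAddMonoidHom (fun _ : Fin a => ZMod N) i), fun i => ?_⟩
  rw [AddMonoidHom.finsetSum_apply, Finset.sum_eq_single i]
  · simp [hl]
  · intro j _ hj
    simp [Pi.single_eq_of_ne hj]
  · simp

theorem jl_pi_ext {Y : Type*} [AddCommGroup Y] (a N : ℕ) (P Q : (Fin a → ZMod N) →+ Y)
    (h : ∀ i, P (Pi.single i 1) = Q (Pi.single i 1)) : P = Q := by
  have key : ∀ (R : (Fin a → ZMod N) →+ Y) (v : Fin a → ZMod N),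
      R v = ∑ i, ((v i).cast : ℤ) • R (Pi.single i 1) := by
    intro R v
    have hv : v = ∑ i, ((v i).cast : ℤ) • (Pi.single i (1 : ZMod N) : Fin a → ZMod N) := by
      funext j
      rw [Finset.sum_apply, Finset.sum_eq_single j]
      · rw [Pi.smul_apply, Pi.single_eq_same, zsmul_eq_mul, mul_one, ZMod.intCast_zmod_cast]
      · intro i _ hij
        rw [Pi.smul_apply, Pi.single_eq_of_ne hij.symm, smul_zero]
      · simp
    conv_lhs => rw [hv]
    rw [map_sum]
    exact Finset.sum_congr rfl fun i _ => by rw [map_zsmul]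
  refine DFunLike.ext _ _ fun v => ?_
  rw [key P, key Q]
  exact Finset.sum_congr rfl fun i _ => by rw [h i]

theorem jl_main (n : ℕ) (hn : 5 ≤ n) (T : Type) [AddCommGroup T] (C W : T)
    (hC : (2 : ℤ) • C = 0) (hW : (2 : ℤ) • W = (n : ℤ) • C)
    (hgen : ∀ (Y : Type) [AddCommGroup Y] (C' W' : Y), (2 : ℤ) • C' = 0 →
      (2 : ℤ) • W' = (n : ℤ) • C' → ∃ f : T →+ Y, f C = C' ∧ f W = W')
    (hcl : AddSubgroup.closure {C, W} = ⊤) :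
    Nonempty (SmithGroup (johnsonLap n) ≃+
      (ℤ × (Fin (n.choose 2 - 2 * n + 1) → ZMod (2 * (n - 1))) ×
        (Fin (n - 2) → ZMod (2 * n * (n - 1))) × T)) := by
  set a := n.choose 2 - 2 * n + 1 with ha
  have hN1 : ((2 * (n - 1) : ℕ) : ℤ) = 2 * ((n : ℤ) - 1) := by
    push_cast [Nat.cast_sub (show 1 ≤ n by omega)]; ring
  have hN2 : ((2 * n * (n - 1) : ℕ) : ℤ) = 2 * (n : ℤ) * ((n : ℤ) - 1) := by
    push_cast [Nat.cast_sub (show 1 ≤ n by omega)]; ring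
  let eI : ↥(jlI n) ≃ Fin a := Finset.equivFinOfCardEq (jl_card n hn)
  let eJ : ↥(Finset.Icc 3 n) ≃ Fin (n - 2) := Finset.equivFinOfCardEq (by simp)
  obtain ⟨t, c, k, hs, hx⟩ := jl_G n hn
  let t' : (ℤ × (Fin a → ZMod (2 * (n - 1))) × (Fin (n - 2) → ZMod (2 * n * (n - 1))) × T) := (1, 0, 0, 0)
  let k0 : Finset ℕ → (ℤ × (Fin a → ZMod (2 * (n - 1))) × (Fin (n - 2) → ZMod (2 * n * (n - 1))) × T) := fun e => if h : e ∈ jlI n then (0, Pi.single (eI ⟨e, h⟩) 1, 0, 0) else 0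
  let c0 : ℕ → (ℤ × (Fin a → ZMod (2 * (n - 1))) × (Fin (n - 2) → ZMod (2 * n * (n - 1))) × T) := fun i => if h : i ∈ Finset.Icc 3 n then
    (0, 0, Pi.single (eJ ⟨i, h⟩) 1, 0) else 0
  let C' : (ℤ × (Fin a → ZMod (2 * (n - 1))) × (Fin (n - 2) → ZMod (2 * n * (n - 1))) × T) := (0, 0, 0, C)
  let W' : (ℤ × (Fin a → ZMod (2 * (n - 1))) × (Fin (n - 2) → ZMod (2 * n * (n - 1))) × T) := (0, 0, 0, W)
  have hk0 : ∀ e, (2 * ((n : ℤ) - 1)) • k0 e = 0 := by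
    intro e
    rw [← hN1]
    simp only [k0]
    split_ifs
    · refine Prod.ext (by simp) (Prod.ext ?_ (Prod.ext (by simp) (by simp)))
      funext j
      change (((2 * (n - 1) : ℕ)) : ℤ) • ((Pi.single (eI ⟨e, by assumption⟩) 1 : Fin _ → ZMod (2 * (n - 1))) j) = 0
      rw [zsmul_eq_mul, Int.cast_natCast, ZMod.natCast_self, zero_mul]
    · simp
  have hc0 : ∀ i, (2 * (n : ℤ) * ((n : ℤ) - 1)) • c0 i = 0 := by
    intro e
    rw [← hN2]
    simp only [c0]
    split_ifs
    · refine Prod.ext (by simp) (Prod.ext (by simp) (Prod.ext ?_ (by simp)))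
      funext j
      change (((2 * n * (n - 1) : ℕ)) : ℤ) • ((Pi.single (eJ ⟨e, by assumption⟩) 1 : Fin _ → ZMod (2 * n * (n - 1))) j) = 0
      rw [zsmul_eq_mul, Int.cast_natCast, ZMod.natCast_self, zero_mul]
    · simp
  have hC' : (2 : ℤ) • C' = 0 := by simp only [C', Prod.smul_mk, hC, smul_zero]; rfl
  have hW' : (2 : ℤ) • W' = (n : ℤ) • C' := by simp only [C', W', Prod.smul_mk, hW, smul_zero]
  obtain ⟨c', k', hs', hcc, hkk, hCC, hWW⟩ := jl_complete n hn c0 k0 C' W' hc0 hk0 hC' hW'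
  obtain ⟨φ, hφ⟩ := jl_hom n t' c' k' hs'
  obtain ⟨ht, hc, hk⟩ := jl_transfer n hn _ φ t c k t' c' k' hs hs' hx hφ
  have hIk : ∀ e ∈ jlI n, e ∈ ksubsets n 2 := by
    intro e he
    simp only [jlI, Finset.mem_erase, Finset.mem_powersetCard] at he
    rw [jl_ksub, Finset.mem_powersetCard]
    exact ⟨he.2.2.1.trans (Finset.Icc_subset_Icc_left (by omega)), he.2.2.2⟩
  have h4k : ∀ e ∈ (Finset.Icc 4 n).powersetCard 2, e ∈ ksubsets n 2 := by
    intro e he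
    rw [Finset.mem_powersetCard] at he
    rw [jl_ksub, Finset.mem_powersetCard]
    exact ⟨he.1.trans (Finset.Icc_subset_Icc_left (by omega)), he.2⟩
  have h31 : ∀ i ∈ Finset.Icc 3 n, i ∈ Finset.Icc 1 n :=
    fun i hi => Finset.Icc_subset_Icc_left (by omega) hi
  have h41 : ∀ i ∈ Finset.Icc 4 n, i ∈ Finset.Icc 1 n :=
    fun i hi => Finset.Icc_subset_Icc_left (by omega) hi
  set CG := ∑ i ∈ Finset.Icc 1 n, c i with hCG
  set WG := ∑ f ∈ (Finset.Icc 4 n).powersetCard 2, k f - (n : ℤ) • ∑ i ∈ Finset.Icc 4 n, c i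
    with hWG
  have hnc : ∀ i ∈ Finset.Icc 1 n, (2 * (n : ℤ) * ((n : ℤ) - 1)) • c i = 0 := by
    intro i hi
    have : (2 * (n : ℤ) * ((n : ℤ) - 1)) • c i = (2 * ((n : ℤ) - 1)) • ((n : ℤ) • c i) := by module
    rw [this, ← hs.kap i hi, Finset.smul_sum]
    exact Finset.sum_eq_zero fun j _ => hs.tor _
  have sg : ∀ m ≤ n, ∀ g : ℕ → SmithGroup (johnsonLap n),
      ∑ i ∈ Finset.Icc m n, g i = g m + ∑ i ∈ Finset.Icc (m + 1) n, g i := by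
    intro m hm g
    have : Finset.Icc m n = insert m (Finset.Icc (m + 1) n) := by
      ext y; simp only [Finset.mem_insert, Finset.mem_Icc]; omega
    rw [this, Finset.sum_insert (by simp)]
  have hWGrel : (2 : ℤ) • WG = (n : ℤ) • CG := by
    have hd := jl_double (Finset.Icc 4 n) k hs.kd
    have m2 := hs.kap 2 (by simp; omega)
    have m3 := hs.kap 3 (by simp; omega)
    have e21 : k {2, 1} = 0 := by rw [Finset.pair_comm]; exact hs.k1 2
    have e31 : k {3, 1} = 0 := by rw [Finset.pair_comm]; exact hs.k1 3
    have e22 : k {2, 2} = 0 := by simpa using hs.kd 2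
    have e33 : k {3, 3} = 0 := by simpa using hs.kd 3
    have e32 : k {3, 2} = 0 := by rw [Finset.pair_comm]; exact hs.k23
    have e23 := hs.k23
    rw [sg 1 (by omega), sg 2 (by omega), sg 3 (by omega)] at m2 m3
    norm_num only [e21, e22, e23, zero_add] at m2
    norm_num only [e31, e32, e33, zero_add] at m3
    have hsum : ∑ i ∈ Finset.Icc 4 n, ∑ j ∈ Finset.Icc 1 n, k {i, j} =
        (n : ℤ) • ∑ i ∈ Finset.Icc 4 n, c i := by
      rw [Finset.smul_sum]
      exact Finset.sum_congr rfl fun i hi => hs.kap i (h41 i hi)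
    have hsum2 : ∑ i ∈ Finset.Icc 4 n, ∑ j ∈ Finset.Icc 1 n, k {i, j} =
        ∑ i ∈ Finset.Icc 4 n, k {2, i} + ∑ i ∈ Finset.Icc 4 n, k {3, i}
        + ∑ i ∈ Finset.Icc 4 n, ∑ j ∈ Finset.Icc 4 n, k {i, j} := by
      rw [← Finset.sum_add_distrib, ← Finset.sum_add_distrib]
      refine Finset.sum_congr rfl fun i _ => ?_
      rw [sg 1 (by omega), sg 2 (by omega), sg 3 (by omega), Finset.pair_comm i 1, hs.k1,
        Finset.pair_comm i 2, Finset.pair_comm i 3]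
      abel
    have hCe : CG = c 2 + c 3 + ∑ i ∈ Finset.Icc 4 n, c i := by
      rw [hCG, sg 1 (by omega), sg 2 (by omega), sg 3 (by omega), hs.c1]
      abel
    rw [m2, m3, hd, hsum] at hsum2
    have hcs := hs.csum
    rw [← hCG] at hcs
    rw [hWG]
    linear_combination (norm := module) -hsum2 + (n : ℤ) • hCe - (n : ℤ) • hcs
  obtain ⟨P2, hP2⟩ := jl_pi a (2 * (n - 1)) (fun i => k (eI.symm i)) (fun i => by
    rw [hN1]; exact hs.tor _)
  obtain ⟨P3, hP3⟩ := jl_pi (n - 2) (2 * n * (n - 1)) (fun i => c (eJ.symm i)) (fun i => by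
    rw [hN2]; exact hnc _ (h31 _ (eJ.symm i).2))
  obtain ⟨P4, hP4C, hP4W⟩ := hgen _ CG WG hs.csum hWGrel
  let ψ : (ℤ × (Fin a → ZMod (2 * (n - 1))) × (Fin (n - 2) → ZMod (2 * n * (n - 1))) × T) →+ SmithGroup (johnsonLap n) :=
    (zmultiplesHom _ t).coprod (P2.coprod (P3.coprod P4))
  have hψ1 : ∀ z, ψ (z, 0, 0, 0) = z • t := by intro z; simp [ψ]
  have hψ2 : ∀ z, ψ (0, z, 0, 0) = P2 z := by intro z; simp [ψ]
  have hψ3 : ∀ z, ψ (0, 0, z, 0) = P3 z := by intro z; simp [ψ]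
  have hψ4 : ∀ z, ψ (0, 0, 0, z) = P4 z := by intro z; simp [ψ]
  have hφC : φ CG = C' := by
    rw [hCG, map_sum, ← hCC]
    exact Finset.sum_congr rfl hc
  have hφW : φ WG = W' := by
    rw [hWG, map_sub, map_zsmul, map_sum, map_sum, Finset.sum_congr rfl fun f hf => hk f (h4k f hf),
      Finset.sum_congr rfl fun i hi => hc i (h41 i hi), hWW]
    abel
  have q2 : ∀ z, φ (P2 z) = (0, z, 0, 0) := by
    have : φ.comp P2 = (AddMonoidHom.inr _ _).comp (AddMonoidHom.inl _ _) := by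
      refine jl_pi_ext _ _ _ _ fun i => ?_
      have hm := (eI.symm i).2
      simp only [AddMonoidHom.comp_apply, hP2]
      rw [hk _ (hIk _ hm), hkk _ hm]
      simp [k0]
    intro z
    exact DFunLike.congr_fun this z
  have q3 : ∀ z, φ (P3 z) = (0, 0, z, 0) := by
    have : φ.comp P3 = (AddMonoidHom.inr _ _).comp
        ((AddMonoidHom.inr _ _).comp (AddMonoidHom.inl _ _)) := by
      refine jl_pi_ext _ _ _ _ fun i => ?_
      have hm := (eJ.symm i).2
      simp only [AddMonoidHom.comp_apply, hP3]
      rw [hc _ (h31 _ hm), hcc _ hm]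
      simp only [c0, hm, dif_pos]
      simp
    intro z
    exact DFunLike.congr_fun this z
  have q4 : ∀ z, φ (P4 z) = (0, 0, 0, z) := by
    have : φ.comp P4 = (AddMonoidHom.inr _ _).comp
        ((AddMonoidHom.inr _ _).comp (AddMonoidHom.inr _ _)) := by
      refine AddMonoidHom.eq_of_eqOn_dense hcl ?_
      rintro z (rfl | rfl)
      · simp only [AddMonoidHom.comp_apply, hP4C, hφC]; rfl
      · simp only [AddMonoidHom.comp_apply, hP4W, hφW]; rfl
    intro z
    exact DFunLike.congr_fun this z
  have hleft : ∀ z, φ (ψ z) = z := by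
    rintro ⟨z1, z2, z3, z4⟩
    have : ψ (z1, z2, z3, z4) = z1 • t + (P2 z2 + (P3 z3 + P4 z4)) := by simp [ψ]
    rw [this, map_add, map_add, map_add, map_zsmul, ht, q2, q3, q4]
    simp [t']
  have r1 : t ∈ ψ.range := ⟨(1, 0, 0, 0), by rw [hψ1, one_smul]⟩
  have rc3 : ∀ i ∈ Finset.Icc 3 n, c i ∈ ψ.range := by
    intro i hi
    refine ⟨(0, 0, Pi.single (eJ ⟨i, hi⟩) 1, 0), ?_⟩
    rw [hψ3, hP3, Equiv.symm_apply_apply]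
  have rI : ∀ e ∈ jlI n, k e ∈ ψ.range := by
    intro e he
    refine ⟨(0, Pi.single (eI ⟨e, he⟩) 1, 0, 0), ?_⟩
    rw [hψ2, hP2, Equiv.symm_apply_apply]
  have rC : CG ∈ ψ.range := ⟨(0, 0, 0, C), by rw [hψ4, hP4C]⟩
  have rW : WG ∈ ψ.range := ⟨(0, 0, 0, W), by rw [hψ4, hP4W]⟩
  have rc : ∀ i ∈ Finset.Icc 1 n, c i ∈ ψ.range := by
    intro i hi
    rw [Finset.mem_Icc] at hi
    obtain rfl | rfl | h3 : i = 1 ∨ i = 2 ∨ 3 ≤ i := by omega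
    · rw [hs.c1]; exact zero_mem _
    · have : c 2 = CG - ∑ i ∈ Finset.Icc 3 n, c i := by
        rw [hCG, sg 1 (by omega), sg 2 (by omega), hs.c1]; abel
      rw [this]
      exact sub_mem rC (sum_mem rc3)
    · exact rc3 i (by simp; omega)
  have r45 : k {4, 5} ∈ ψ.range := by
    have hmem : ({4, 5} : Finset ℕ) ∈ (Finset.Icc 4 n).powersetCard 2 := by
      rw [Finset.mem_powersetCard]
      refine ⟨?_, by decide⟩
      intro y hy
      simp only [Finset.mem_insert, Finset.mem_singleton, Finset.mem_Icc] at hy ⊢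
      omega
    have : k {4, 5} = WG + (n : ℤ) • ∑ i ∈ Finset.Icc 4 n, c i
        - ∑ f ∈ ((Finset.Icc 4 n).powersetCard 2).erase {4, 5}, k f := by
      rw [hWG, ← Finset.sum_erase_add _ _ hmem]; abel
    rw [this]
    refine sub_mem (add_mem rW (zsmul_mem (sum_mem fun i hi => rc i (h41 i hi)) _))
      (sum_mem fun f hf => rI f ?_)
    rw [Finset.mem_erase, Finset.mem_powersetCard] at hf
    simp only [jlI, Finset.mem_erase, Finset.mem_powersetCard]
    refine ⟨hf.1, ?_, hf.2.1.trans (Finset.Icc_subset_Icc_left (by omega)), hf.2.2⟩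
    rintro rfl
    have := hf.2.1 (show 3 ∈ ({3, 4} : Finset ℕ) by simp)
    simp at this
  have r34' : ∀ e, e ⊆ Finset.Icc 3 n → e.card = 2 → e ≠ {3, 4} → k e ∈ ψ.range := by
    intro e h1 h2 h3
    by_cases h4 : e = {4, 5}
    · rw [h4]; exact r45
    · refine rI e ?_
      simp only [jlI, Finset.mem_erase, Finset.mem_powersetCard]
      exact ⟨h4, h3, h1, h2⟩
  have r34 : k {3, 4} ∈ ψ.range := by
    have m3 := hs.kap 3 (by simp; omega)
    have e31 : k {3, 1} = 0 := by rw [Finset.pair_comm]; exact hs.k1 3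
    have e33 : k {3, 3} = 0 := by simpa using hs.kd 3
    have e32 : k {3, 2} = 0 := by rw [Finset.pair_comm]; exact hs.k23
    rw [sg 1 (by omega), sg 2 (by omega), sg 3 (by omega), sg 4 (by omega)] at m3
    norm_num only [e31, e32, e33, zero_add] at m3
    rw [eq_sub_of_add_eq m3]
    refine sub_mem (zsmul_mem (rc 3 (by simp; omega)) _) (sum_mem fun j hj => ?_)
    rw [Finset.mem_Icc] at hj
    refine r34' _ ?_ (Finset.card_pair (by omega)) ?_
    · intro y hy
      simp only [Finset.mem_insert, Finset.mem_singleton, Finset.mem_Icc] at hy ⊢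
      omega
    · intro h
      have : j ∈ ({3, 4} : Finset ℕ) := h ▸ (by simp : j ∈ ({3, j} : Finset ℕ))
      simp at this
      omega
  have r3 : ∀ i ∈ Finset.Icc 3 n, ∀ j ∈ Finset.Icc 3 n, k {i, j} ∈ ψ.range := by
    intro i hi j hj
    by_cases hij : i = j
    · subst hij
      have : k {i, i} = 0 := by simpa using hs.kd i
      rw [this]; exact zero_mem _
    · by_cases h : ({i, j} : Finset ℕ) = {3, 4}
      · rw [h]; exact r34
      · refine r34' _ ?_ (Finset.card_pair hij) h
        intro y hy
        simp only [Finset.mem_insert, Finset.mem_singleton] at hy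
        rcases hy with rfl | rfl <;> assumption
  have r2 : ∀ i ∈ Finset.Icc 3 n, k {i, 2} ∈ ψ.range := by
    intro i hi
    have m := hs.kap i (h31 i hi)
    rw [sg 1 (by omega), sg 2 (by omega), Finset.pair_comm i 1, hs.k1, zero_add] at m
    rw [eq_sub_of_add_eq m]
    exact sub_mem (zsmul_mem (rc i (h31 i hi)) _) (sum_mem fun j hj => r3 i hi j hj)
  have rk : ∀ i ∈ Finset.Icc 1 n, ∀ j ∈ Finset.Icc 1 n, k {i, j} ∈ ψ.range := by
    intro i hi j hj
    rw [Finset.mem_Icc] at hi hj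
    by_cases hi1 : i = 1
    · rw [hi1, hs.k1]; exact zero_mem _
    by_cases hj1 : j = 1
    · rw [hj1, Finset.pair_comm, hs.k1]; exact zero_mem _
    by_cases hi2 : i = 2
    · by_cases hj2 : j = 2
      · have : k {2, 2} = 0 := by simpa using hs.kd 2
        rw [hi2, hj2, this]; exact zero_mem _
      · rw [hi2, Finset.pair_comm]; exact r2 j (by simp; omega)
    · by_cases hj2 : j = 2
      · rw [hj2]; exact r2 i (by simp; omega)
      · exact r3 i (by simp; omega) j (by simp; omega)
  have hsurj : Function.Surjective ψ := by
    intro y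
    change y ∈ ψ.range
    obtain ⟨v, rfl⟩ := Submodule.Quotient.mk_surjective _ y
    rw [pi_eq_sum_univ' v, ← Submodule.mkQ_apply, map_sum]
    refine sum_mem fun f _ => ?_
    rw [map_smul]
    refine zsmul_mem ?_ _
    have := hx f
    rw [← Submodule.mkQ_apply] at this
    have h2 : t + ∑ i ∈ (f : Finset ℕ), c i + k f ∈ ψ.range := by
      obtain ⟨p, q, hp, hq, hpq, hf⟩ := jl_ex f.2
      rw [hf, Finset.sum_pair hpq]
      exact add_mem (add_mem r1 (add_mem (rc p hp) (rc q hq))) (rk p hp q hq)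
    rw [← this] at h2
    exact h2
  exact ⟨(AddEquiv.ofBijective ψ ⟨(Function.LeftInverse.injective hleft), hsurj⟩).symm⟩

theorem statement15 (n : ℕ) (hn : 5 ≤ n) :
    (Odd n → Nonempty (SmithGroup (johnsonLap n) ≃+
      (ℤ × (Fin (n.choose 2 - 2 * n + 1) → ZMod (2 * (n - 1))) ×
        (Fin (n - 2) → ZMod (2 * n * (n - 1))) × ZMod 4))) ∧
    (Even n → Nonempty (SmithGroup (johnsonLap n) ≃+
      (ℤ × (Fin (n.choose 2 - 2 * n + 1) → ZMod (2 * (n - 1))) ×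
        (Fin (n - 2) → ZMod (2 * n * (n - 1))) × (ZMod 2 × ZMod 2)))) := by
  have hlift : ∀ (N : ℕ) (Y : Type) [AddCommGroup Y] (y : Y), (N : ℤ) • y = 0 →
      ∃ f : ZMod N →+ Y, f 1 = y := by
    intro N Y _ y hy
    refine ⟨ZMod.lift N ⟨zmultiplesHom Y y, by simpa using hy⟩, ?_⟩
    have := ZMod.lift_coe N (⟨(zmultiplesHom Y y), by simpa using hy⟩ :
      {g : ℤ →+ Y // g N = 0}) 1
    simpa using this
  constructor
  · rintro ⟨r, hr⟩
    refine jl_main n hn (ZMod 4) 2 1 (by decide) ?_ ?_ ?_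
    · rw [hr]
      push_cast
      have h4 : (4 : ZMod 4) = 0 := by decide
      simp only [zsmul_eq_mul]
      push_cast
      linear_combination (-(r : ZMod 4)) * h4
    · intro Y _ C' W' h1 h2
      have h3 : (2 : ℤ) • W' = C' := by
        rw [h2, hr]
        push_cast
        linear_combination (norm := module) (r : ℤ) • h1
      obtain ⟨f, hf⟩ := hlift 4 Y W' (by
        push_cast
        linear_combination (norm := module) (2 : ℤ) • h3 + h1)
      refine ⟨f, ?_, hf⟩
      have : (2 : ZMod 4) = 1 + 1 := by decide
      rw [this, map_add, hf, ← h3]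
      module
    · rw [eq_top_iff]
      intro z _
      have h1 : (1 : ZMod 4) ∈ AddSubgroup.closure {(2 : ZMod 4), 1} :=
        AddSubgroup.subset_closure (by simp)
      have : z = z.val • (1 : ZMod 4) := by simp
      rw [this]
      exact nsmul_mem h1 _
  · rintro ⟨r, hr⟩
    refine jl_main n hn (ZMod 2 × ZMod 2) (1, 0) (0, 1) (by decide) ?_ ?_ ?_
    · have h1 : (2 : ℤ) • ((1, 0) : ZMod 2 × ZMod 2) = 0 := by decide
      have h2 : (2 : ℤ) • ((0, 1) : ZMod 2 × ZMod 2) = 0 := by decide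
      rw [h2, hr]
      push_cast
      linear_combination (norm := module) -(r : ℤ) • h1
    · intro Y _ C' W' h1 h2
      have h3 : (2 : ℤ) • W' = 0 := by
        rw [h2, hr]
        push_cast
        linear_combination (norm := module) (r : ℤ) • h1
      obtain ⟨f, hf⟩ := hlift 2 Y C' (by exact_mod_cast h1)
      obtain ⟨g, hg⟩ := hlift 2 Y W' (by exact_mod_cast h3)
      exact ⟨f.coprod g, by simp [hf], by simp [hg]⟩
    · rw [eq_top_iff]
      rintro ⟨z, w⟩ _
      have h1 : ((1, 0) : ZMod 2 × ZMod 2) ∈ AddSubgroup.closure {((1, 0) : ZMod 2 × ZMod 2), (0, 1)} :=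
        AddSubgroup.subset_closure (by simp)
      have h2 : ((0, 1) : ZMod 2 × ZMod 2) ∈ AddSubgroup.closure {((1, 0) : ZMod 2 × ZMod 2), (0, 1)} :=
        AddSubgroup.subset_closure (by simp)
      have : (z, w) = z.val • ((1, 0) : ZMod 2 × ZMod 2) + w.val • ((0, 1) : ZMod 2 × ZMod 2) := by
        simp
      rw [this]
      exact add_mem (nsmul_mem h1 _) (nsmul_mem h2 _)
end

section
/- Let n ≥ 5 be an integer. Then the Smith group of the adjacency matrix of the Johnson graph J(n,2) satisfies S(A_{n,2,2,1}) ≅ (ℤ/2ℤ)^{(n−2)(n−3)/2} ⊕ ℤ/(n−2)(n−4)ℤ ⊕ (ℤ/2(n−4)ℤ)^{n−2}. -/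
open scoped Classical

open Finset in
/-- Double counting over pairs. -/
theorem pair_sum {A : Type*} [AddCommGroup A] (V : Finset ℕ) (F : ℕ → Finset ℕ → A) :
    ∑ S ∈ V.powersetCard 2, ∑ i ∈ S, F i S = ∑ i ∈ V, ∑ j ∈ V.erase i, F i {i, j} := by
  rw [Finset.sum_sigma', Finset.sum_sigma']
  symm
  refine Finset.sum_bij (fun x _ => ⟨{x.1, x.2}, x.1⟩) ?_ ?_ ?_ ?_
  · rintro ⟨i, j⟩ h
    simp only [Finset.mem_sigma, Finset.mem_erase, Finset.mem_powersetCard] at h ⊢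
    refine ⟨⟨?_, Finset.card_pair (Ne.symm h.2.1)⟩, by simp⟩
    intro x hx
    simp only [Finset.mem_insert, Finset.mem_singleton] at hx
    rcases hx with rfl | rfl
    · exact h.1
    · exact h.2.2
  · rintro ⟨i, j⟩ h ⟨i', j'⟩ h' heq
    simp only [Finset.mem_sigma, Finset.mem_erase] at h h'
    simp only [Sigma.mk.injEq, heq_eq_eq] at heq
    obtain ⟨h1, rfl⟩ := heq
    have : j ∈ ({i, j'} : Finset ℕ) := by rw [← h1]; simp
    simp only [Finset.mem_insert, Finset.mem_singleton] at this
    have : j = j' := by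
      rcases this with h2 | h2
      · exact absurd h2 h.2.1
      · exact h2
    rw [this]
  · rintro ⟨S, i⟩ h
    simp only [Finset.mem_sigma, Finset.mem_powersetCard] at h
    obtain ⟨⟨hS, hc⟩, hi⟩ := h
    obtain ⟨a, b, hab, rfl⟩ := Finset.card_eq_two.1 hc
    have ha : a ∈ V := hS (by simp)
    have hb : b ∈ V := hS (by simp)
    simp only [Finset.mem_insert, Finset.mem_singleton] at hi
    rcases hi with rfl | rfl
    · exact ⟨⟨i, b⟩, by simp [ha, hb, hab.symm], rfl⟩
    · exact ⟨⟨i, a⟩, by simp [ha, hb, hab], by simp [Finset.pair_comm]⟩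
  · rintro ⟨i, j⟩ _
    rfl

/-- Sum of `g` over the edges at `i`. -/
def sig {A : Type*} [AddCommGroup A] (n : ℕ) (g : Finset ℕ → A) (i : ℕ) : A :=
  ∑ j ∈ (Finset.Icc 1 n).erase i, g {i, j}

/-- The relations of the Smith group. -/
def JRel {A : Type*} [AddCommGroup A] (n : ℕ) (g : Finset ℕ → A) : Prop :=
  ∀ i ∈ Finset.Icc 1 n, ∀ j ∈ Finset.Icc 1 n, i ≠ j →
    (2 : ℤ) • g {i, j} = sig n g i + sig n g j

theorem erase_one (n : ℕ) (hn : 5 ≤ n) :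
    (Finset.Icc 1 n).erase 1 = insert 2 (Finset.Icc 3 n) := by
  ext x; simp; omega

theorem erase_two (n : ℕ) (hn : 5 ≤ n) :
    (Finset.Icc 1 n).erase 2 = insert 1 (Finset.Icc 3 n) := by
  ext x; simp; omega

theorem erase_w (n i : ℕ) (hn : 5 ≤ n) (hi : i ∈ Finset.Icc 3 n) :
    (Finset.Icc 1 n).erase i = insert 1 (insert 2 ((Finset.Icc 3 n).erase i)) := by
  ext x; simp at hi ⊢; omega

section
variable {A : Type*} [AddCommGroup A] (n : ℕ) (hn : 5 ≤ n) (g : Finset ℕ → A)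

theorem sig_one (hn : 5 ≤ n) : sig n g 1 = g {1, 2} + ∑ i ∈ Finset.Icc 3 n, g {1, i} := by
  rw [sig, erase_one n hn, Finset.sum_insert (by simp)]

theorem sig_two (hn : 5 ≤ n) : sig n g 2 = g {1, 2} + ∑ i ∈ Finset.Icc 3 n, g {2, i} := by
  rw [sig, erase_two n hn, Finset.sum_insert (by simp), Finset.pair_comm]

theorem sig_w (hn : 5 ≤ n) (i : ℕ) (hi : i ∈ Finset.Icc 3 n) :
    sig n g i = g {1, i} + g {2, i} + ∑ j ∈ (Finset.Icc 3 n).erase i, g {i, j} := by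
  rw [sig, erase_w n i hn hi, Finset.sum_insert (by simp), Finset.sum_insert (by simp),
    Finset.pair_comm, Finset.pair_comm i 2, add_assoc]

/-- Coordinates. -/
def yy (i : ℕ) : A := g {1, i} - sig n g 1

open scoped Classical in
noncomputable def ff (S : Finset ℕ) : A := g S - ∑ i ∈ S, g {1, i} + sig n g 1

theorem cardW (n : ℕ) (hn : 5 ≤ n) : ((Finset.Icc 3 n).card : ℤ) = n - 2 := by
  rw [Nat.card_Icc]; omega

theorem cardWe (n i : ℕ) (hn : 5 ≤ n) (hi : i ∈ Finset.Icc 3 n) :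
    (((Finset.Icc 3 n).erase i).card : ℤ) = n - 3 := by
  rw [Finset.card_erase_of_mem hi, Nat.card_Icc]; omega

theorem sum_const_z (s : Finset ℕ) (c : A) : ∑ _i ∈ s, c = (s.card : ℤ) • c := by
  simp

theorem two_ff (h : JRel n g) (i j : ℕ) (hi : i ∈ Finset.Icc 3 n) (hj : j ∈ Finset.Icc 3 n)
    (hij : i ≠ j) : (2 : ℤ) • ff n g {i, j} = 0 := by
  simp only [Finset.mem_Icc] at hi hj
  have h1 := h i (by simp; omega) j (by simp; omega) hij
  have h2 := h 1 (by simp; omega) i (by simp; omega) (by omega)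
  have h3 := h 1 (by simp; omega) j (by simp; omega) (by omega)
  rw [ff, Finset.sum_pair hij]
  linear_combination (norm := module) h1 - h2 - h3

theorem key (h : JRel n g) (i : ℕ) (hi : i ∈ Finset.Icc 1 n) :
    ((n : ℤ) - 4) • sig n g i + ∑ j ∈ Finset.Icc 1 n, sig n g j = 0 := by
  have h1 : ∑ j ∈ (Finset.Icc 1 n).erase i, (2 : ℤ) • g {i, j}
      = ∑ j ∈ (Finset.Icc 1 n).erase i, (sig n g i + sig n g j) := by
    apply Finset.sum_congr rfl
    intro j hj
    rw [Finset.mem_erase] at hj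
    exact h i hi j hj.2 hj.1.symm
  rw [← Finset.smul_sum, Finset.sum_add_distrib, sum_const_z] at h1
  have h2 : ∑ j ∈ (Finset.Icc 1 n).erase i, g {i, j} = sig n g i := rfl
  have h3 := Finset.add_sum_erase _ (fun j => sig n g j) hi
  have h4 : (((Finset.Icc 1 n).erase i).card : ℤ) = n - 1 := by
    simp only [Finset.mem_Icc] at hi
    rw [Finset.card_erase_of_mem (by simp; omega), Nat.card_Icc]; omega
  rw [h2, h4] at h1
  try simp only at h3
  linear_combination (norm := module) - h1 - h3

theorem yy_ord (h : JRel n g) (i : ℕ) (hi : i ∈ Finset.Icc 3 n) :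
    (2 * ((n : ℤ) - 4)) • yy n g i = 0 := by
  simp only [Finset.mem_Icc] at hi
  have h1 := key n g h 1 (by simp; omega)
  have h2 := key n g h i (by simp; omega)
  have h3 := h 1 (by simp; omega) i (by simp; omega) (by omega)
  rw [yy]
  linear_combination (norm := module) ((n : ℤ) - 4) • h3 + h2 - h1

theorem s_ord (hn : 5 ≤ n) (h : JRel n g) :
    (((n : ℤ) - 2) * ((n : ℤ) - 4)) • sig n g 1 = 0 := by
  have h1 := key n g h 1 (by simp; omega)
  have h2 := pair_sum (Finset.Icc 1 n) (fun _ S => g S)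
  have h3 := pair_sum (Finset.Icc 1 n) (fun i _ => sig n g i)
  have h4 : ∑ S ∈ (Finset.Icc 1 n).powersetCard 2, ∑ i ∈ S, g S
      = ∑ S ∈ (Finset.Icc 1 n).powersetCard 2, ∑ i ∈ S, sig n g i := by
    apply Finset.sum_congr rfl
    intro S hS
    rw [Finset.mem_powersetCard] at hS
    obtain ⟨hS, hc⟩ := hS
    obtain ⟨a, b, hab, rfl⟩ := Finset.card_eq_two.1 hc
    rw [Finset.sum_pair hab, Finset.sum_pair hab,
      ← h a (hS (by simp)) b (hS (by simp)) hab, two_smul]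
  have h5 : ∑ i ∈ Finset.Icc 1 n, ∑ j ∈ (Finset.Icc 1 n).erase i, g {i, j}
      = ∑ i ∈ Finset.Icc 1 n, sig n g i := rfl
  have h6 : ∑ i ∈ Finset.Icc 1 n, ∑ j ∈ (Finset.Icc 1 n).erase i, sig n g i
      = ((n : ℤ) - 1) • ∑ i ∈ Finset.Icc 1 n, sig n g i := by
    rw [Finset.smul_sum]
    apply Finset.sum_congr rfl
    intro i hi
    have h4 : (((Finset.Icc 1 n).erase i).card : ℤ) = n - 1 := by
      simp only [Finset.mem_Icc] at hi
      rw [Finset.card_erase_of_mem (by simp; omega), Nat.card_Icc]; omega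
    rw [sum_const_z, h4]
  try simp only at h2 h3
  rw [h2, h3, h5, h6] at h4
  linear_combination (norm := module) ((n : ℤ) - 2) • h1 + h4

theorem form_ab (hn : 5 ≤ n) :
    g {1, 2} = -(∑ i ∈ Finset.Icc 3 n, yy n g i) - ((n : ℤ) - 3) • sig n g 1 := by
  have h1 := sig_one n g hn
  simp only [yy]
  rw [Finset.sum_sub_distrib, sum_const_z, cardW n hn]
  linear_combination (norm := module) -h1

theorem form_b (hn : 5 ≤ n) (h : JRel n g) (i : ℕ) (hi : i ∈ Finset.Icc 3 n) :
    g {2, i} = -(∑ j ∈ (Finset.Icc 3 n).erase i, ff n g {i, j}) - ((n : ℤ) - 5) • yy n g i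
      -(∑ i ∈ Finset.Icc 3 n, yy n g i) - ((n : ℤ) - 3) • sig n g 1 := by
  have h0 := form_ab n g hn
  have h1 := sig_one n g hn
  have h2 := sig_w n g hn i hi
  have h3 : ∑ j ∈ (Finset.Icc 3 n).erase i, ff n g {i, j} =
      ∑ j ∈ (Finset.Icc 3 n).erase i, (g {i, j} - (g {1, i} + g {1, j}) + sig n g 1) := by
    apply Finset.sum_congr rfl
    intro j hj
    rw [Finset.mem_erase] at hj
    rw [ff, Finset.sum_pair hj.1.symm]
  rw [Finset.sum_add_distrib, Finset.sum_sub_distrib, Finset.sum_add_distrib, sum_const_z,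
    sum_const_z, cardWe n i hn hi] at h3
  have h4 := Finset.add_sum_erase _ (fun j => g {1, j}) hi
  have h5 := h 1 (by simp; omega) i (by simp at hi ⊢; omega) (by simp at hi; omega)
  try simp only at h4
  rw [yy]
  linear_combination (norm := module) h0 + h3 - h2 + h1 - h4 - h5

end

section
variable {A : Type*} [AddCommGroup A] (n : ℕ) (f : Finset ℕ → A) (s : A) (y : ℕ → A)

/-- Reconstruct edges from the coordinates. -/
noncomputable def eps (S : Finset ℕ) : A :=
  if 1 ∈ S then
    if 2 ∈ S then -(∑ i ∈ Finset.Icc 3 n, y i) - ((n : ℤ) - 3) • s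
    else (∑ i ∈ S.erase 1, y i) + s
  else if 2 ∈ S then
    (∑ i ∈ S.erase 2, (-(∑ j ∈ (Finset.Icc 3 n).erase i, f {i, j}) - ((n : ℤ) - 5) • y i))
      -(∑ i ∈ Finset.Icc 3 n, y i) - ((n : ℤ) - 3) • s
  else f S + ∑ i ∈ S, y i + s

theorem eps_ab : eps n f s y {1, 2} = -(∑ i ∈ Finset.Icc 3 n, y i) - ((n : ℤ) - 3) • s := by
  simp [eps]

theorem eps_a (i : ℕ) (hi : i ∈ Finset.Icc 3 n) : eps n f s y {1, i} = y i + s := by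
  simp only [Finset.mem_Icc] at hi
  have h : ({1, i} : Finset ℕ).erase 1 = {i} := by ext x; simp; omega
  have h2 : 2 ∉ ({1, i} : Finset ℕ) := by simp; omega
  rw [eps, if_pos (by simp), if_neg h2, h, Finset.sum_singleton]

theorem eps_b (i : ℕ) (hi : i ∈ Finset.Icc 3 n) : eps n f s y {2, i} =
    -(∑ j ∈ (Finset.Icc 3 n).erase i, f {i, j}) - ((n : ℤ) - 5) • y i
      -(∑ i ∈ Finset.Icc 3 n, y i) - ((n : ℤ) - 3) • s := by
  simp only [Finset.mem_Icc] at hi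
  have h : ({2, i} : Finset ℕ).erase 2 = {i} := by ext x; simp; omega
  have h2 : 1 ∉ ({2, i} : Finset ℕ) := by simp; omega
  rw [eps, if_neg h2, if_pos (by simp), h, Finset.sum_singleton]

theorem eps_w (i j : ℕ) (hi : i ∈ Finset.Icc 3 n) (hj : j ∈ Finset.Icc 3 n) (hij : i ≠ j) :
    eps n f s y {i, j} = f {i, j} + (y i + y j) + s := by
  simp only [Finset.mem_Icc] at hi hj
  rw [eps, if_neg (by simp; omega), if_neg (by simp; omega), Finset.sum_pair hij]

theorem eps_sig_one (hn : 5 ≤ n) : sig n (eps n f s y) 1 = s := by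
  rw [sig_one n _ hn, eps_ab, Finset.sum_congr rfl (fun i hi => eps_a n f s y i hi),
    Finset.sum_add_distrib, sum_const_z, cardW n hn]
  module

theorem eps_sig_w (hn : 5 ≤ n) (i : ℕ) (hi : i ∈ Finset.Icc 3 n) :
    sig n (eps n f s y) i = (2 : ℤ) • y i + s := by
  have h : ∑ j ∈ (Finset.Icc 3 n).erase i, eps n f s y {i, j}
      = ∑ j ∈ (Finset.Icc 3 n).erase i, (f {i, j} + (y i + y j) + s) := by
    apply Finset.sum_congr rfl
    intro j hj
    rw [Finset.mem_erase] at hj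
    exact eps_w n f s y i j hi hj.2 hj.1.symm
  have h4 := Finset.add_sum_erase _ (fun j => y j) hi
  rw [sig_w n _ hn i hi, eps_a n f s y i hi, eps_b n f s y i hi, h,
    Finset.sum_add_distrib, Finset.sum_add_distrib, Finset.sum_add_distrib, sum_const_z,
    sum_const_z, cardWe n i hn hi]
  try simp only at h4
  linear_combination (norm := module) h4

theorem eps_sig_two (hf : ∀ S, (2 : ℤ) • f S = 0) (hs : (((n : ℤ) - 2) * ((n : ℤ) - 4)) • s = 0)
    (hy : ∀ i, (2 * ((n : ℤ) - 4)) • y i = 0) (hn : 5 ≤ n) :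
    sig n (eps n f s y) 2 = -((2 : ℤ) • ∑ i ∈ Finset.Icc 3 n, y i) - (2 * (n : ℤ) - 5) • s := by
  have h2 := pair_sum (Finset.Icc 3 n) (fun _ S => f S)
  have h3 : ∑ S ∈ (Finset.Icc 3 n).powersetCard 2, ∑ i ∈ S, f S = 0 := by
    apply Finset.sum_eq_zero
    intro S hS
    rw [Finset.mem_powersetCard] at hS
    rw [Finset.sum_const, hS.2, ← hf S]
    module
  have h4 : (2 * ((n : ℤ) - 4)) • ∑ i ∈ Finset.Icc 3 n, y i = 0 := by
    rw [Finset.smul_sum]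
    exact Finset.sum_eq_zero fun i _ => hy i
  try simp only at h2
  rw [h3] at h2
  rw [sig_two n _ hn, eps_ab, Finset.sum_congr rfl (fun i hi => eps_b n f s y i hi),
    Finset.sum_sub_distrib, Finset.sum_sub_distrib, Finset.sum_sub_distrib, Finset.sum_neg_distrib,
    sum_const_z, sum_const_z, cardW n hn, ← h2, ← Finset.smul_sum]
  linear_combination (norm := module) -h4 - hs

theorem eps_rel (hf : ∀ S, (2 : ℤ) • f S = 0) (hs : (((n : ℤ) - 2) * ((n : ℤ) - 4)) • s = 0)
    (hy : ∀ i, (2 * ((n : ℤ) - 4)) • y i = 0) (hn : 5 ≤ n) : JRel n (eps n f s y) := by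
  have h1 := eps_sig_one n f s y hn
  have h2 := eps_sig_two n f s y hf hs hy hn
  have hw := eps_sig_w n f s y hn
  have main : ∀ i ∈ Finset.Icc 1 n, ∀ j ∈ Finset.Icc 1 n, i < j →
      (2 : ℤ) • eps n f s y {i, j} = sig n (eps n f s y) i + sig n (eps n f s y) j := by
    intro i hi j hj hij
    simp only [Finset.mem_Icc] at hi hj
    obtain rfl | rfl | hi3 : i = 1 ∨ i = 2 ∨ 3 ≤ i := by omega
    · obtain rfl | hj3 : j = 2 ∨ 3 ≤ j := by omega
      · rw [h1, h2, eps_ab]; module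
      · have hj' : j ∈ Finset.Icc 3 n := by simp; omega
        rw [h1, hw j hj', eps_a n f s y j hj']; module
    · have hj' : j ∈ Finset.Icc 3 n := by simp; omega
      have hF : (2 : ℤ) • ∑ k ∈ (Finset.Icc 3 n).erase j, f {j, k} = 0 := by
        rw [Finset.smul_sum]
        exact Finset.sum_eq_zero fun i _ => hf _
      have := hy j
      rw [h2, hw j hj', eps_b n f s y j hj']
      linear_combination (norm := module) -hF - this
    · have hi' : i ∈ Finset.Icc 3 n := by simp; omega
      have hj' : j ∈ Finset.Icc 3 n := by simp; omega
      rw [hw i hi', hw j hj', eps_w n f s y i j hi' hj' hij.ne]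
      linear_combination (norm := module) hf {i, j}
  intro i hi j hj hij
  rcases lt_or_gt_of_ne hij with h | h
  · exact main i hi j hj h
  · rw [Finset.pair_comm, add_comm]; exact main j hj i hi h

end

theorem mem_ksub (n : ℕ) (S : Finset ℕ) :
    S ∈ ksubsets n 2 ↔ ∃ i j, i ∈ Finset.Icc 1 n ∧ j ∈ Finset.Icc 1 n ∧ i < j ∧ S = {i, j} := by
  rw [ksubsets, Finset.mem_filter, Finset.mem_powerset]
  constructor
  · rintro ⟨hS, hc⟩
    obtain ⟨a, b, hab, rfl⟩ := Finset.card_eq_two.1 hc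
    have ha := hS (show a ∈ ({a, b} : Finset ℕ) by simp)
    have hb := hS (show b ∈ ({a, b} : Finset ℕ) by simp)
    rcases lt_or_gt_of_ne hab with h | h
    · exact ⟨a, b, ha, hb, h, rfl⟩
    · exact ⟨b, a, hb, ha, h, Finset.pair_comm _ _⟩
  · rintro ⟨i, j, hi, hj, hij, rfl⟩
    refine ⟨?_, Finset.card_pair hij.ne⟩
    intro x hx
    simp only [Finset.mem_insert, Finset.mem_singleton] at hx
    rcases hx with rfl | rfl
    · exact hi
    · exact hj

/-- The row combination. -/
theorem row_sum {A : Type*} [AddCommGroup A] (n : ℕ) (g : Finset ℕ → A) (i j : ℕ)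
    (hi : i ∈ Finset.Icc 1 n) (hj : j ∈ Finset.Icc 1 n) (hij : i ≠ j) :
    ∑ T ∈ ksubsets n 2, (if (({i, j} : Finset ℕ) ∩ T).card = 1 then g T else 0)
      = sig n g i + sig n g j - (2 : ℤ) • g {i, j} := by
  have hset : (ksubsets n 2).filter (fun T => (({i, j} : Finset ℕ) ∩ T).card = 1)
      = (((Finset.Icc 1 n).erase i).erase j).image (fun k => ({i, k} : Finset ℕ)) ∪
        (((Finset.Icc 1 n).erase i).erase j).image (fun k => ({j, k} : Finset ℕ)) := by
    ext T
    simp only [Finset.mem_filter, Finset.mem_union, Finset.mem_image, Finset.mem_erase]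
    constructor
    · rintro ⟨hT, hc⟩
      obtain ⟨a, b, ha, hb, hab, rfl⟩ := (mem_ksub n T).1 hT
      by_cases h1 : a = i
      · subst h1
        by_cases h2 : b = j
        · subst h2
          simp [Finset.card_pair hij] at hc
        · exact Or.inl ⟨b, ⟨h2, hab.ne', hb⟩, rfl⟩
      by_cases h2 : b = i
      · subst h2
        by_cases h2 : a = j
        · subst h2
          rw [Finset.pair_comm] at hc
          simp [Finset.card_pair hij.symm] at hc
        · exact Or.inl ⟨a, ⟨h2, hab.ne, ha⟩, Finset.pair_comm _ _⟩
      by_cases h3 : a = j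
      · subst h3
        exact Or.inr ⟨b, ⟨hab.ne', h2, hb⟩, rfl⟩
      by_cases h4 : b = j
      · subst h4
        exact Or.inr ⟨a, ⟨hab.ne, h1, ha⟩, Finset.pair_comm _ _⟩
      exfalso
      have : ({i, j} : Finset ℕ) ∩ {a, b} = ∅ := by
        ext x; simp; omega
      rw [this] at hc
      simp at hc
    · have mk : ∀ a k, a ∈ Finset.Icc 1 n → k ∈ Finset.Icc 1 n → k ≠ a →
          ({a, k} : Finset ℕ) ∈ ksubsets n 2 := by
        intro a k ha hk hak
        rw [mem_ksub]
        rcases lt_or_gt_of_ne hak with h | h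
        · exact ⟨k, a, hk, ha, h, Finset.pair_comm _ _⟩
        · exact ⟨a, k, ha, hk, h, rfl⟩
      rintro (⟨k, ⟨h1, h2, h3⟩, rfl⟩ | ⟨k, ⟨h1, h2, h3⟩, rfl⟩)
      · refine ⟨mk i k hi h3 h2, ?_⟩
        have : ({i, j} : Finset ℕ) ∩ {i, k} = {i} := by ext x; simp; omega
        rw [this, Finset.card_singleton]
      · refine ⟨mk j k hj h3 h1, ?_⟩
        have : ({i, j} : Finset ℕ) ∩ {j, k} = {j} := by ext x; simp; omega
        rw [this, Finset.card_singleton]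
  have inj : ∀ a k l : ℕ, k ≠ a → ({a, k} : Finset ℕ) = {a, l} → k = l := by
    intro a k l hk h
    have : k ∈ ({a, l} : Finset ℕ) := by rw [← h]; simp
    simp at this; tauto
  rw [← Finset.sum_filter, hset, Finset.sum_union, Finset.sum_image, Finset.sum_image]
  · have e1 : sig n g i = g {i, j} + ∑ k ∈ ((Finset.Icc 1 n).erase i).erase j, g {i, k} :=
      (Finset.add_sum_erase _ (fun k => g {i, k}) (Finset.mem_erase.2 ⟨hij.symm, hj⟩)).symm
    have e2 : sig n g j = g {j, i} + ∑ k ∈ ((Finset.Icc 1 n).erase j).erase i, g {j, k} :=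
      (Finset.add_sum_erase _ (fun k => g {j, k}) (Finset.mem_erase.2 ⟨hij, hi⟩)).symm
    rw [Finset.erase_right_comm, Finset.pair_comm] at e2
    rw [e1, e2]; module
  · intro k hk l _ h
    simp only [Finset.mem_coe, Finset.mem_erase] at hk
    exact inj j k l hk.1 h
  · intro k hk l _ h
    simp only [Finset.mem_coe, Finset.mem_erase] at hk
    exact inj i k l hk.2.1 h
  · rw [Finset.disjoint_left]
    intro T h1 h2
    simp only [Finset.mem_image, Finset.mem_erase] at h1 h2
    obtain ⟨k, hk, rfl⟩ := h1
    obtain ⟨l, hl, h⟩ := h2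
    have : i ∈ ({j, l} : Finset ℕ) := by rw [h]; simp
    simp only [Finset.mem_insert, Finset.mem_singleton] at this
    rcases this with h | h
    · exact hij h
    · exact hl.2.1 h.symm

theorem pair_mem (n a k : ℕ) (ha : a ∈ Finset.Icc 1 n) (hk : k ∈ Finset.Icc 1 n) (hak : k ≠ a) :
    ({a, k} : Finset ℕ) ∈ ksubsets n 2 := by
  rw [mem_ksub]
  rcases lt_or_gt_of_ne hak with h | h
  · exact ⟨k, a, hk, ha, h, Finset.pair_comm _ _⟩
  · exact ⟨a, k, ha, hk, h, rfl⟩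

/-- The class of an edge in the Smith group. -/
noncomputable def g0 (n : ℕ) (S : Finset ℕ) : SmithGroup (interMat n 2 2 1) :=
  if h : S ∈ ksubsets n 2 then Submodule.Quotient.mk (Pi.single ⟨S, h⟩ 1) else 0

theorem lin_row {A : Type*} [AddCommGroup A] (n : ℕ) (g : Finset ℕ → A) (r : ↥(ksubsets n 2)) :
    ∑ T : ↥(ksubsets n 2), interMat n 2 2 1 r T • g T =
    ∑ T ∈ ksubsets n 2, (if ((r : Finset ℕ) ∩ T).card = 1 then g T else 0) := by
  rw [← Finset.sum_coe_sort (ksubsets n 2)]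
  apply Finset.sum_congr rfl
  intro T _
  simp only [interMat, Matrix.of_apply]
  split_ifs <;> simp

theorem g0_mem (n : ℕ) (T : ↥(ksubsets n 2)) :
    g0 n T = Submodule.Quotient.mk (Pi.single T 1) := by
  rw [g0, dif_pos T.2]

theorem g0_rel (n : ℕ) : JRel n (g0 n) := by
  intro i hi j hj hij
  have h1 := row_sum n (g0 n) i j hi hj hij
  let r : ↥(ksubsets n 2) := ⟨{i, j}, pair_mem n i j hi hj hij.symm⟩
  have h2 := lin_row n (g0 n) r
  have h3 : ∑ T : ↥(ksubsets n 2), interMat n 2 2 1 r T • g0 n T = 0 := by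
    have h4 : (Submodule.Quotient.mk (interMat n 2 2 1 r) : SmithGroup (interMat n 2 2 1)) = 0 := by
      rw [Submodule.Quotient.mk_eq_zero]
      exact Submodule.subset_span ⟨r, rfl⟩
    have h5 := congrArg (Submodule.mkQ (Submodule.span ℤ (Set.range fun r => interMat n 2 2 1 r)))
      (pi_eq_sum_univ' (interMat n 2 2 1 r))
    rw [map_sum, Submodule.mkQ_apply, h4] at h5
    rw [h5]
    apply Finset.sum_congr rfl
    intro T _
    rw [map_smul, g0_mem, Submodule.mkQ_apply]
  rw [h3] at h2
  rw [← h2] at h1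
  exact (sub_eq_zero.1 h1.symm).symm

theorem univG {A : Type*} [AddCommGroup A] (n : ℕ) (g : Finset ℕ → A) (hg : JRel n g) :
    ∃ φ : SmithGroup (interMat n 2 2 1) →+ A, ∀ S ∈ ksubsets n 2, φ (g0 n S) = g S := by
  let L : (↥(ksubsets n 2) → ℤ) →ₗ[ℤ] A :=
    Fintype.linearCombination ℤ (fun T : ↥(ksubsets n 2) => g T)
  have hL : Submodule.span ℤ (Set.range fun r => interMat n 2 2 1 r) ≤ LinearMap.ker L := by
    rw [Submodule.span_le]
    rintro _ ⟨r, rfl⟩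
    simp only [SetLike.mem_coe, LinearMap.mem_ker]
    change Fintype.linearCombination ℤ (fun T : ↥(ksubsets n 2) => g T) (interMat n 2 2 1 r) = 0
    rw [Fintype.linearCombination_apply, lin_row]
    obtain ⟨i, j, hi, hj, hij, hr⟩ := (mem_ksub n r).1 r.2
    rw [hr, row_sum n g i j hi hj hij.ne, hg i hi j hj hij.ne, sub_self]
  refine ⟨(Submodule.liftQ _ L hL).toAddMonoidHom, ?_⟩
  intro S hS
  have := g0_mem n ⟨S, hS⟩
  simp only at this
  rw [this]
  change L (Pi.single ⟨S, hS⟩ 1) = g S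
  simp [L]

theorem extG {A : Type*} [AddCommGroup A] (n : ℕ) (φ ψ : SmithGroup (interMat n 2 2 1) →+ A)
    (h : ∀ S ∈ ksubsets n 2, φ (g0 n S) = ψ (g0 n S)) : φ = ψ := by
  have : φ.toIntLinearMap = ψ.toIntLinearMap := by
    apply Submodule.linearMap_qext
    apply LinearMap.pi_ext'
    intro T
    apply LinearMap.ext_ring
    have := h T T.2
    rw [g0_mem] at this
    exact this
  ext x
  exact DFunLike.congr_fun this x

/-- The target group. -/
abbrev HH (n : ℕ) : Type :=
  (↥((Finset.Icc 3 n).powersetCard 2) → ZMod 2) × ZMod ((n - 2) * (n - 4)) ×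
    (↥(Finset.Icc 3 n) → ZMod (2 * (n - 4)))

/-- Generators of the target. -/
noncomputable def fH (n : ℕ) (S : Finset ℕ) : HH n := (fun p => if p.1 = S then 1 else 0, 0, 0)
/-- Generators of the target. -/
noncomputable def sH (n : ℕ) : HH n := (0, 1, 0)
/-- Generators of the target. -/
noncomputable def yH (n : ℕ) (i : ℕ) : HH n := (0, 0, fun p => if p.1 = i then 1 else 0)

theorem fH_eq (n : ℕ) (p : ↥((Finset.Icc 3 n).powersetCard 2)) :
    fH n p = (Pi.single p 1, 0, 0) := by
  have h : (fun q => if q.1 = p.1 then 1 else 0) = Pi.single (M := fun _ => ZMod 2) p 1 := by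
    funext q
    rw [Pi.single_apply]
    exact if_congr (Subtype.ext_iff.symm) rfl rfl
  rw [fH, h]

theorem yH_eq (n : ℕ) (p : ↥(Finset.Icc 3 n)) :
    yH n p = (0, 0, Pi.single p 1) := by
  have h : (fun q => if q.1 = p.1 then 1 else 0) = Pi.single (M := fun _ => ZMod (2 * (n - 4))) p 1 := by
    funext q
    rw [Pi.single_apply]
    exact if_congr (Subtype.ext_iff.symm) rfl rfl
  rw [yH, h]

theorem fH_ord (n : ℕ) (S : Finset ℕ) : (2 : ℤ) • fH n S = 0 := by
  have h : (2 : ZMod 2) = 0 := rfl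
  ext x
  · simp [fH, h]
  · simp [fH]
  · simp [fH]

theorem cast1 (n : ℕ) (hn : 5 ≤ n) :
    (((n - 2) * (n - 4) : ℕ) : ℤ) = ((n : ℤ) - 2) * ((n : ℤ) - 4) := by
  push_cast [Nat.cast_sub (show 2 ≤ n by omega), Nat.cast_sub (show 4 ≤ n by omega)]; ring

theorem cast2 (n : ℕ) (hn : 5 ≤ n) :
    ((2 * (n - 4) : ℕ) : ℤ) = 2 * ((n : ℤ) - 4) := by
  push_cast [Nat.cast_sub (show 4 ≤ n by omega)]; ring

theorem sH_ord (n : ℕ) (hn : 5 ≤ n) : (((n : ℤ) - 2) * ((n : ℤ) - 4)) • sH n = 0 := by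
  rw [← cast1 n hn, natCast_zsmul]
  refine Prod.ext ?_ (Prod.ext ?_ ?_)
  · simp [sH]
  · change ((n - 2) * (n - 4)) • (1 : ZMod ((n - 2) * (n - 4))) = 0
    rw [nsmul_one, ZMod.natCast_self]
  · simp [sH]

theorem yH_ord (n : ℕ) (hn : 5 ≤ n) (i : ℕ) : (2 * ((n : ℤ) - 4)) • yH n i = 0 := by
  rw [← cast2 n hn, natCast_zsmul]
  refine Prod.ext ?_ (Prod.ext ?_ ?_)
  · simp [yH]
  · simp [yH]
  · funext x
    change (2 * (n - 4)) • (if x.1 = i then (1 : ZMod (2 * (n - 4))) else 0) = 0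
    split_ifs
    · rw [nsmul_one, ZMod.natCast_self]
    · simp

theorem zlift {A : Type*} [AddCommGroup A] (m : ℕ) (a : A) (h : (m : ℤ) • a = 0) :
    ∃ φ : ZMod m →+ A, φ 1 = a := by
  refine ⟨ZMod.lift m ⟨(zmultiplesHom A) a, by simpa using h⟩, ?_⟩
  have := ZMod.lift_coe m (⟨(zmultiplesHom A) a, by simpa using h⟩ : {f : ℤ →+ A // f m = 0}) 1
  simpa using this

theorem pilift {A ι : Type*} [Fintype ι] [DecidableEq ι] [AddCommGroup A] (m : ℕ) (a : ι → A)
    (h : ∀ i, (m : ℤ) • a i = 0) :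
    ∃ φ : (ι → ZMod m) →+ A, ∀ i, φ (Pi.single i 1) = a i := by
  choose φ hφ using fun i => zlift m (a i) (h i)
  refine ⟨∑ i, (φ i).comp (Pi.evalAddMonoidHom _ i), ?_⟩
  intro i
  rw [AddMonoidHom.finsetSum_apply, Finset.sum_eq_single i]
  · simp [hφ]
  · intro j _ hj
    simp [hj]
  · simp

theorem univH {A : Type*} [AddCommGroup A] (n : ℕ) (hn : 5 ≤ n) (f : Finset ℕ → A) (s : A)
    (y : ℕ → A) (hf : ∀ S ∈ (Finset.Icc 3 n).powersetCard 2, (2 : ℤ) • f S = 0)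
    (hs : (((n : ℤ) - 2) * ((n : ℤ) - 4)) • s = 0)
    (hy : ∀ i ∈ Finset.Icc 3 n, (2 * ((n : ℤ) - 4)) • y i = 0) :
    ∃ ψ : HH n →+ A, (∀ S ∈ (Finset.Icc 3 n).powersetCard 2, ψ (fH n S) = f S) ∧
      ψ (sH n) = s ∧ ∀ i ∈ Finset.Icc 3 n, ψ (yH n i) = y i := by
  obtain ⟨a, ha⟩ := pilift 2 (fun p : ↥((Finset.Icc 3 n).powersetCard 2) => f p)
    (fun p => by simpa using hf p p.2)
  obtain ⟨b, hb⟩ := zlift ((n - 2) * (n - 4)) s (by rw [cast1 n hn]; exact hs)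
  obtain ⟨c, hc⟩ := pilift (2 * (n - 4)) (fun p : ↥(Finset.Icc 3 n) => y p)
    (fun p => by rw [cast2 n hn]; exact hy p p.2)
  refine ⟨a.coprod (b.coprod c), ?_, ?_, ?_⟩
  · intro S hS
    have := fH_eq n ⟨S, hS⟩
    simp only at this
    rw [this]
    simp [ha]
  · simp [sH, hb]
  · intro i hi
    have := yH_eq n ⟨i, hi⟩
    simp only at this
    rw [this]
    simp [hc]

theorem zext {A : Type*} [AddCommGroup A] (m : ℕ) (φ ψ : ZMod m →+ A) (h : φ 1 = ψ 1) : φ = ψ := by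
  ext x
  obtain ⟨k, rfl⟩ := ZMod.intCast_surjective x
  rw [← zsmul_one, map_zsmul, map_zsmul, h]

theorem piext {A ι : Type*} [Fintype ι] [DecidableEq ι] [AddCommGroup A] (m : ℕ)
    (φ ψ : (ι → ZMod m) →+ A) (h : ∀ i, φ (Pi.single i 1) = ψ (Pi.single i 1)) : φ = ψ := by
  apply AddMonoidHom.functions_ext'
  intro i
  exact zext m _ _ (h i)

theorem extH {A : Type*} [AddCommGroup A] (n : ℕ) (φ ψ : HH n →+ A)
    (hf : ∀ S ∈ (Finset.Icc 3 n).powersetCard 2, φ (fH n S) = ψ (fH n S))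
    (hs : φ (sH n) = ψ (sH n))
    (hy : ∀ i ∈ Finset.Icc 3 n, φ (yH n i) = ψ (yH n i)) : φ = ψ := by
  have h1 : φ.comp (AddMonoidHom.inl _ _) = ψ.comp (AddMonoidHom.inl _ _) := by
    apply piext
    intro p
    have := hf p p.2
    rw [fH_eq] at this
    exact this
  have h2 : (φ.comp (AddMonoidHom.inr _ _)).comp (AddMonoidHom.inl _ _)
      = (ψ.comp (AddMonoidHom.inr _ _)).comp (AddMonoidHom.inl _ _) :=
    zext _ _ _ hs
  have h3 : (φ.comp (AddMonoidHom.inr _ _)).comp (AddMonoidHom.inr _ _)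
      = (ψ.comp (AddMonoidHom.inr _ _)).comp (AddMonoidHom.inr _ _) := by
    apply piext
    intro p
    have := hy p p.2
    rw [yH_eq] at this
    exact this
  ext ⟨a, b, c⟩
  have e : ((a, b, c) : HH n) = (a, 0, 0) + ((0, b, 0) + (0, 0, c)) := by simp
  rw [e, map_add, map_add, map_add, map_add]
  exact congrArg₂ _ (DFunLike.congr_fun h1 a)
    (congrArg₂ _ (DFunLike.congr_fun h2 b) (DFunLike.congr_fun h3 c))

theorem mem_pw (n : ℕ) (S : Finset ℕ) (hS : S ∈ (Finset.Icc 3 n).powersetCard 2) :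
    ∃ i j, i ∈ Finset.Icc 3 n ∧ j ∈ Finset.Icc 3 n ∧ i ≠ j ∧ S = {i, j} := by
  rw [Finset.mem_powersetCard] at hS
  obtain ⟨hS, hc⟩ := hS
  obtain ⟨a, b, hab, rfl⟩ := Finset.card_eq_two.1 hc
  exact ⟨a, b, hS (by simp), hS (by simp), hab, rfl⟩

theorem pw_mem (n i j : ℕ) (hi : i ∈ Finset.Icc 3 n) (hj : j ∈ Finset.Icc 3 n) (hij : i ≠ j) :
    ({i, j} : Finset ℕ) ∈ (Finset.Icc 3 n).powersetCard 2 := by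
  rw [Finset.mem_powersetCard]
  refine ⟨?_, Finset.card_pair hij⟩
  intro x hx
  simp only [Finset.mem_insert, Finset.mem_singleton] at hx
  rcases hx with rfl | rfl
  · exact hi
  · exact hj

theorem map_sig {A B : Type*} [AddCommGroup A] [AddCommGroup B] (n : ℕ) (φ : A →+ B)
    (g : Finset ℕ → A) (g' : Finset ℕ → B) (h : ∀ S ∈ ksubsets n 2, φ (g S) = g' S)
    (i : ℕ) (hi : i ∈ Finset.Icc 1 n) : φ (sig n g i) = sig n g' i := by
  rw [sig, sig, map_sum]
  apply Finset.sum_congr rfl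
  intro j hj
  rw [Finset.mem_erase] at hj
  exact h _ (pair_mem n i j hi hj.2 hj.1)

theorem mainEquiv (n : ℕ) (hn : 5 ≤ n) : Nonempty (SmithGroup (interMat n 2 2 1) ≃+ HH n) := by
  have hg := g0_rel n
  obtain ⟨φ, hφ⟩ := univG n (eps n (fH n) (sH n) (yH n))
    (eps_rel n _ _ _ (fH_ord n) (sH_ord n hn) (yH_ord n hn) hn)
  obtain ⟨ψ, hψf, hψs, hψy⟩ := univH n hn (ff n (g0 n)) (sig n (g0 n) 1) (yy n (g0 n))
    (by
      intro S hS
      obtain ⟨i, j, hi, hj, hij, rfl⟩ := mem_pw n S hS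
      exact two_ff n _ hg i j hi hj hij)
    (s_ord n _ hn hg) (fun i hi => yy_ord n _ hg i hi)
  have W1 : ∀ i ∈ Finset.Icc 3 n, i ∈ Finset.Icc 1 n := by
    intro i hi; simp at hi ⊢; omega
  have W2 : ∀ i ∈ Finset.Icc 3 n, i ≠ 1 := by
    intro i hi; simp at hi ⊢; omega
  have m1 : 1 ∈ Finset.Icc 1 n := by simp; omega
  have hφs : φ (sig n (g0 n) 1) = sH n := by
    rw [map_sig n φ _ _ hφ 1 m1, eps_sig_one n _ _ _ hn]
  have hφa : ∀ i ∈ Finset.Icc 3 n, φ (g0 n {1, i}) = yH n i + sH n := by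
    intro i hi
    rw [hφ _ (pair_mem n 1 i m1 (W1 i hi) (W2 i hi)), eps_a n _ _ _ i hi]
  have h1 : φ.comp ψ = AddMonoidHom.id _ := by
    apply extH
    · intro S hS
      rw [AddMonoidHom.comp_apply, hψf S hS]
      obtain ⟨i, j, hi, hj, hij, rfl⟩ := mem_pw n S hS
      rw [ff, Finset.sum_pair hij, map_add, map_sub, map_add, hφs, hφa i hi, hφa j hj,
        hφ _ (pair_mem n i j (W1 i hi) (W1 j hj) hij.symm), eps_w n _ _ _ i j hi hj hij,
        AddMonoidHom.id_apply]
      abel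
    · rw [AddMonoidHom.comp_apply, hψs, hφs, AddMonoidHom.id_apply]
    · intro i hi
      rw [AddMonoidHom.comp_apply, hψy i hi, yy, map_sub, hφs, hφa i hi, AddMonoidHom.id_apply]
      abel
  have hY : ∑ i ∈ Finset.Icc 3 n, ψ (yH n i) = ∑ i ∈ Finset.Icc 3 n, yy n (g0 n) i :=
    Finset.sum_congr rfl hψy
  have h2 : ψ.comp φ = AddMonoidHom.id _ := by
    apply extG
    intro S hS
    rw [AddMonoidHom.comp_apply, hφ S hS, AddMonoidHom.id_apply]
    obtain ⟨i, j, hi, hj, hij, rfl⟩ := (mem_ksub n S).1 hS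
    simp only [Finset.mem_Icc] at hi hj
    obtain rfl | rfl | hi3 : i = 1 ∨ i = 2 ∨ 3 ≤ i := by omega
    · obtain rfl | hj3 : j = 2 ∨ 3 ≤ j := by omega
      · rw [eps_ab, map_sub, map_neg, map_sum, map_zsmul, hψs, hY, ← form_ab n _ hn]
      · have hj' : j ∈ Finset.Icc 3 n := by simp; omega
        rw [eps_a n _ _ _ j hj', map_add, hψy j hj', hψs, yy]
        abel
    · have hj' : j ∈ Finset.Icc 3 n := by simp; omega
      have hF : ∑ k ∈ (Finset.Icc 3 n).erase j, ψ (fH n {j, k})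
          = ∑ k ∈ (Finset.Icc 3 n).erase j, ff n (g0 n) {j, k} := by
        apply Finset.sum_congr rfl
        intro k hk
        rw [Finset.mem_erase] at hk
        exact hψf _ (pw_mem n j k hj' hk.2 hk.1.symm)
      rw [eps_b n _ _ _ j hj', map_sub, map_sub, map_sub, map_neg, map_sum, map_sum, map_zsmul,
        map_zsmul, hψs, hY, hF, hψy j hj', ← form_b n _ hn hg j hj']
    · have hi' : i ∈ Finset.Icc 3 n := by simp; omega
      have hj' : j ∈ Finset.Icc 3 n := by simp; omega
      rw [eps_w n _ _ _ i j hi' hj' hij.ne, map_add, map_add, map_add, hψs,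
        hψf _ (pw_mem n i j hi' hj' hij.ne), hψy i hi', hψy j hj', ff, Finset.sum_pair hij.ne,
        yy, yy]
      abel
  exact ⟨φ.toAddEquiv ψ h2 h1⟩

/-- `S(A_{n,2,2,1}) ≅ (ℤ/2ℤ)^{(n−2)(n−3)/2} ⊕ ℤ/(n−2)(n−4)ℤ ⊕ (ℤ/2(n−4)ℤ)^{n−2}`. -/
theorem statement16 (n : ℕ) (hn : 5 ≤ n) :
    Nonempty (SmithGroup (interMat n 2 2 1) ≃+
      ((Fin ((n - 2) * (n - 3) / 2) → ZMod 2) ×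
        ZMod ((n - 2) * (n - 4)) ×
        (Fin (n - 2) → ZMod (2 * (n - 4))))) := by
  obtain ⟨e⟩ := mainEquiv n hn
  have c1 : Fintype.card ↥((Finset.Icc 3 n).powersetCard 2) = (n - 2) * (n - 3) / 2 := by
    rw [Fintype.card_coe, Finset.card_powersetCard, Nat.card_Icc, Nat.choose_two_right]
    congr 2
  have c2 : Fintype.card ↥(Finset.Icc 3 n) = n - 2 := by
    rw [Fintype.card_coe, Nat.card_Icc]
    omega
  have e1 := (LinearEquiv.funCongrLeft ℤ (ZMod 2) (Fintype.equivFinOfCardEq c1).symm).toAddEquiv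
  have e2 := (LinearEquiv.funCongrLeft ℤ (ZMod (2 * (n - 4)))
    (Fintype.equivFinOfCardEq c2).symm).toAddEquiv
  exact ⟨e.trans (e1.prodCongr ((AddEquiv.refl _).prodCongr e2))⟩
end
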